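/- arXiv:1506.01755 — 3 statements merged into one kernel-verified Lean document; each statement's English description precedes it below -/
import Mathlib

section
/- There exists a function g : ℂ → ℂ which is analytic on the open disk {s : |s| < 1/2} and satisfies g(s) = −ζ'(s+1)/ζ(s+1) − 1/s for all s with 0 < |s| < 1/2 (in particular ζ(s+1) ≠ 0 for 0 < |s| < 1/2); moreover, for every integer n ≥ 1 and every real r with 0 < r < 1/2, (1/(2πi)) ∮_{|s|=r} ((1 + 1/s)^n − 1) · (−ζ'(s+1)/ζ(s+1)) ds = Σ_{l=1}^{n} C(n,l) · g^{(l−1)}(0)/(l−1)!, the circle being traversed counterclockwise. -/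
open Complex Finset

namespace LiAux
open MeasureTheory Filter Topology Asymptotics

/-- Fractional part cut off to `(1, ∞)`. -/
noncomputable def phi (t : ℝ) : ℂ := (Set.Ioi (1 : ℝ)).indicator (fun t => ((Int.fract t : ℝ) : ℂ)) t

lemma phi_norm_le (t : ℝ) : ‖phi t‖ ≤ 1 := by
  unfold phi
  by_cases h : t ∈ Set.Ioi (1 : ℝ)
  · rw [Set.indicator_of_mem h, Complex.norm_real, Real.norm_of_nonneg (Int.fract_nonneg t)]
    exact (Int.fract_lt_one t).le
  · rw [Set.indicator_of_notMem h]; simp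

lemma phi_meas : Measurable phi := by
  unfold phi
  exact (Complex.measurable_ofReal.comp measurable_fract).indicator measurableSet_Ioi

lemma phi_locInt : LocallyIntegrableOn phi (Set.Ioi 0) := by
  refine LocallyIntegrable.locallyIntegrableOn ?_ _
  refine (locallyIntegrable_const (1 : ℝ)).mono phi_meas.aestronglyMeasurable ?_
  filter_upwards with t
  simpa using phi_norm_le t

lemma phi_top : phi =O[atTop] (fun t : ℝ => t ^ (-(0 : ℝ))) := by
  refine IsBigO.of_bound 1 ?_
  filter_upwards with t
  simpa using phi_norm_le t

lemma phi_bot (b : ℝ) : phi =O[𝓝[>] 0] (fun t : ℝ => t ^ (-b)) := by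
  refine IsBigO.of_bound 1 ?_
  have : Set.Iio (1 : ℝ) ∈ 𝓝[>] (0 : ℝ) := mem_nhdsWithin_of_mem_nhds (Iio_mem_nhds one_pos)
  filter_upwards [this, self_mem_nhdsWithin] with t ht ht0
  have : phi t = 0 := Set.indicator_of_notMem (by simpa using (le_of_lt ht)) _
  rw [this]
  simp

/-- `F s = ∫_1^∞ {t} t^(-s-1) dt`. -/
noncomputable def F (s : ℂ) : ℂ := mellin phi (-s)

lemma F_eq (s : ℂ) : F s = ∫ t in Set.Ioi (1 : ℝ), ((Int.fract t : ℝ) : ℂ) * (t : ℂ) ^ (-(s + 1)) := by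
  unfold F mellin
  have h1 : ∀ t : ℝ, (t : ℂ) ^ (-s - 1) • phi t =
      (Set.Ioi (1 : ℝ)).indicator (fun t : ℝ => ((Int.fract t : ℝ) : ℂ) * (t : ℂ) ^ (-(s + 1))) t := by
    intro t
    unfold phi
    by_cases h : t ∈ Set.Ioi (1 : ℝ)
    · rw [Set.indicator_of_mem h, Set.indicator_of_mem h, smul_eq_mul, mul_comm]
      congr 2; ring
    · rw [Set.indicator_of_notMem h, Set.indicator_of_notMem h, smul_zero]
  simp_rw [h1]
  rw [setIntegral_indicator measurableSet_Ioi]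
  congr 2
  ext t; simp; try (intro h; linarith)

lemma F_diff {s : ℂ} (hs : 0 < s.re) : DifferentiableAt ℂ F s := by
  have := mellin_differentiableAt_of_isBigO_rpow (a := 0) (b := (-s).re - 1) (s := -s) phi_locInt
    phi_top (by simpa using hs) (phi_bot _) (by linarith)
  exact DifferentiableAt.comp s this differentiableAt_id.neg

lemma F_int {s : ℂ} (hs : 0 < s.re) :
    IntegrableOn (fun t : ℝ => ((Int.fract t : ℝ) : ℂ) * (t : ℂ) ^ (-(s + 1))) (Set.Ioi 1) := by
  have h := integrableOn_Ioi_cpow_of_lt (a := -(s + 1)) (by simp; linarith) one_pos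
  refine h.bdd_mul (c := 1) ?_ ?_
  · exact (Complex.measurable_ofReal.comp measurable_fract).aestronglyMeasurable
  · filter_upwards with t
    rw [Complex.norm_real, Real.norm_of_nonneg (Int.fract_nonneg t)]
    exact (Int.fract_lt_one t).le

lemma F_bound {s : ℂ} (hs : 0 < s.re) : ‖F s‖ ≤ 1 / s.re := by
  rw [F_eq]
  have h1 : ∫ t in Set.Ioi (1 : ℝ), (t : ℝ) ^ (-(s.re + 1)) = 1 / s.re := by
    rw [integral_Ioi_rpow_of_lt (by linarith) one_pos]
    simp
  rw [← h1]
  refine norm_integral_le_of_norm_le (integrableOn_Ioi_rpow_of_lt (by linarith) one_pos) ?_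
  filter_upwards [ae_restrict_mem measurableSet_Ioi] with t ht
  have ht0 : (0 : ℝ) < t := one_pos.trans ht
  rw [norm_mul, Complex.norm_cpow_eq_rpow_re_of_pos ht0, Complex.norm_real,
    Real.norm_of_nonneg (Int.fract_nonneg t)]
  have : (-(s + 1)).re = -(s.re + 1) := by simp
  rw [this]
  exact mul_le_of_le_one_left (by positivity) (Int.fract_lt_one t).le

lemma zeta_eq {s : ℂ} (hs : 1 < s.re) : riemannZeta s = s * (1 / (s - 1) - F s) := by
  have hs0 : s - 1 ≠ 0 := by
    intro h
    rw [sub_eq_zero] at h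
    rw [h] at hs; simp at hs
  rw [← LSeries_one_eq_riemannZeta hs, LSeries_eq_mul_integral' 1 (r := 1) zero_le_one hs, F_eq]
  · congr 1
    have h1 : (∫ t in Set.Ioi (1 : ℝ), (t : ℂ) ^ (-s)) = 1 / (s - 1) := by
      rw [integral_Ioi_cpow_of_lt (by simpa using hs) one_pos]
      rw [Complex.ofReal_one, Complex.one_cpow, show -s + 1 = -(s - 1) by ring, neg_div_neg_eq]
    rw [← h1, ← integral_sub (integrableOn_Ioi_cpow_of_lt (by simpa using hs) one_pos)
      (F_int (by linarith))]
    refine setIntegral_congr_fun measurableSet_Ioi fun t ht => ?_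
    have ht0 : (0 : ℝ) < t := one_pos.trans ht
    have ht1 : (t : ℂ) ≠ 0 := by exact_mod_cast ht0.ne'
    have h2 : (t : ℂ) ^ (-s) = t * (t : ℂ) ^ (-(s + 1)) := by
      rw [show -s = 1 + -(s + 1) by ring, Complex.cpow_add _ _ ht1, Complex.cpow_one]
    have h3 : (⌊t⌋₊ : ℂ) = (t : ℂ) - ((Int.fract t : ℝ) : ℂ) := by
      have : (⌊t⌋₊ : ℝ) = t - Int.fract t := by
        rw [natCast_floor_eq_intCast_floor ht0.le, Int.self_sub_fract]
      rw [← Complex.ofReal_sub, ← this]; simp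
    simp only [Pi.one_apply, Finset.sum_const, Nat.card_Icc, Nat.add_sub_cancel, nsmul_eq_mul,
      mul_one]
    rw [h2, h3]; ring
  · refine IsBigO.of_bound 1 ?_
    filter_upwards with n
    simp

lemma zeta1_eq {s : ℂ} (hs : 0 < s.re) :
    riemannZeta₁ s = s * (1 - (s - 1) * F s) := by
  have hopen : IsOpen {s : ℂ | 0 < s.re} := isOpen_lt continuous_const Complex.continuous_re
  have hconv : IsPreconnected {s : ℂ | 0 < s.re} :=
    (convex_halfSpace_re_gt 0).isPreconnected
  have hA : AnalyticOnNhd ℂ riemannZeta₁ {s : ℂ | 0 < s.re} :=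
    (differentiable_riemannZeta₁.differentiableOn).analyticOnNhd hopen
  have hB : AnalyticOnNhd ℂ (fun s => s * (1 - (s - 1) * F s)) {s : ℂ | 0 < s.re} := by
    refine DifferentiableOn.analyticOnNhd (fun z hz => ?_) hopen
    have := F_diff hz
    refine DifferentiableAt.differentiableWithinAt ?_
    fun_prop
  refine hA.eqOn_of_preconnected_of_eventuallyEq hB hconv (z₀ := 2) (by simp) ?_ hs
  have : {s : ℂ | 1 < s.re} ∈ 𝓝 (2 : ℂ) :=
    (isOpen_lt continuous_const Complex.continuous_re).mem_nhds (by simp)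
  filter_upwards [this] with z hz
  have hz1 : z ≠ 1 := by rintro rfl; simp at hz
  have hz0 : z - 1 ≠ 0 := sub_ne_zero.mpr hz1
  have h := riemannZeta_eq_inv_sub_mul hz1
  rw [zeta_eq hz] at h
  field_simp at h
  linear_combination -h

lemma zeta1_ne {s : ℂ} (hs : ‖s‖ < 1 / 2) : riemannZeta₁ (s + 1) ≠ 0 := by
  have h1 : |s.re| < 1 / 2 := (Complex.abs_re_le_norm s).trans_lt hs
  have h2 : 1 / 2 < (s + 1).re := by simp; linarith [(abs_lt.mp h1).1]
  rw [zeta1_eq (by linarith)]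
  have h3 := F_bound (s := s + 1) (by linarith)
  have h4 : 1 / (s + 1).re < 2 := by rw [div_lt_iff₀ (by linarith)]; linarith
  refine mul_ne_zero ?_ ?_
  · intro h; rw [h] at h2; norm_num at h2
  · intro h
    have h5 : s * F (s + 1) = 1 := by linear_combination -h
    have h6 : ‖s‖ * ‖F (s + 1)‖ = 1 := by rw [← norm_mul, h5]; simp
    nlinarith [norm_nonneg s, norm_nonneg (F (s + 1))]

/-- The regular part of the negative logarithmic derivative. -/
noncomputable def g (s : ℂ) : ℂ :=
  -deriv riemannZeta₁ (s + 1) / riemannZeta₁ (s + 1)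

lemma g_diff : DifferentiableOn ℂ g (Metric.ball 0 (1 / 2)) := by
  intro s hs
  have h := zeta1_ne (s := s) (by simpa using hs)
  have hd : Differentiable ℂ (deriv riemannZeta₁) := fun z =>
    (differentiable_riemannZeta₁.analyticAt z).deriv.differentiableAt
  have hz := differentiable_riemannZeta₁
  refine DifferentiableAt.differentiableWithinAt ?_
  unfold g
  fun_prop (disch := exact h)

lemma g_eq {s : ℂ} (h0 : 0 < ‖s‖) (hs : ‖s‖ < 1 / 2) :
    riemannZeta (s + 1) ≠ 0 ∧
      g s = -deriv riemannZeta (s + 1) / riemannZeta (s + 1) - 1 / s := by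
  have hs0 : s ≠ 0 := norm_pos_iff.mp h0
  have h1 : s + 1 ≠ 1 := by simpa using hs0
  have hne := zeta1_ne hs
  rw [deriv_riemannZeta_eq_neg_inv_sub_sq_mul_add h1,
    riemannZeta_eq_inv_sub_mul h1, g]
  simp only [add_sub_cancel_right]
  refine ⟨mul_ne_zero (inv_ne_zero hs0) hne, ?_⟩
  field_simp
  ring

lemma contour {n : ℕ} {r : ℝ} (hr : 0 < r) (hr2 : r < 1 / 2) :
    (1 / (2 * Real.pi * Complex.I)) *
            (∮ s in C(0, r), ((1 + 1 / s) ^ n - 1) *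
              (-deriv riemannZeta (s + 1) / riemannZeta (s + 1))) =
          ∑ l ∈ Finset.Icc 1 n, (n.choose l : ℂ) *
            iteratedDeriv (l - 1) g 0 / ((l - 1).factorial : ℂ) := by
  have hsub : Metric.closedBall (0 : ℂ) r ⊆ Metric.ball 0 (1 / 2) := Metric.closedBall_subset_ball hr2
  have hne : ∀ s ∈ Metric.sphere (0 : ℂ) r, s ≠ 0 := by
    intro s hs h; rw [h] at hs; simp at hs; exact hr.ne hs
  have hgc : ContinuousOn g (Metric.sphere 0 r) :=
    g_diff.continuousOn.mono (Metric.sphere_subset_closedBall.trans hsub)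
  have hcong : (∮ s in C(0, r), ((1 + 1 / s) ^ n - 1) *
              (-deriv riemannZeta (s + 1) / riemannZeta (s + 1))) =
      ∮ s in C(0, r), ∑ l ∈ Finset.Icc 1 n, (n.choose l : ℂ) *
        ((1 / (s - 0) ^ ((l - 1) + 1)) • g s + (s - 0) ^ (-(l : ℤ) - 1)) := by
    refine circleIntegral.integral_congr hr.le fun s hs => ?_
    have hs0 := hne s hs
    have hns : ‖s‖ = r := by simpa using hs
    have hg := (g_eq (s := s) (by rw [hns]; exact hr) (by rw [hns]; exact hr2)).2
    have h1 : -deriv riemannZeta (s + 1) / riemannZeta (s + 1) = g s + 1 / s := by rw [hg]; ring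
    have h2 : (1 + 1 / s) ^ n - 1 = ∑ l ∈ Finset.Icc 1 n, (n.choose l : ℂ) * (1 / s) ^ l := by
      rw [add_comm, add_pow, Finset.range_eq_Ico, Finset.sum_eq_sum_Ico_succ_bot (by omega)]
      simp only [pow_zero, one_pow, Nat.choose_zero_right, Nat.cast_one, mul_one, add_sub_cancel_left]
      exact Finset.sum_congr (by ext; simp; try omega) fun l _ => mul_comm _ _
    beta_reduce
    rw [h1, h2, Finset.sum_mul]
    refine Finset.sum_congr rfl fun l hl => ?_
    have hl1 : l - 1 + 1 = l := Nat.sub_add_cancel (Finset.mem_Icc.mp hl).1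
    rw [hl1, sub_zero, smul_eq_mul, zpow_sub₀ hs0, zpow_neg, zpow_natCast, zpow_one, one_div_pow]
    ring
  have hi1 : ∀ l : ℕ, CircleIntegrable (fun s : ℂ => (1 / (s - 0) ^ ((l - 1) + 1)) • g s) 0 r := by
    intro l
    refine ContinuousOn.circleIntegrable hr.le ?_
    refine ContinuousOn.fun_smul ?_ hgc
    refine ContinuousOn.div continuousOn_const (by fun_prop) fun s hs => ?_
    rw [sub_zero]; exact pow_ne_zero _ (hne s hs)
  have hi2 : ∀ l : ℕ, CircleIntegrable (fun s : ℂ => (s - 0) ^ (-(l : ℤ) - 1)) 0 r := by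
    intro l
    rw [circleIntegrable_sub_zpow_iff]
    right; right
    simp [abs_of_pos hr, hr.ne]
  rw [hcong, circleIntegral.integral_fun_sum, Finset.mul_sum]
  · refine Finset.sum_congr rfl fun l hl => ?_
    rw [circleIntegral.integral_const_mul, circleIntegral.integral_add (hi1 l) (hi2 l),
      circleIntegral.integral_sub_zpow_of_ne (by have := (Finset.mem_Icc.mp hl).1; omega),
      DifferentiableOn.circleIntegral_one_div_sub_center_pow_smul hr (l - 1) (g_diff.mono hsub)]
    have hpi : (Real.pi : ℂ) ≠ 0 := by exact_mod_cast Real.pi_ne_zero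
    have hf : ((l - 1).factorial : ℂ) ≠ 0 := by exact_mod_cast Nat.factorial_ne_zero _
    rw [smul_eq_mul, add_zero]
    field_simp
  · intro l _
    exact ((hi1 l).add (hi2 l)).const_smul (a := (n.choose l : ℂ))

end LiAux

/-- There is a function `g`, analytic on the disk `|s| < 1/2`, with
`g(s) = -ζ'(s+1)/ζ(s+1) - 1/s` for `0 < |s| < 1/2` (in particular `ζ(s+1) ≠ 0` there),
and for every `n ≥ 1` and `0 < r < 1/2`,
`(1/(2πi)) ∮_{|s|=r} ((1+1/s)^n - 1)(-ζ'(s+1)/ζ(s+1)) ds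
  = ∑_{l=1}^n C(n,l) g^{(l-1)}(0)/(l-1)!`. -/
theorem li_stieltjes_contour_integral :
    ∃ g : ℂ → ℂ, AnalyticOnNhd ℂ g (Metric.ball (0 : ℂ) (1 / 2)) ∧
      (∀ s : ℂ, 0 < ‖s‖ → ‖s‖ < 1 / 2 →
        riemannZeta (s + 1) ≠ 0 ∧
          g s = -deriv riemannZeta (s + 1) / riemannZeta (s + 1) - 1 / s) ∧
      (∀ n : ℕ, 1 ≤ n → ∀ r : ℝ, 0 < r → r < 1 / 2 →
        (1 / (2 * Real.pi * Complex.I)) *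
            (∮ s in C(0, r), ((1 + 1 / s) ^ n - 1) *
              (-deriv riemannZeta (s + 1) / riemannZeta (s + 1))) =
          ∑ l ∈ Finset.Icc 1 n, (n.choose l : ℂ) *
            iteratedDeriv (l - 1) g 0 / ((l - 1).factorial : ℂ)) := by
  exact ⟨LiAux.g, LiAux.g_diff.analyticOnNhd Metric.isOpen_ball, fun s h0 hs => LiAux.g_eq h0 hs,
    fun n _ r hr hr2 => LiAux.contour hr hr2⟩
end

section
/- Assume the Riemann Hypothesis. Let g : ℂ → ℂ be analytic on the open disk {s : |s| < 1/2} with g(s) = −ζ'(s+1)/ζ(s+1) − 1/s for 0 < |s| < 1/2, and set η_l = g^{(l)}(0)/l! for l ≥ 0. Then there exists a constant C > 0 such that for all integers n ≥ 2, | Σ_{l=1}^{n} C(n,l) η_{l−1} | ≤ C √n log n. -/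
open Complex Finset


section ZetaBound

noncomputable def zT (k : ℕ) (w : ℂ) : ℂ :=
  (w - 1) * (k + 1 : ℂ) ^ (-w) - (k + 1 : ℂ) ^ (1 - w) + (k + 2 : ℂ) ^ (1 - w)

lemma zT_norm_le (k : ℕ) (w : ℂ) (hw : 0 < w.re) :
    ‖zT k w‖ ≤ ‖w - 1‖ * ‖w‖ * ((k : ℝ) + 1) ^ (-w.re - 1) := by
  have hk : (0 : ℝ) < (k : ℝ) + 1 := by positivity
  have hd : ∀ (r : ℂ) (t : ℝ), t ∈ Set.Icc ((k : ℝ) + 1) (k + 2) →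
      HasDerivAt (fun t : ℝ => (t : ℂ) ^ r) (r * (t : ℂ) ^ (r - 1)) t := by
    intro r t ht
    have ht0 : 0 < t := by linarith [ht.1]
    by_cases hr : r = 0
    · subst hr; simpa using hasDerivAt_const t (1 : ℂ)
    · exact hasDerivAt_ofReal_cpow_const ht0.ne' hr
  have hmem1 : ((k : ℝ) + 1) ∈ Set.Icc ((k : ℝ) + 1) (k + 2) := ⟨le_rfl, by linarith⟩
  have hmem2 : ((k : ℝ) + 2) ∈ Set.Icc ((k : ℝ) + 1) (k + 2) := ⟨by linarith, le_rfl⟩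
  set B := ((k : ℝ) + 1) ^ (-w.re - 1) with hB
  have hB0 : 0 ≤ B := by positivity
  have h1 : ∀ t ∈ Set.Icc ((k : ℝ) + 1) (k + 2),
      ‖(t : ℂ) ^ (-w) - (((k : ℝ) + 1 : ℝ) : ℂ) ^ (-w)‖ ≤ ‖w‖ * B := by
    intro t ht
    have := Convex.norm_image_sub_le_of_norm_hasDerivWithin_le (C := ‖w‖ * B)
      (fun x hx => (hd (-w) x hx).hasDerivWithinAt) (fun x hx => by
        have hx0 : 0 < x := by linarith [hx.1]
        rw [norm_mul, norm_neg, norm_cpow_eq_rpow_re_of_pos hx0]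
        gcongr
        simp only [sub_re, neg_re, one_re, hB]
        exact Real.rpow_le_rpow_of_nonpos hk hx.1 (by linarith)) (convex_Icc _ _) hmem1 ht
    refine this.trans ?_
    have : ‖t - (↑k + 1)‖ ≤ 1 := by
      rw [Real.norm_of_nonneg (by linarith [ht.1])]; linarith [ht.2]
    exact mul_le_of_le_one_right (by positivity) this
  have h2 := Convex.norm_image_sub_le_of_norm_hasDerivWithin_le (C := ‖w - 1‖ * (‖w‖ * B))
      (f := fun t : ℝ => (t : ℂ) ^ (1 - w) - (t : ℂ) * ((1 - w) * (((k : ℝ) + 1 : ℝ) : ℂ) ^ (-w)))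
      (fun x hx => ((hd (1 - w) x hx).sub
        ((hasDerivAt_id x).ofReal_comp.mul_const _)).hasDerivWithinAt) (fun x hx => by
        have e : (1 - w) * (x : ℂ) ^ (1 - w - 1)
          - ((1 : ℝ) : ℂ) * ((1 - w) * (((k : ℝ) + 1 : ℝ) : ℂ) ^ (-w))
          = (1 - w) * ((x : ℂ) ^ (-w) - (((k : ℝ) + 1 : ℝ) : ℂ) ^ (-w)) := by
          rw [show 1 - w - 1 = -w by ring]; push_cast; ring
        rw [e, norm_mul, norm_sub_rev 1 w]
        gcongr
        exact h1 x hx) (convex_Icc _ _) hmem1 hmem2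
  have e2 : ‖((k : ℝ) + 2) - (k + 1)‖ = 1 := by norm_num
  rw [e2, mul_one] at h2
  rw [mul_assoc]
  refine le_trans (le_of_eq ?_) h2
  congr 1
  unfold zT
  push_cast
  ring

lemma zT_differentiable (k : ℕ) : Differentiable ℂ (zT k) := by
  have h1 : (k + 1 : ℂ) ≠ 0 := by exact_mod_cast Nat.succ_ne_zero k
  have h2 : (k + 2 : ℂ) ≠ 0 := by exact_mod_cast Nat.succ_ne_zero (k + 1)
  intro w
  unfold zT
  refine ((DifferentiableAt.mul (by fun_prop) ?_).sub ?_).add ?_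
  · exact DifferentiableAt.const_cpow (by fun_prop) (Or.inl h1)
  · exact DifferentiableAt.const_cpow (by fun_prop) (Or.inl h1)
  · exact DifferentiableAt.const_cpow (by fun_prop) (Or.inl h2)

lemma summable_shift (σ : ℝ) (h : 0 < σ) : Summable (fun k : ℕ => ((k : ℝ) + 1) ^ (-σ - 1)) := by
  have := (summable_nat_add_iff 1).mpr (Real.summable_nat_rpow (p := -σ - 1) |>.mpr (by linarith))
  simpa using this

lemma zT_tsum_of_one_lt (w : ℂ) (hw : 1 < w.re) :
    1 + ∑' k, zT k w = (w - 1) * riemannZeta w := by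
  have hsum : Summable (fun k => zT k w) :=
    Summable.of_norm_bounded ((summable_shift w.re (by linarith)).mul_left (‖w - 1‖ * ‖w‖))
      (fun k => zT_norm_le k w (by linarith))
  have hz : HasSum (fun k : ℕ => (k + 1 : ℂ) ^ (-w)) (riemannZeta w) := by
    rw [zeta_eq_tsum_one_div_nat_add_one_cpow hw]
    have hs : Summable (fun k : ℕ => 1 / (k + 1 : ℂ) ^ w) := by
      have := (summable_nat_add_iff 1).mpr (Complex.summable_one_div_nat_cpow.mpr hw)
      simpa using this
    convert hs.hasSum using 2 with k
    rw [cpow_neg, one_div]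
  have hlim1 := hsum.hasSum.tendsto_sum_nat
  have hps : ∀ N : ℕ, ∑ k ∈ range N, zT k w =
      (w - 1) * ∑ k ∈ range N, (k + 1 : ℂ) ^ (-w) - 1 + (N + 1 : ℂ) ^ (1 - w) := by
    intro N
    induction N with
    | zero => simp
    | succ N ih =>
      rw [sum_range_succ, sum_range_succ, ih, zT]
      push_cast
      rw [show (N : ℂ) + 1 + 1 = N + 2 by ring]
      ring
  have hlim2 : Filter.Tendsto (fun N : ℕ => (w - 1) * ∑ k ∈ range N, (k + 1 : ℂ) ^ (-w) - 1
      + (N + 1 : ℂ) ^ (1 - w)) Filter.atTop (nhds ((w - 1) * riemannZeta w - 1 + 0)) := by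
    refine ((hz.tendsto_sum_nat.const_mul _).sub_const _).add ?_
    rw [tendsto_zero_iff_norm_tendsto_zero]
    have : ∀ N : ℕ, ‖((N : ℂ) + 1) ^ (1 - w)‖ = ((N + 1 : ℕ) : ℝ) ^ (-(w.re - 1)) := by
      intro N
      have := norm_cpow_eq_rpow_re_of_pos (x := (N : ℝ) + 1) (by positivity) (1 - w)
      push_cast at this ⊢
      rw [this]; simp
    simp_rw [this]
    exact ((tendsto_rpow_neg_atTop (by linarith : 0 < w.re - 1)).comp
      tendsto_natCast_atTop_atTop).comp (Filter.tendsto_add_atTop_nat 1)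
  have := tendsto_nhds_unique (hlim1.congr hps) hlim2
  rw [this]; ring

lemma zeta1_eq (w : ℂ) (hw : 0 < w.re) : riemannZeta₁ w = 1 + ∑' k, zT k w := by
  have hopen : IsOpen {w : ℂ | 0 < w.re} := isOpen_lt continuous_const continuous_re
  have hdiff : DifferentiableOn ℂ (fun w => 1 + ∑' k, zT k w) {w : ℂ | 0 < w.re} := by
    intro z hz
    have hz' : 0 < z.re := hz
    -- local uniform bound
    set U : Set ℂ := Metric.ball z (z.re / 2)
    have hU : IsOpen U := Metric.isOpen_ball
    have hre : ∀ w ∈ U, z.re / 2 ≤ w.re := by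
      intro w hw
      have : ‖w - z‖ < z.re / 2 := by simpa [U, dist_eq_norm] using hw
      have h2 := (abs_le.mp (Complex.abs_re_le_norm (w - z))).1
      simp at h2
      linarith
    have hnorm : ∀ w ∈ U, ‖w‖ ≤ ‖z‖ + z.re / 2 := by
      intro w hw
      have : ‖w - z‖ < z.re / 2 := by simpa [U, dist_eq_norm] using hw
      have := norm_le_norm_add_norm_sub' w z
      linarith
    have hD : DifferentiableOn ℂ (fun w => ∑' k, zT k w) U := by
      refine Complex.differentiableOn_tsum_of_summable_norm
        (u := fun k : ℕ => (‖z‖ + z.re / 2 + 1) * (‖z‖ + z.re / 2) *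
          ((k : ℝ) + 1) ^ (-(z.re / 2) - 1))
        ((summable_shift _ (by linarith)).mul_left _)
        (fun k => (zT_differentiable k).differentiableOn) hU ?_
      intro k w hw
      have h1 := hre w hw
      refine (zT_norm_le k w (by linarith)).trans ?_
      have hn := hnorm w hw
      have hn1 : ‖w - 1‖ ≤ ‖z‖ + z.re / 2 + 1 := by
        have := norm_sub_le w 1
        simp at this
        linarith
      have : ((k : ℝ) + 1) ^ (-w.re - 1) ≤ ((k : ℝ) + 1) ^ (-(z.re / 2) - 1) :=
        Real.rpow_le_rpow_of_exponent_le (by linarith [Nat.cast_nonneg (α := ℝ) k]) (by linarith)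
      gcongr
    have := (hD z (Metric.mem_ball_self (by linarith))).differentiableAt
      (hU.mem_nhds (Metric.mem_ball_self (by linarith)))
    exact (this.const_add 1).differentiableWithinAt
  have hA1 : AnalyticOnNhd ℂ (fun w => 1 + ∑' k, zT k w) {w : ℂ | 0 < w.re} :=
    hdiff.analyticOnNhd hopen
  have hA2 : AnalyticOnNhd ℂ riemannZeta₁ {w : ℂ | 0 < w.re} :=
    fun z _ => differentiable_riemannZeta₁.analyticAt z
  refine hA2.eqOn_of_preconnected_of_eventuallyEq hA1
    (convex_halfSpace_re_gt 0).isPreconnected (z₀ := 2) (by simp) ?_ hw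
  have : {w : ℂ | 1 < w.re} ∈ nhds (2 : ℂ) :=
    (isOpen_lt continuous_const continuous_re).mem_nhds (by simp)
  filter_upwards [this] with w hw
  have hw' : 1 < w.re := hw
  have hne : w ≠ 1 := by rintro rfl; simp at hw'
  rw [zT_tsum_of_one_lt w hw, riemannZeta_eq_inv_sub_mul hne, ← mul_assoc,
    mul_inv_cancel₀ (sub_ne_zero.mpr hne), one_mul]

lemma zeta1_bound : ∃ C : ℝ, 1 ≤ C ∧ ∀ w : ℂ, 1 / 5 ≤ w.re →
    ‖riemannZeta₁ w‖ ≤ C * (1 + ‖w‖) ^ 2 := by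
  set S := ∑' k : ℕ, ((k : ℝ) + 1) ^ (-(1 / 5 : ℝ) - 1) with hS
  have hS0 : 0 ≤ S := tsum_nonneg fun k => by positivity
  refine ⟨1 + S, by linarith, fun w hw => ?_⟩
  rw [zeta1_eq w (by linarith)]
  have hb : ∀ k, ‖zT k w‖ ≤ (‖w - 1‖ * ‖w‖) * ((k : ℝ) + 1) ^ (-(1 / 5 : ℝ) - 1) := fun k => by
    refine (zT_norm_le k w (by linarith)).trans ?_
    gcongr
    linarith [Nat.cast_nonneg (α := ℝ) k]
  have h1 : ‖∑' k, zT k w‖ ≤ (‖w - 1‖ * ‖w‖) * S :=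
    tsum_of_norm_bounded (((summable_shift _ (by norm_num)).hasSum).mul_left _) hb
  have h2 : ‖w - 1‖ ≤ 1 + ‖w‖ := by
    have := norm_sub_le w 1
    simp at this; linarith
  have h3 := norm_add_le (1 : ℂ) (∑' k, zT k w)
  rw [norm_one] at h3
  have h4 : (‖w - 1‖ * ‖w‖) * S ≤ ((1 + ‖w‖) * (1 + ‖w‖)) * S := by
    gcongr; linarith
  nlinarith [norm_nonneg w, sq_nonneg ‖w‖]

lemma zeta_norm_le_of_one_lt (w : ℂ) (hw : 1 < w.re) :
    ‖riemannZeta w‖ ≤ 1 + 1 / (w.re - 1) := by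
  rw [zeta_eq_tsum_one_div_nat_add_one_cpow hw]
  have h := ZetaAsymptotics.zeta_limit_aux1 hw
  have h0 : 0 ≤ ZetaAsymptotics.termTSum w.re :=
    tsum_nonneg fun n => ZetaAsymptotics.term_nonneg (n + 1) _
  have hs : Summable (fun k : ℕ => 1 / ((k : ℝ) + 1) ^ w.re) := by
    have := (summable_nat_add_iff 1).mpr (Real.summable_one_div_nat_rpow.mpr hw)
    simpa using this
  have : ‖∑' n : ℕ, 1 / ((n : ℂ) + 1) ^ w‖ ≤ ∑' k : ℕ, 1 / ((k : ℝ) + 1) ^ w.re := by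
    refine tsum_of_norm_bounded hs.hasSum fun k => le_of_eq ?_
    have := norm_cpow_eq_rpow_re_of_pos (x := (k : ℝ) + 1) (by positivity) w
    push_cast at this
    rw [norm_div, this, norm_one]
  nlinarith

end ZetaBound

section Analysis

open Metric

/-- The binomial functional. -/
noncomputable def liL (n : ℕ) (f : ℂ → ℂ) : ℂ :=
  ∑ l ∈ Finset.Icc 1 n, (n.choose l : ℂ) * (iteratedDeriv (l - 1) f 0 / ((l - 1).factorial : ℂ))

lemma liL_congr (n : ℕ) {f g : ℂ → ℂ} (h : f =ᶠ[nhds 0] g) : liL n f = liL n g := by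
  unfold liL
  refine Finset.sum_congr rfl fun l _ => ?_
  rw [(h.iteratedDeriv (l - 1)).eq_of_nhds]

lemma liL_add (n : ℕ) {f g : ℂ → ℂ} (hf : AnalyticAt ℂ f 0) (hg : AnalyticAt ℂ g 0) :
    liL n (f + g) = liL n f + liL n g := by
  unfold liL
  rw [← Finset.sum_add_distrib]
  refine Finset.sum_congr rfl fun l _ => ?_
  rw [iteratedDeriv_add hf.contDiffAt hg.contDiffAt]
  ring

lemma liL_neg (n : ℕ) {f : ℂ → ℂ} : liL n (-f) = - liL n f := by
  unfold liL
  rw [← Finset.sum_neg_distrib]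
  refine Finset.sum_congr rfl fun l _ => ?_
  rw [iteratedDeriv_neg]
  ring

lemma iteratedDeriv_inv_sub (a : ℂ) (k : ℕ) :
    iteratedDeriv k (fun s : ℂ => (s - a)⁻¹) = fun s => (-1) ^ k * k.factorial * ((s - a) ^ (k + 1))⁻¹ := by
  induction k with
  | zero => simp
  | succ k ih =>
    rw [iteratedDeriv_succ, ih]
    ext s
    rw [deriv_const_mul_field]
    by_cases hs : s = a
    · subst hs
      have : (fun x : ℂ => ((x - s) ^ (k + 1))⁻¹) = fun x => (x - s) ^ (-((k : ℤ) + 1)) := by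
        ext x
        rw [zpow_neg]; norm_cast
      have h2 : deriv (fun x : ℂ => ((x - s) ^ (k + 1))⁻¹) s = 0 := by
        rw [this, deriv_comp_sub_const (f := fun x : ℂ => x ^ (-((k : ℤ) + 1)))]
        rw [deriv_zpow, sub_self, zero_zpow _ (by omega)]
        simp
      rw [h2]; simp
    · have hs' : s - a ≠ 0 := sub_ne_zero.mpr hs
      have hd : HasDerivAt (fun x : ℂ => ((x - a) ^ (k + 1))⁻¹)
          (-(((k + 1 : ℕ) : ℂ) * (s - a) ^ k * 1) / ((s - a) ^ (k + 1)) ^ 2) s :=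
        (((hasDerivAt_id s).sub_const a).pow (k + 1)).inv (pow_ne_zero _ hs')
      rw [hd.deriv, Nat.factorial_succ]
      push_cast
      field_simp
      ring

lemma liL_inv_sub (n : ℕ) (a : ℂ) (ha : a ≠ 0) :
    liL n (fun s => (s - a)⁻¹) = 1 - (1 + 1 / a) ^ n := by
  unfold liL
  rw [show (1 + 1 / a) = 1 / a + 1 by ring, add_pow, Finset.range_eq_Ico,
    Finset.sum_eq_sum_Ico_succ_bot (by omega)]
  simp only [pow_zero, one_pow, mul_one, Nat.choose_zero_right, Nat.cast_one, sub_add_cancel_left]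
  rw [← Finset.sum_neg_distrib, zero_add, show Finset.Ico 1 (n + 1) = Finset.Icc 1 n from rfl]
  refine Finset.sum_congr rfl fun l hl => ?_
  obtain ⟨k, rfl⟩ : ∃ k, l = k + 1 := ⟨l - 1, by have := (Finset.mem_Icc.mp hl).1; omega⟩
  rw [Nat.add_sub_cancel, iteratedDeriv_inv_sub]
  have hf : (k.factorial : ℂ) ≠ 0 := by exact_mod_cast k.factorial_ne_zero
  simp only [zero_sub]
  rw [neg_pow a (k + 1), one_div a, inv_pow]
  field_simp
  ring

/-- Cauchy formula for derivatives at an off-centre point. -/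
lemma cauchy_offcenter {c : ℂ} {R R' : ℝ} (hR : 0 < R) (hRR : R < R')
    (h0 : (0 : ℂ) ∈ ball c R) (k : ℕ) : ∀ {H : ℂ → ℂ}, DifferentiableOn ℂ H (ball c R') →
    Real.circleAverage (fun p => (p - c) * (p ^ (k + 1))⁻¹ * H p) c R
      = iteratedDeriv k H 0 / (k.factorial : ℂ) := by
  have hsub : closedBall c R ⊆ ball c R' := closedBall_subset_ball hRR
  have hne : ∀ p ∈ sphere c R, p ≠ 0 := by
    rintro p hp rfl
    rw [mem_ball] at h0; rw [mem_sphere] at hp; linarith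
  have hnc : ∀ p ∈ sphere c R, p - c ≠ 0 := by
    intro p hp h
    rw [mem_sphere, dist_eq_norm, h, norm_zero] at hp; linarith
  induction k with
  | zero =>
    intro H hH
    have hd : DiffContOnCl ℂ H (ball c |R|) := by
      rw [abs_of_pos hR]
      refine DifferentiableOn.diffContOnCl ?_
      rw [closure_ball _ hR.ne']
      exact hH.mono hsub
    have := DiffContOnCl.circleAverage_smul_div hd (w := 0) (by rwa [abs_of_pos hR])
    simp only [Nat.factorial_zero, iteratedDeriv_zero, Nat.cast_one, div_one, zero_add, pow_one]
    rw [← this]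
    congr 1
    ext p
    simp [div_eq_mul_inv]
  | succ k ih =>
    intro H hH
    have hH' : DifferentiableOn ℂ (deriv H) (ball c R') := hH.deriv isOpen_ball
    have ih' := ih hH'
    rw [iteratedDeriv_succ']
    have hz : (∮ z in C(c, R), (deriv H z * (z ^ (k + 1))⁻¹
        - ((k + 1 : ℕ) : ℂ) * (H z * (z ^ (k + 2))⁻¹))) = 0 := by
      refine circleIntegral.integral_eq_zero_of_hasDerivWithinAt hR.le
        (f := fun z => H z * (z ^ (k + 1))⁻¹) ?_
      intro z hz
      have hz0 := hne z hz
      have hHz : HasDerivAt H (deriv H z) z :=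
        (hH.differentiableAt (isOpen_ball.mem_nhds (hsub (sphere_subset_closedBall hz)))).hasDerivAt
      have := hHz.mul (((hasDerivAt_id z).pow (k + 1)).inv (pow_ne_zero _ hz0))
      refine (this.congr_deriv ?_).hasDerivWithinAt
      simp only [id, Pi.inv_apply, Pi.pow_apply]
      push_cast
      field_simp
      ring
    have hcH : ContinuousOn H (sphere c R) :=
      hH.continuousOn.mono (sphere_subset_closedBall.trans hsub)
    have hcH' : ContinuousOn (deriv H) (sphere c R) :=
      hH'.continuousOn.mono (sphere_subset_closedBall.trans hsub)
    have hcp : ∀ m : ℕ, ContinuousOn (fun z : ℂ => (z ^ m)⁻¹) (sphere c R) := fun m =>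
      (continuousOn_pow m).inv₀ fun z hz => pow_ne_zero _ (hne z hz)
    have ci1 : CircleIntegrable (fun z => deriv H z * (z ^ (k + 1))⁻¹) c R :=
      ContinuousOn.circleIntegrable hR.le (hcH'.mul (hcp _))
    have ci2 : CircleIntegrable (fun z => ((k + 1 : ℕ) : ℂ) * (H z * (z ^ (k + 2))⁻¹)) c R :=
      ContinuousOn.circleIntegrable hR.le (continuousOn_const.mul (hcH.mul (hcp _)))
    rw [circleIntegral.integral_sub ci1 ci2,
      circleIntegral.integral_const_mul, sub_eq_zero] at hz
    rw [Real.circleAverage_eq_circleIntegral hR.ne'] at ih' ⊢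
    have e1 : ∀ (m : ℕ) (G : ℂ → ℂ), (∮ z in C(c, R), (z - c)⁻¹ • ((z - c) * (z ^ m)⁻¹ * G z))
        = ∮ z in C(c, R), G z * (z ^ m)⁻¹ := by
      intro m G
      refine circleIntegral.integral_congr hR.le fun z hz => ?_
      have := hnc z hz
      simp only [smul_eq_mul]
      field_simp
    rw [e1] at ih' ⊢
    rw [hz] at ih'
    have hk : ((k + 1 : ℕ) : ℂ) ≠ 0 := by exact_mod_cast Nat.succ_ne_zero k
    rw [Nat.factorial_succ, Nat.cast_mul, mul_comm ((k + 1 : ℕ) : ℂ), ← div_div, ← ih']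
    rw [smul_eq_mul, smul_eq_mul]
    field_simp

/-- The kernel. -/
noncomputable def liK (n : ℕ) (p : ℂ) : ℂ := (n / p ^ 2) * (1 + 1 / p) ^ (n - 1)

lemma liK_eq (n : ℕ) (hn : 1 ≤ n) (p : ℂ) (hp : p ≠ 0) :
    liK n p = ∑ l ∈ Finset.Icc 1 n, (l * n.choose l : ℂ) * (p ^ (l + 1))⁻¹ := by
  obtain ⟨m, rfl⟩ : ∃ m, n = m + 1 := ⟨n - 1, by omega⟩
  unfold liK
  have hI : Finset.Icc 1 (m + 1) =
      (Finset.range (m + 1)).map ⟨fun k => k + 1, add_left_injective 1⟩ := by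
    ext l
    simp only [Finset.mem_Icc, Finset.mem_map, Finset.mem_range, Function.Embedding.coeFn_mk]
    constructor
    · rintro ⟨h1, h2⟩; exact ⟨l - 1, by omega, by omega⟩
    · rintro ⟨k, hk, rfl⟩; omega
  rw [Nat.add_sub_cancel, show (1 + 1 / p) = 1 / p + 1 by ring, add_pow, Finset.mul_sum, hI,
    Finset.sum_map]
  refine Finset.sum_congr rfl fun k _ => ?_
  simp only [Function.Embedding.coeFn_mk]
  have h := Nat.add_one_mul_choose_eq m k
  have h' : ((m : ℂ) + 1) * (m.choose k : ℂ) = ((m + 1).choose (k + 1) : ℂ) * (k + 1) := by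
    exact_mod_cast h
  push_cast
  simp only [one_pow, mul_one, one_div, inv_pow]
  field_simp
  linear_combination (p ^ 2 * p ^ k) * h'

end Analysis
section Analysis2

open Metric

lemma zero_mem_ball_li {n : ℕ} {R : ℝ} (hR : (n : ℝ) < R) : (0 : ℂ) ∈ ball (n : ℂ) R := by
  rw [mem_ball, dist_eq_norm]; simpa using hR

lemma sphere_ne_zero_li {n : ℕ} {R : ℝ} (hR : (n : ℝ) < R) : ∀ p ∈ sphere (n : ℂ) R, p ≠ 0 := by
  rintro p hp rfl
  have := zero_mem_ball_li hR
  rw [mem_ball] at this; rw [mem_sphere] at hp; linarith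

lemma liK_continuousOn {n : ℕ} {R : ℝ} (hR : (n : ℝ) < R) :
    ContinuousOn (liK n) (sphere (n : ℂ) R) := by
  have h0 := sphere_ne_zero_li hR
  unfold liK
  refine ContinuousOn.mul ?_ (ContinuousOn.pow ?_ _)
  · exact continuousOn_const.div (continuousOn_id.pow 2) fun p hp => pow_ne_zero _ (h0 p hp)
  · exact continuousOn_const.add (continuousOn_const.div continuousOn_id h0)

lemma pK_continuousOn {n : ℕ} {R : ℝ} (hR : (n : ℝ) < R) :
    ContinuousOn (fun p => (p - n) * liK n p) (sphere (n : ℂ) R) :=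
  (continuousOn_id.sub continuousOn_const).mul (liK_continuousOn hR)

lemma avg_B {n : ℕ} (hn : 1 ≤ n) {R R' : ℝ} (hR : (n : ℝ) < R) (hRR : R < R') {H : ℂ → ℂ}
    (hH : DifferentiableOn ℂ H (ball (n : ℂ) R')) :
    Real.circleAverage (fun p => (p - n) * liK n p * H p) (n : ℂ) R = liL n (deriv H) := by
  have hR0 : 0 < R := lt_of_le_of_lt (Nat.cast_nonneg n) hR
  have hsub : closedBall (n : ℂ) R ⊆ ball (n : ℂ) R' := closedBall_subset_ball hRR
  have hne := sphere_ne_zero_li hR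
  have e1 : Real.circleAverage (fun p => (p - n) * liK n p * H p) (n : ℂ) R =
      Real.circleAverage (fun p => ∑ l ∈ Finset.Icc 1 n,
        (l * n.choose l : ℂ) • ((p - n) * (p ^ (l + 1))⁻¹ * H p)) (n : ℂ) R := by
    apply Real.circleAverage_congr_sphere
    rw [abs_of_pos hR0]
    intro p hp
    simp only
    rw [liK_eq n hn p (hne p hp), Finset.mul_sum, Finset.sum_mul]
    refine Finset.sum_congr rfl fun l _ => ?_
    simp only [smul_eq_mul]; ring
  have hci : ∀ l : ℕ, CircleIntegrable (fun p => (p - n) * (p ^ (l + 1))⁻¹ * H p) (n : ℂ) R := by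
    intro l
    refine ContinuousOn.circleIntegrable hR0.le (ContinuousOn.mul (ContinuousOn.mul
      (continuousOn_id.sub continuousOn_const) ?_) (hH.continuousOn.mono
        (sphere_subset_closedBall.trans hsub)))
    exact (continuousOn_pow _).inv₀ fun z hz => pow_ne_zero _ (hne z hz)
  rw [e1, Real.circleAverage_fun_sum
    (f := fun l p => (l * n.choose l : ℂ) • ((p - n) * (p ^ (l + 1))⁻¹ * H p))
    fun l _ => (hci l).const_smul]
  unfold liL
  refine Finset.sum_congr rfl fun l hl => ?_
  rw [Real.circleAverage_fun_smul, cauchy_offcenter hR0 hRR (zero_mem_ball_li hR) l hH]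
  obtain ⟨k, rfl⟩ : ∃ k, l = k + 1 := ⟨l - 1, by have := (Finset.mem_Icc.mp hl).1; omega⟩
  rw [Nat.add_sub_cancel, iteratedDeriv_succ', Nat.factorial_succ, smul_eq_mul]
  have hf : (k.factorial : ℂ) ≠ 0 := by exact_mod_cast k.factorial_ne_zero
  have hk : ((k : ℂ) + 1) ≠ 0 := by exact_mod_cast Nat.succ_ne_zero k
  push_cast
  field_simp

open ComplexConjugate in
lemma avg_C {n : ℕ} (hn : 1 ≤ n) {R R' : ℝ} (hR : (n : ℝ) < R) (hRR : R < R') {H : ℂ → ℂ}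
    (hH : DifferentiableOn ℂ H (ball (n : ℂ) R')) :
    Real.circleAverage (fun p => (p - n) * liK n p * conj (H p)) (n : ℂ) R = 0 := by
  have hR0 : 0 < R := lt_of_le_of_lt (Nat.cast_nonneg n) hR
  have hsub : closedBall (n : ℂ) R ⊆ ball (n : ℂ) R' := closedBall_subset_ball hRR
  have hne := sphere_ne_zero_li hR
  set M : ℂ → ℂ := fun p => (R ^ 2 * (p - n) * n / (n * (p - n) + R ^ 2) ^ 2 *
    (1 + (p - n) / (n * (p - n) + R ^ 2)) ^ (n - 1)) * H p with hM
  have hden : ∀ p ∈ closedBall (n : ℂ) R, ((n : ℂ) * (p - n) + R ^ 2) ≠ 0 := by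
    intro p hp h
    rw [mem_closedBall, dist_eq_norm] at hp
    have h1 : ((n : ℂ) * (p - n)) = - (R : ℂ) ^ 2 := by linear_combination h
    have h2 := congrArg norm h1
    rw [norm_mul, norm_neg, norm_pow] at h2
    simp only [Complex.norm_natCast, Complex.norm_real, Real.norm_eq_abs, sq_abs] at h2
    have hn0 : (0 : ℝ) < n := by exact_mod_cast hn
    nlinarith
  have hMd : DifferentiableOn ℂ M (closedBall (n : ℂ) R) := by
    have hd1 : DifferentiableOn ℂ (fun p : ℂ => (n : ℂ) * (p - n) + R ^ 2) (closedBall (n : ℂ) R) := by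
      fun_prop
    have hd2 : DifferentiableOn ℂ (fun p : ℂ => p - n) (closedBall (n : ℂ) R) := by
      fun_prop
    refine DifferentiableOn.mul (DifferentiableOn.mul ?_ (DifferentiableOn.pow ?_ _)) (hH.mono hsub)
    · exact ((hd2.const_mul _).mul_const _).div (hd1.pow 2) fun p hp => pow_ne_zero _ (hden p hp)
    · exact (hd2.div hd1 hden).const_add _
  have hdc : DiffContOnCl ℂ M (ball (n : ℂ) |R|) := by
    rw [abs_of_pos hR0]
    refine DifferentiableOn.diffContOnCl ?_
    rwa [closure_ball _ hR0.ne']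
  have hmean := DiffContOnCl.circleAverage hdc
  have hM0 : M n = 0 := by simp [hM]
  rw [hM0] at hmean
  have hMi : CircleIntegrable M (n : ℂ) R :=
    ContinuousOn.circleIntegrable hR0.le (hMd.continuousOn.mono sphere_subset_closedBall)
  have hc := ContinuousLinearMap.circleAverage_comp_comm
    (Complex.conjCLE : ℂ →L[ℝ] ℂ) hMi
  rw [hmean, map_zero] at hc
  rw [← hc]
  apply Real.circleAverage_congr_sphere
  rw [abs_of_pos hR0]
  intro p hp
  have hp0 := hne p hp
  have hpn : p - n ≠ 0 := by
    intro h
    rw [mem_sphere, dist_eq_norm, h, norm_zero] at hp; linarith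
  have hd := hden p (sphere_subset_closedBall hp)
  have hcz : conj (p - n) * (p - n) = (R : ℂ) ^ 2 := by
    rw [mul_comm, Complex.mul_conj, Complex.normSq_eq_norm_sq]
    rw [mem_sphere, dist_eq_norm] at hp
    rw [hp]; norm_cast
  have hcc : conj (p - n) = R ^ 2 / (p - n) := by
    rw [eq_div_iff hpn, hcz]
  have hcp : conj p = (n * (p - n) + R ^ 2) / (p - n) := by
    have : conj p = conj (p - n) + n := by simp
    rw [this, hcc]; field_simp; ring
  have hcp' : p = conj ((n * (p - n) + R ^ 2) / (p - n)) := by rw [← hcp, Complex.conj_conj]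
  have key : conj ((p - n) * liK n p) = R ^ 2 * (p - n) * n / (n * (p - n) + R ^ 2) ^ 2 *
    (1 + (p - n) / (n * (p - n) + R ^ 2)) ^ (n - 1) := by
    unfold liK
    rw [map_mul, map_mul, map_pow, map_add, map_div₀, map_div₀, map_pow, hcp, hcc]
    simp only [map_natCast, map_one]
    rw [one_div_div]
    field_simp
  simp only [Function.comp, hM, ← key]
  simp
end Analysis2
section Analysis3

open Metric

/-- The boundary functional. -/
noncomputable def liI (n : ℕ) (R : ℝ) (u : ℂ → ℝ) : ℂ :=
  Real.circleAverage (fun p => (u p : ℂ) * (2 * ((p - n) * liK n p))) (n : ℂ) R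

lemma exists_log_ball {c : ℂ} {r : ℝ} (hr : 0 < r) {E : ℂ → ℂ} (hE : DifferentiableOn ℂ E (ball c r))
    (h0 : ∀ z ∈ ball c r, E z ≠ 0) :
    ∃ H : ℂ → ℂ, (∀ z ∈ ball c r, HasDerivAt H (logDeriv E z) z) ∧
      ∀ z ∈ ball c r, E z = Complex.exp (H z) := by
  have hd : DifferentiableOn ℂ (logDeriv E) (ball c r) := (hE.deriv isOpen_ball).div hE h0
  obtain ⟨H, hHc, hH⟩ := (hd.isExactOn_ball).with_val_at c (Complex.log (E c))
  refine ⟨H, hH, ?_⟩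
  have hEd : ∀ z ∈ ball c r, HasDerivAt E (deriv E z) z := fun z hz =>
    (hE.differentiableAt (isOpen_ball.mem_nhds hz)).hasDerivAt
  have hG : ∀ z ∈ ball c r, HasDerivAt (fun w => E w * Complex.exp (-H w)) 0 z := by
    intro z hz
    have := (hEd z hz).mul ((hH z hz).neg.cexp)
    refine this.congr_deriv ?_
    have := h0 z hz
    simp only [logDeriv_apply, Pi.neg_apply]
    field_simp
    ring
  have hc : c ∈ ball c r := mem_ball_self hr
  intro z hz
  have hconst := IsOpen.is_const_of_deriv_eq_zero isOpen_ball (convex_ball c r).isPreconnected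
    (fun w hw => (hG w hw).differentiableAt.differentiableWithinAt)
    (fun w hw => (hG w hw).deriv) hz hc
  simp only [hHc] at hconst
  rw [Complex.exp_neg (Complex.log _), Complex.exp_log (h0 c hc), mul_inv_cancel₀ (h0 c hc),
    Complex.exp_neg] at hconst
  rw [← div_eq_mul_inv, div_eq_one_iff_eq (Complex.exp_ne_zero _)] at hconst
  exact hconst

open ComplexConjugate in
lemma lemma_D {n : ℕ} (hn : 1 ≤ n) {R R' : ℝ} (hR : (n : ℝ) < R) (hRR : R < R') {E : ℂ → ℂ}
    (hE : DifferentiableOn ℂ E (ball (n : ℂ) R')) (h0 : ∀ z ∈ ball (n : ℂ) R', E z ≠ 0) :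
    liI n R (fun p => Real.log ‖E p‖) = liL n (logDeriv E) ∧
    Real.circleAverage (fun p => Real.log ‖E p‖) (n : ℂ) R = Real.log ‖E n‖ := by
  have hR0 : 0 < R := lt_of_le_of_lt (Nat.cast_nonneg n) hR
  have hsub : closedBall (n : ℂ) R ⊆ ball (n : ℂ) R' := closedBall_subset_ball hRR
  obtain ⟨H, hHd, hHE⟩ := exists_log_ball (hR0.trans hRR) hE h0
  have hHdiff : DifferentiableOn ℂ H (ball (n : ℂ) R') := fun z hz =>
    (hHd z hz).differentiableAt.differentiableWithinAt
  have hlog : ∀ z ∈ ball (n : ℂ) R', Real.log ‖E z‖ = (H z).re := by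
    intro z hz
    rw [hHE z hz, Complex.norm_exp, Real.log_exp]
  have hss : sphere (n : ℂ) R ⊆ ball (n : ℂ) R' := sphere_subset_closedBall.trans hsub
  have hHc : ContinuousOn H (sphere (n : ℂ) R) := hHdiff.continuousOn.mono hss
  constructor
  · have e1 : liI n R (fun p => Real.log ‖E p‖) = Real.circleAverage (fun p =>
        (p - n) * liK n p * H p + (p - n) * liK n p * conj (H p)) (n : ℂ) R := by
      apply Real.circleAverage_congr_sphere
      rw [abs_of_pos hR0]
      intro p hp
      simp only
      rw [hlog p (hss hp)]
      have := Complex.add_conj (H p)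
      push_cast at this
      linear_combination -((p - n) * liK n p) * this
    have i1 : CircleIntegrable (fun p => (p - n) * liK n p * H p) (n : ℂ) R :=
      ContinuousOn.circleIntegrable hR0.le ((pK_continuousOn hR).mul hHc)
    have i2 : CircleIntegrable (fun p => (p - n) * liK n p * conj (H p)) (n : ℂ) R :=
      ContinuousOn.circleIntegrable hR0.le ((pK_continuousOn hR).mul
        (Complex.continuous_conj.comp_continuousOn hHc))
    rw [e1, Real.circleAverage_fun_add i1 i2, avg_B hn hR hRR hHdiff, avg_C hn hR hRR hHdiff, add_zero]
    apply liL_congr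
    filter_upwards [isOpen_ball.mem_nhds (zero_mem_ball_li (hR.trans hRR))] with z hz
    exact (hHd z hz).deriv
  · have hdc : DiffContOnCl ℂ H (ball (n : ℂ) |R|) := by
      rw [abs_of_pos hR0]
      refine DifferentiableOn.diffContOnCl ?_
      rw [closure_ball _ hR0.ne']
      exact hHdiff.mono hsub
    have hmean := DiffContOnCl.circleAverage hdc
    have hMi : CircleIntegrable H (n : ℂ) R := ContinuousOn.circleIntegrable hR0.le hHc
    have hc := ContinuousLinearMap.circleAverage_comp_comm Complex.reCLM hMi
    rw [hmean] at hc
    rw [hlog n (mem_ball_self (hR0.trans hRR)), ← Complex.reCLM_apply, ← hc]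
    apply Real.circleAverage_congr_sphere
    rw [abs_of_pos hR0]
    intro p hp
    simp [hlog p (hss hp)]

lemma liI_congr {n : ℕ} {R : ℝ} (hR : 0 < R) {u v : ℂ → ℝ} (h : ∀ p ∈ sphere (n : ℂ) R, u p = v p) :
    liI n R u = liI n R v := by
  apply Real.circleAverage_congr_sphere
  rw [abs_of_pos hR]
  intro p hp
  simp only [h p hp]

lemma liI_int {n : ℕ} {R : ℝ} (hR : (n : ℝ) < R) {u : ℂ → ℝ}
    (hu : ContinuousOn u (sphere (n : ℂ) R)) :
    CircleIntegrable (fun p => (u p : ℂ) * (2 * ((p - n) * liK n p))) (n : ℂ) R :=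
  ContinuousOn.circleIntegrable (lt_of_le_of_lt (Nat.cast_nonneg n) hR).le
    ((Complex.continuous_ofReal.comp_continuousOn hu).mul
      (continuousOn_const.mul (pK_continuousOn hR)))

lemma liI_add {n : ℕ} {R : ℝ} (hR : (n : ℝ) < R) {u v : ℂ → ℝ}
    (hu : ContinuousOn u (sphere (n : ℂ) R)) (hv : ContinuousOn v (sphere (n : ℂ) R)) :
    liI n R (fun p => u p + v p) = liI n R u + liI n R v := by
  unfold liI
  rw [← Real.circleAverage_fun_add (liI_int hR hu) (liI_int hR hv)]
  congr 1
  ext p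
  push_cast
  ring

lemma logDeriv_sub_const (a : ℂ) : logDeriv (fun s : ℂ => s - a) = fun s => (s - a)⁻¹ := by
  ext s
  simp [logDeriv_apply]

lemma logDeriv_const_mul_sub (k a : ℂ) (hk : k ≠ 0) :
    logDeriv (fun s : ℂ => k * (s - a)) = fun s => (s - a)⁻¹ := by
  ext s
  rw [logDeriv_const_mul s k hk, logDeriv_sub_const]

open ComplexConjugate in
/-- Reflection of a point in the circle. -/
lemma liI_reflect {n : ℕ} (hn : 1 ≤ n) {R : ℝ} (hR : (n : ℝ) < R) {a : ℂ}
    (ha : ‖a - n‖ < R) (han : a ≠ n) :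
    liI n R (fun p => Real.log ‖p - a‖) =
      1 - (1 + 1 / (n + ((R ^ 2 / ‖a - n‖ ^ 2 : ℝ) : ℂ) * (a - n))) ^ n := by
  have hR0 : 0 < R := lt_of_le_of_lt (Nat.cast_nonneg n) hR
  have hd : 0 < ‖a - n‖ := norm_pos_iff.mpr (sub_ne_zero.mpr han)
  set d := ‖a - n‖ with hdd
  set b : ℂ := n + ((R ^ 2 / d ^ 2 : ℝ) : ℂ) * (a - n) with hb
  have hbn : ‖b - n‖ = R ^ 2 / d := by
    rw [hb, add_sub_cancel_left, norm_mul, Complex.norm_real, ← hdd, Real.norm_eq_abs,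
      abs_of_pos (by positivity)]
    field_simp
  have hbR : R < ‖b - n‖ := by
    rw [hbn, lt_div_iff₀ hd]; nlinarith
  have hk : ((d / R : ℝ) : ℂ) ≠ 0 := by
    exact_mod_cast (by positivity : d / R ≠ 0)
  have hb0 : b ≠ 0 := by
    rintro h
    rw [h] at hbR
    have : ‖(0 : ℂ) - n‖ = n := by simp
    linarith
  have hD := (lemma_D hn hR hbR (E := fun s => ((d / R : ℝ) : ℂ) * (s - b)) (by fun_prop) (by
    intro z hz h
    rcases mul_eq_zero.mp h with h | h
    · exact hk h
    · rw [sub_eq_zero] at h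
      rw [h, mem_ball, dist_eq_norm] at hz
      exact lt_irrefl _ hz)).1
  rw [logDeriv_const_mul_sub _ _ hk, liL_inv_sub n b hb0] at hD
  rw [← hD]
  apply liI_congr hR0
  intro p hp
  congr 1
  rw [mem_sphere, dist_eq_norm] at hp
  rw [norm_mul, Complex.norm_real, Real.norm_eq_abs, abs_of_pos (by positivity)]
  have hsq : ‖p - a‖ ^ 2 = (d / R * ‖p - b‖) ^ 2 := by
    have h1 : p - a = (p - n) - (a - n) := by ring
    have h2 : p - b = (p - n) - ((R ^ 2 / d ^ 2 : ℝ) : ℂ) * (a - n) := by rw [hb]; ring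
    rw [mul_pow, h1, h2, ← Complex.normSq_eq_norm_sq, ← Complex.normSq_eq_norm_sq,
      Complex.normSq_sub (p - n) (a - n), Complex.normSq_sub (p - n) (_ * _)]
    rw [map_mul, map_mul, Complex.conj_ofReal, Complex.normSq_ofReal]
    rw [show (p - n) * (((R ^ 2 / d ^ 2 : ℝ) : ℂ) * conj (a - n)) = ((R ^ 2 / d ^ 2 : ℝ) : ℂ) * ((p - n) * conj (a - n)) by ring,
      Complex.re_ofReal_mul, Complex.normSq_eq_norm_sq (p - n), Complex.normSq_eq_norm_sq (a - n), hp, ← hdd]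
    field_simp
    ring
  exact (pow_left_inj₀ (norm_nonneg _) (by positivity) two_ne_zero).mp hsq

end Analysis3
section Pred

open Metric

lemma norm_pow_sub_pow_le_li {a b : ℂ} (ha : ‖a‖ ≤ 1) (hb : ‖b‖ ≤ 1) (n : ℕ) :
    ‖a ^ n - b ^ n‖ ≤ n * ‖a - b‖ := by
  induction n with
  | zero => simp
  | succ n ih =>
    have : a ^ (n + 1) - b ^ (n + 1) = a * (a ^ n - b ^ n) + (a - b) * b ^ n := by ring
    rw [this]
    refine (norm_add_le _ _).trans ?_
    rw [norm_mul, norm_mul, norm_pow]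
    have h1 : ‖a‖ * ‖a ^ n - b ^ n‖ ≤ 1 * (n * ‖a - b‖) :=
      mul_le_mul ha ih (norm_nonneg _) zero_le_one
    have h2 : ‖a - b‖ * ‖b‖ ^ n ≤ ‖a - b‖ * 1 :=
      mul_le_mul_of_nonneg_left (pow_le_one₀ (norm_nonneg _) hb) (norm_nonneg _)
    push_cast
    linarith

lemma norm_one_add_inv_le {s : ℂ} (hs : s.re ≤ -1 / 2) : ‖1 + 1 / s‖ ≤ 1 := by
  have hs0 : s ≠ 0 := by rintro rfl; norm_num at hs
  have : 1 + 1 / s = (s + 1) / s := by field_simp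
  rw [this, norm_div, div_le_one (norm_pos_iff.mpr hs0)]
  rw [← pow_le_pow_iff_left₀ (norm_nonneg _) (norm_nonneg _) two_ne_zero,
    ← Complex.normSq_eq_norm_sq, ← Complex.normSq_eq_norm_sq, Complex.normSq_apply, Complex.normSq_apply]
  simp
  nlinarith

/-- The predicate comparing the functional with its boundary version. -/
def liP (n : ℕ) (R A : ℝ) (ψ : ℂ → ℂ) : Prop :=
  Differentiable ℂ ψ ∧ ψ 0 ≠ 0 ∧ ψ n ≠ 0 ∧ (∀ p ∈ sphere (n : ℂ) R, ψ p ≠ 0) ∧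
  ‖liL n (logDeriv ψ) - liI n R (fun p => Real.log ‖ψ p‖)‖ ≤
    A * (Real.circleAverage (fun p => Real.log ‖ψ p‖) (n : ℂ) R - Real.log ‖ψ n‖)

lemma logNorm_continuousOn {S : Set ℂ} {ψ : ℂ → ℂ} (h : Differentiable ℂ ψ) (h0 : ∀ p ∈ S, ψ p ≠ 0) :
    ContinuousOn (fun p => Real.log ‖ψ p‖) S :=
  ContinuousOn.log h.continuous.norm.continuousOn fun p hp => norm_ne_zero_iff.mpr (h0 p hp)

lemma liP_mul {n : ℕ} {R A : ℝ} (hR : (n : ℝ) < R) {φ ψ : ℂ → ℂ} (h1 : liP n R A φ)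
    (h2 : liP n R A ψ) : liP n R A (fun s => φ s * ψ s) := by
  have hR0 : 0 < R := lt_of_le_of_lt (Nat.cast_nonneg n) hR
  obtain ⟨d1, z1, c1, s1, b1⟩ := h1
  obtain ⟨d2, z2, c2, s2, b2⟩ := h2
  refine ⟨d1.mul d2, mul_ne_zero z1 z2, mul_ne_zero c1 c2,
    fun p hp => mul_ne_zero (s1 p hp) (s2 p hp), ?_⟩
  have l1 := logNorm_continuousOn d1 s1
  have l2 := logNorm_continuousOn d2 s2
  have hlog : ∀ p ∈ sphere (n : ℂ) R, Real.log ‖φ p * ψ p‖ = Real.log ‖φ p‖ + Real.log ‖ψ p‖ := by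
    intro p hp
    rw [norm_mul, Real.log_mul (norm_ne_zero_iff.mpr (s1 p hp)) (norm_ne_zero_iff.mpr (s2 p hp))]
  rw [liI_congr hR0 hlog, liI_add hR l1 l2]
  have ha : Real.circleAverage (fun p => Real.log ‖φ p * ψ p‖) (n : ℂ) R =
      Real.circleAverage (fun p => Real.log ‖φ p‖) (n : ℂ) R +
      Real.circleAverage (fun p => Real.log ‖ψ p‖) (n : ℂ) R := by
    rw [← Real.circleAverage_fun_add (l1.circleIntegrable hR0.le) (l2.circleIntegrable hR0.le)]
    apply Real.circleAverage_congr_sphere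
    rw [abs_of_pos hR0]
    exact hlog
  have hl : liL n (logDeriv fun s => φ s * ψ s) = liL n (logDeriv φ) + liL n (logDeriv ψ) := by
    have an : ∀ {f : ℂ → ℂ}, Differentiable ℂ f → f 0 ≠ 0 → AnalyticAt ℂ (logDeriv f) 0 := by
      intro f hf h0
      have := hf.analyticAt 0
      exact this.deriv.div this h0
    rw [← liL_add n (an d1 z1) (an d2 z2)]
    apply liL_congr
    filter_upwards [d1.continuous.continuousAt.eventually_ne z1,
      d2.continuous.continuousAt.eventually_ne z2] with s hs1 hs2
    exact logDeriv_mul s hs1 hs2 (d1 s) (d2 s)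
  rw [ha, hl, norm_mul, Real.log_mul (norm_ne_zero_iff.mpr c1) (norm_ne_zero_iff.mpr c2)]
  calc _ = ‖(liL n (logDeriv φ) - liI n R (fun p => Real.log ‖φ p‖)) +
        (liL n (logDeriv ψ) - liI n R (fun p => Real.log ‖ψ p‖))‖ := by congr 1; ring
    _ ≤ _ := norm_add_le _ _
    _ ≤ _ := by linarith

lemma liP_of_ne {n : ℕ} (hn : 1 ≤ n) {R A : ℝ} (hR : (n : ℝ) < R) {ψ : ℂ → ℂ}
    (hd : Differentiable ℂ ψ) (h0 : ∀ p ∈ closedBall (n : ℂ) R, ψ p ≠ 0) : liP n R A ψ := by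
  have hR0 : 0 < R := lt_of_le_of_lt (Nat.cast_nonneg n) hR
  refine ⟨hd, h0 0 (ball_subset_closedBall (zero_mem_ball_li hR)), h0 n (mem_closedBall_self hR0.le),
    fun p hp => h0 p (sphere_subset_closedBall hp), ?_⟩
  obtain ⟨δ, hδ, hsub⟩ := (isCompact_closedBall (n : ℂ) R).exists_thickening_subset_open
    (isOpen_ne_fun hd.continuous continuous_const) h0
  have hth : thickening δ (closedBall (n : ℂ) R) = ball (n : ℂ) (δ + R) :=
    thickening_closedBall hδ hR0.le _
  rw [hth] at hsub
  obtain ⟨e1, e2⟩ := lemma_D hn hR (by linarith : R < δ + R) hd.differentiableOn (fun z hz => hsub hz)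
  rw [e1, e2]
  simp

lemma liP_const {n : ℕ} (hn : 1 ≤ n) {R A : ℝ} (hR : (n : ℝ) < R) : liP n R A (fun _ => 1) :=
  liP_of_ne hn hR (differentiable_const _) fun _ _ => one_ne_zero

lemma liP_pow {n : ℕ} (hn : 1 ≤ n) {R A : ℝ} (hR : (n : ℝ) < R) {ψ : ℂ → ℂ}
    (h : liP n R A ψ) (m : ℕ) : liP n R A (fun s => ψ s ^ m) := by
  induction m with
  | zero => simpa using liP_const hn hR
  | succ m ih => simpa [pow_succ] using liP_mul hR ih h

lemma liP_zero {n : ℕ} (hn : 2 ≤ n) {R : ℝ} (h7 : n + 0.7 < R) (h8 : R < n + 0.8) {ρ : ℂ}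
    (hρ : ρ.re = -1 / 2) (hρR : ‖ρ - n‖ < R) : liP n R (40 * n) (fun s => s - ρ) := by
  have hn1 : 1 ≤ n := by omega
  have hn2 : (2 : ℝ) ≤ n := by exact_mod_cast hn
  have hR : (n : ℝ) < R := by linarith
  have hR0 : 0 < R := by linarith
  have hne : ρ ≠ 0 := by rintro rfl; norm_num at hρ
  have hnn : ρ ≠ n := by
    rintro rfl
    simp at hρ; linarith
  refine ⟨by fun_prop, by simpa using hne, sub_ne_zero.mpr hnn.symm, fun p hp h => ?_, ?_⟩
  · rw [sub_eq_zero] at h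
    rw [mem_sphere, dist_eq_norm, h] at hp
    linarith
  rw [logDeriv_sub_const, liL_inv_sub n ρ hne, liI_reflect hn1 hR hρR hnn]
  have hav : Real.circleAverage (fun p => Real.log ‖p - ρ‖) (n : ℂ) R = Real.log R := by
    apply circleAverage_log_norm_sub_const_of_mem_closedBall
    rw [mem_closedBall, dist_eq_norm, abs_of_pos hR0]; exact hρR.le
  rw [hav, norm_sub_rev]
  have hd : 0 < ‖ρ - n‖ := norm_pos_iff.mpr (sub_ne_zero.mpr hnn)
  have hd2 : ‖ρ - n‖ ^ 2 = (n + 1 / 2) ^ 2 + ρ.im ^ 2 := by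
    rw [← Complex.normSq_eq_norm_sq, Complex.normSq_apply]
    simp [hρ]; ring
  have hrn : ‖(n : ℂ) - ρ‖ = ‖ρ - n‖ := norm_sub_rev _ _
  rw [hrn]
  set d := ‖ρ - n‖ with hdd
  set t : ℝ := R ^ 2 / d ^ 2 with ht
  set b : ℂ := n + (t : ℂ) * (ρ - n) with hb
  have ht1 : 1 ≤ t := by
    rw [ht, one_le_div (by positivity)]; nlinarith
  have hbre : b.re ≤ -1 / 2 := by
    simp [hb, hρ]; nlinarith
  have hbim : b.im = t * ρ.im := by simp [hb]
  have hn1' := norm_one_add_inv_le hρ.le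
  have hn2' := norm_one_add_inv_le hbre
  have hdn : n + 1 / 2 ≤ d := by nlinarith [sq_nonneg ρ.im]
  have hlog : (R - d) / R ≤ Real.log R - Real.log d := by
    have := Real.one_sub_inv_le_log_of_pos (div_pos hR0 hd)
    rw [Real.log_div hR0.ne' hd.ne', inv_div] at this
    rw [sub_div, div_self hR0.ne']; exact this
  have hgoal : ‖(1 + 1 / b) ^ n - (1 + 1 / ρ) ^ n‖ ≤ 40 * n * ((R - d) / R) → 
      ‖1 - (1 + 1 / b) ^ n - (1 - (1 + 1 / ρ) ^ n)‖ ≤ 40 * n * (Real.log R - Real.log d) := by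
    intro h
    rw [show 1 - (1 + 1 / b) ^ n - (1 - (1 + 1 / ρ) ^ n) = -((1 + 1 / b) ^ n - (1 + 1 / ρ) ^ n) by ring,
      norm_neg]
    refine h.trans ?_
    gcongr
  apply hgoal
  by_cases hγ : ρ.im ^ 2 < 0.2 * n
  · have h2 : ‖(1 + 1 / b) ^ n - (1 + 1 / ρ) ^ n‖ ≤ 2 := by
      refine (norm_sub_le _ _).trans ?_
      rw [norm_pow, norm_pow]
      have := pow_le_one₀ (n := n) (norm_nonneg _) hn1'
      have := pow_le_one₀ (n := n) (norm_nonneg _) hn2'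
      linarith
    refine h2.trans ?_
    rw [← mul_div_assoc, le_div_iff₀ hR0]
    have h3 : 0.2 * n ≤ (R - d) * (R + d) := by nlinarith
    have h4 : (R - d) * (R + d) ≤ (R - d) * (2 * R) := by
      apply mul_le_mul_of_nonneg_left _ (by linarith); linarith
    have h5 : 0.1 * n ≤ (R - d) * R := by linarith
    have h6 : R ≤ 1.4 * n := by linarith
    have h7 : 0.1 * n ≤ (R - d) * (1.4 * n) := by
      refine h5.trans (mul_le_mul_of_nonneg_left h6 (by linarith))
    have h8 : 1 / 14 ≤ R - d := by nlinarith
    nlinarith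
  · push Not at hγ
    refine (norm_pow_sub_pow_le_li hn2' hn1' n).trans ?_
    have hb0 : b ≠ 0 := by
      rintro h; rw [h] at hbre; norm_num at hbre
    have e : (1 + 1 / b) - (1 + 1 / ρ) = (ρ - b) / (ρ * b) := by
      field_simp; ring
    have e2 : ρ - b = (1 - t : ℝ) * (ρ - n) := by
      rw [hb]; push_cast; ring
    have e3 : ‖ρ - b‖ = (t - 1) * d := by
      rw [e2, norm_mul, Complex.norm_real, Real.norm_eq_abs, abs_sub_comm, abs_of_nonneg (by linarith)]
    have i1 : |ρ.im| ≤ ‖ρ‖ := Complex.abs_im_le_norm _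
    have i2 : |ρ.im| ≤ ‖b‖ := by
      refine le_trans ?_ (Complex.abs_im_le_norm b)
      rw [hbim, abs_mul, abs_of_nonneg (by linarith : 0 ≤ t)]
      exact le_mul_of_one_le_left (abs_nonneg _) ht1
    have i3 : 0.2 * n ≤ ‖ρ‖ * ‖b‖ := by
      refine hγ.trans ?_
      rw [← sq_abs, sq]
      exact mul_le_mul i1 i2 (abs_nonneg _) (norm_nonneg _)
    rw [e, norm_div, norm_mul, e3]
    have hn0 : (0 : ℝ) < n := by linarith
    have s1 : n * ((t - 1) * d / (‖ρ‖ * ‖b‖)) ≤ n * ((t - 1) * d / (0.2 * n)) := by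
      have : 0 ≤ (t - 1) * d := mul_nonneg (by linarith) hd.le
      gcongr
    refine s1.trans ?_
    have s2 : n * ((t - 1) * d / (0.2 * n)) = 5 * ((R - d) * (R + d)) / d := by
      rw [ht]; field_simp; ring
    rw [s2, ← mul_div_assoc, div_le_div_iff₀ hd hR0]
    have hRd : 0 ≤ R - d := by linarith
    have s3 : 5 * (R + d) * R ≤ 40 * n * d := by
      have a1 : R + d ≤ 3 * d := by linarith
      have a2 : R ≤ 1.4 * n := by linarith
      calc 5 * (R + d) * R ≤ 5 * (3 * d) * (1.4 * n) := by gcongr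
        _ = 21 * (n * d) := by ring
        _ ≤ 40 * (n * d) := by gcongr; norm_num
        _ = 40 * n * d := by ring
    calc 5 * ((R - d) * (R + d)) * R = (R - d) * (5 * (R + d) * R) := by ring
      _ ≤ (R - d) * (40 * n * d) := mul_le_mul_of_nonneg_left s3 hRd
      _ = _ := by ring

end Pred
section Factor

open Metric

lemma exists_factor {ψ : ℂ → ℂ} (hd : Differentiable ℂ ψ) (ρ : ℂ) {z₀ : ℂ} (hz₀ : ψ z₀ ≠ 0) :
    ∃ (m : ℕ) (φ : ℂ → ℂ), Differentiable ℂ φ ∧ φ ρ ≠ 0 ∧ ∀ z, ψ z = (z - ρ) ^ m * φ z := by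
  have hnz : ¬ ∀ᶠ z in nhds ρ, ψ z = 0 := by
    intro h
    have han : AnalyticOnNhd ℂ ψ Set.univ := fun z _ => hd.analyticAt z
    have := han.eqOn_zero_of_preconnected_of_eventuallyEq_zero isPreconnected_univ
      (Set.mem_univ ρ) h
    exact hz₀ (this (Set.mem_univ z₀))
  obtain ⟨m, g, hg, hg0, hgeq⟩ :=
    (hd.analyticAt ρ).exists_eventuallyEq_pow_smul_nonzero_iff.mpr hnz
  refine ⟨m, fun z => if z = ρ then g ρ else ψ z / (z - ρ) ^ m, ?_, by simpa using hg0, ?_⟩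
  · intro z
    by_cases hz : z = ρ
    · subst hz
      have hev : (fun w => if w = z then g z else ψ w / (w - z) ^ m) =ᶠ[nhds z] g := by
        filter_upwards [hgeq] with w hw
        by_cases hwz : w = z
        · simp [hwz]
        · have : w - z ≠ 0 := sub_ne_zero.mpr hwz
          simp only [hwz, if_false]
          rw [hw, smul_eq_mul]
          field_simp
      exact hev.differentiableAt_iff.mpr hg.differentiableAt
    · have hev : (fun w => if w = ρ then g ρ else ψ w / (w - ρ) ^ m) =ᶠ[nhds z]
          fun w => ψ w / (w - ρ) ^ m := by
        filter_upwards [isOpen_ne.mem_nhds hz] with w hw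
        simp only [show w ≠ ρ from hw, if_false]
      refine hev.differentiableAt_iff.mpr ?_
      exact (hd z).div (by fun_prop) (pow_ne_zero _ (sub_ne_zero.mpr hz))
  · intro z
    by_cases hz : z = ρ
    · subst hz
      simpa using hgeq.self_of_nhds
    · have : z - ρ ≠ 0 := sub_ne_zero.mpr hz
      simp only [hz, if_false]
      field_simp

lemma liP_factor {n : ℕ} (hn : 1 ≤ n) {R A : ℝ} (hR : (n : ℝ) < R) (S : Finset ℂ) :
    ∀ ψ : ℂ → ℂ, Differentiable ℂ ψ → (∀ ρ ∈ S, liP n R A (fun s => s - ρ)) →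
    (∀ z ∈ closedBall (n : ℂ) R, ψ z = 0 → z ∈ S) → (∃ z₀, ψ z₀ ≠ 0) → liP n R A ψ := by
  classical
  induction S using Finset.induction_on with
  | empty =>
    intro ψ hd _ h _
    exact liP_of_ne hn hR hd fun z hz h0 => by simpa using h z hz h0
  | insert ρ S _ ih =>
    intro ψ hd hS h ⟨z₀, hz₀⟩
    obtain ⟨m, φ, hφ, hφ0, heq⟩ := exists_factor hd ρ hz₀
    have h1 : liP n R A φ := by
      refine ih φ hφ (fun r hr => hS r (Finset.mem_insert_of_mem hr)) ?_ ⟨ρ, hφ0⟩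
      intro z hz h0
      have := h z hz (by rw [heq, h0, mul_zero])
      rcases Finset.mem_insert.mp this with h | h
      · exact absurd (h ▸ h0) hφ0
      · exact h
    have h2 := liP_pow hn hR (hS ρ (Finset.mem_insert_self _ _)) m
    have := liP_mul hR h2 h1
    rwa [show ψ = fun s => (s - ρ) ^ m * φ s from funext heq]

/-- The entire function `s ζ(1 + s)`. -/
noncomputable def liF (s : ℂ) : ℂ := riemannZeta₁ (s + 1)

lemma liF_diff : Differentiable ℂ liF :=
  differentiable_riemannZeta₁.comp (differentiable_id.add_const 1)

lemma liF_zero : liF 0 = 1 := by simp [liF, riemannZeta₁_one]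

lemma liF_eq {s : ℂ} (hs : s ≠ 0) : liF s = s * riemannZeta (s + 1) := by
  unfold liF
  rw [riemannZeta_eq_inv_sub_mul (by simpa using hs)]
  simp only [add_sub_cancel_right]
  field_simp

lemma liF_zero_re (RH : ∀ s : ℂ, 0 < s.re → s.re < 1 → riemannZeta s = 0 → s.re = 1 / 2)
    {s : ℂ} (hs : -1 < s.re) (h0 : liF s = 0) : s.re = -1 / 2 := by
  have hs0 : s ≠ 0 := by rintro rfl; simp [liF_zero] at h0
  rw [liF_eq hs0] at h0
  have hz : riemannZeta (s + 1) = 0 := by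
    rcases mul_eq_zero.mp h0 with h | h
    · exact absurd h hs0
    · exact h
  by_cases h : 0 ≤ s.re
  · exact absurd hz (riemannZeta_ne_zero_of_one_le_re (by simpa using h))
  · have := RH (s + 1) (by simp; linarith) (by simp; linarith) hz
    simp at this; linarith

lemma liF_zeros_finite (n : ℕ) (r : ℝ) : (closedBall (n : ℂ) r ∩ {z | liF z = 0}).Finite := by
  have han : AnalyticOnNhd ℂ liF Set.univ := fun z _ => liF_diff.analyticAt z
  have hc := han.preimage_zero_mem_codiscrete (x := 0) (by rw [liF_zero]; exact one_ne_zero)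
  by_contra hinf
  obtain ⟨x, hx, hacc⟩ := Set.Infinite.exists_accPt_of_subset_isCompact hinf
    (isCompact_closedBall (n : ℂ) r) Set.inter_subset_left
  rcases (liF_diff.analyticAt x).eventually_eq_zero_or_eventually_ne_zero with h | h
  · have := han.eqOn_zero_of_preconnected_of_eventuallyEq_zero isPreconnected_univ
      (Set.mem_univ x) h
    have := this (Set.mem_univ 0)
    rw [liF_zero] at this
    exact one_ne_zero this
  · rw [accPt_iff_frequently_nhdsNE] at hacc
    exact (hacc.and_eventually h).exists.elim fun z hz => hz.2 hz.1.2

lemma liP_liF (RH : ∀ s : ℂ, 0 < s.re → s.re < 1 → riemannZeta s = 0 → s.re = 1 / 2)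
    {n : ℕ} (hn : 2 ≤ n) : ∃ R : ℝ, n + 0.7 < R ∧ R < n + 0.8 ∧ liP n R (40 * n) liF := by
  have hfin := liF_zeros_finite n (n + 0.8)
  obtain ⟨R, hR, hRn⟩ : ∃ R ∈ Set.Ioo ((n : ℝ) + 0.7) (n + 0.8),
      R ∉ (fun z : ℂ => ‖z - n‖) '' (closedBall (n : ℂ) (n + 0.8) ∩ {z | liF z = 0}) := by
    have hinf : (Set.Ioo ((n : ℝ) + 0.7) (n + 0.8)).Infinite := Set.Ioo_infinite (by linarith)
    exact hinf.exists_notMem_finite (hfin.image _)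
  have hnR : (n : ℝ) < R := by linarith [hR.1]
  refine ⟨R, hR.1, hR.2, ?_⟩
  have hfin2 := liF_zeros_finite n R
  refine liP_factor (by omega) hnR hfin2.toFinset liF liF_diff ?_ ?_ ⟨0, by simp [liF_zero]⟩
  · intro ρ hρ
    obtain ⟨h1, h2⟩ := hfin2.mem_toFinset.mp hρ
    rw [mem_closedBall, dist_eq_norm] at h1
    have hne : ‖ρ - n‖ ≠ R := by
      intro h
      exact hRn ⟨ρ, ⟨by rw [mem_closedBall, dist_eq_norm]; linarith [hR.2], h2⟩, h⟩
    have hre : -1 < ρ.re := by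
      have := (Complex.abs_re_le_norm (ρ - n)).trans h1
      simp at this
      have := (abs_le.mp this).1
      linarith [hR.2]
    exact liP_zero hn hR.1 hR.2 (liF_zero_re RH hre h2) (lt_of_le_of_ne h1 hne)
  · intro z hz h0
    exact hfin2.mem_toFinset.mpr ⟨hz, h0⟩

end Factor
section Estimates

open Metric

lemma norm_circleAverage_le_li {f : ℂ → ℂ} {c : ℂ} {R : ℝ} :
    ‖Real.circleAverage f c R‖ ≤ Real.circleAverage (fun p => ‖f p‖) c R := by
  rw [Real.circleAverage, Real.circleAverage, norm_smul, smul_eq_mul, Real.norm_eq_abs,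
    abs_of_pos (inv_pos.2 Real.two_pi_pos)]
  refine mul_le_mul_of_nonneg_left ?_ (inv_pos.2 Real.two_pi_pos).le
  exact intervalIntegral.norm_integral_le_integral_norm Real.two_pi_pos.le

lemma sphere_re_ge {n : ℕ} {R : ℝ} {p : ℂ} (hp : p ∈ sphere (n : ℂ) R) : 0 ≤ (p - n).re + R := by
  rw [mem_sphere, dist_eq_norm] at hp
  have := (abs_le.mp (Complex.abs_re_le_norm (p - n))).1
  linarith

lemma inv_avg_continuousOn (n : ℕ) (R : ℝ) :
    ContinuousOn (fun p : ℂ => 1 / (1 + ((p - n).re + R))) (sphere (n : ℂ) R) := by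
  refine ContinuousOn.div continuousOn_const ?_ ?_
  · exact (continuous_const.add ((Complex.continuous_re.comp
      (continuous_id.sub continuous_const)).add continuous_const)).continuousOn
  · intro p hp
    have := sphere_re_ge hp
    positivity

lemma avg_inv_le {n : ℕ} {R : ℝ} (hR : 1 < R) :
    Real.circleAverage (fun p : ℂ => 1 / (1 + ((p - n).re + R))) (n : ℂ) R ≤ 2 / Real.sqrt R := by
  have hR0 : 0 < R := by linarith
  set r := Real.sqrt R with hr
  have hr0 : 0 < r := Real.sqrt_pos.mpr hR0
  have hrr : r ^ 2 = R := Real.sq_sqrt hR0.le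
  have hr1 : 1 < r := by nlinarith
  set x := R - r with hx
  have hx0 : 0 < x := by nlinarith
  have hxR : x < R := by linarith
  set w : ℂ := n - x with hw
  have hwn : ‖w - n‖ = x := by
    rw [hw, show (n : ℂ) - x - n = ((-x : ℝ) : ℂ) by push_cast; ring, Complex.norm_real,
      Real.norm_eq_abs, abs_neg, abs_of_pos hx0]
  have hwb : w ∈ ball (n : ℂ) R := by rw [mem_ball, dist_eq_norm, hwn]; exact hxR
  have hP := DiffContOnCl.circleAverage_poissonKernel_smul' (f := fun _ : ℂ => (1 : ℂ))
    (c := (n : ℂ)) (R := R) diffContOnCl_const hwb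
  have hden : ∀ p ∈ sphere (n : ℂ) R, ‖(p - n) - (w - n)‖ ^ 2 = R + 2 * x * ((p - n).re + R) := by
    intro p hp
    rw [mem_sphere, dist_eq_norm] at hp
    have h1 : ‖p - n‖ ^ 2 = (p - n).re ^ 2 + (p - n).im ^ 2 := by
      rw [← Complex.normSq_eq_norm_sq, Complex.normSq_apply]; ring
    rw [hp] at h1
    have h2 : (p - n) - (w - n) = (p - n) + (x : ℂ) := by rw [hw]; ring
    rw [h2, ← Complex.normSq_eq_norm_sq, Complex.normSq_apply]
    simp only [Complex.add_re, Complex.add_im, Complex.ofReal_re, Complex.ofReal_im, add_zero]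
    have hxx : x = R - r := hx
    nlinarith
  set k : ℂ → ℝ := fun z => (‖z - n‖ ^ 2 - ‖w - n‖ ^ 2) / ‖(z - n) - (w - n)‖ ^ 2 with hk
  have hkc : ContinuousOn k (sphere (n : ℂ) R) := by
    refine ContinuousOn.div (by fun_prop) (by fun_prop) ?_
    intro p hp
    rw [hden p hp]
    have := sphere_re_ge hp
    positivity
  have hki : CircleIntegrable (fun z => k z • (1 : ℂ)) (n : ℂ) R :=
    ContinuousOn.circleIntegrable hR0.le (hkc.smul continuousOn_const)
  have hc := ContinuousLinearMap.circleAverage_comp_comm Complex.reCLM hki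
  rw [hP] at hc
  have hk1 : Real.circleAverage k (n : ℂ) R = 1 := by
    rw [← Complex.one_re, ← Complex.reCLM_apply, ← hc]
    congr 1
    ext z
    simp
  calc Real.circleAverage (fun p : ℂ => 1 / (1 + ((p - n).re + R))) (n : ℂ) R
      ≤ Real.circleAverage (fun p : ℂ => (2 / r) • k p) (n : ℂ) R := by
        apply Real.circleAverage_mono
        · exact ContinuousOn.circleIntegrable hR0.le (inv_avg_continuousOn n R)
        · exact ContinuousOn.circleIntegrable hR0.le (hkc.const_smul (2 / r))
        · rw [abs_of_pos hR0]
          intro p hp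
          have hy := sphere_re_ge hp
          have hd := hden p hp
          rw [mem_sphere, dist_eq_norm] at hp
          simp only [hk, smul_eq_mul]
          rw [hd, hp, hwn]
          generalize (p - n).re + R = y at *
          rw [div_mul_div_comm, div_le_div_iff₀ (by positivity) (by positivity)]
          have e1 : R ^ 2 - x ^ 2 = r * (R + x) := by rw [hx]; ring
          rw [e1]
          have e2 : R + 2 * x * y ≤ 2 * R * (1 + y) := by nlinarith
          have e3 : r * (R + 2 * x * y) ≤ r * (2 * R * (1 + y)) := by gcongr
          have e4 : 0 ≤ 2 * (r * x) * (1 + y) := by positivity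
          nlinarith
    _ = 2 / r := by rw [Real.circleAverage_fun_smul, hk1, smul_eq_mul, mul_one]

lemma liK_bound {n : ℕ} (hn : 2 ≤ n) {R : ℝ} (h7 : n + 0.7 < R) (h8 : R < n + 0.8) {p : ℂ}
    (hp : p ∈ sphere (n : ℂ) R) : ‖2 * ((p - n) * liK n p)‖ ≤ 60 * n := by
  have hn2 : (2 : ℝ) ≤ n := by exact_mod_cast hn
  have hp0 := sphere_ne_zero_li (by linarith) p hp
  rw [mem_sphere, dist_eq_norm] at hp
  have h1 : ‖p - n‖ ^ 2 = (p.re - n) ^ 2 + p.im ^ 2 := by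
    rw [← Complex.normSq_eq_norm_sq, Complex.normSq_apply]; simp; ring
  rw [hp] at h1
  set q := ‖p‖ ^ 2 with hq
  have hq0 : 0 < q := by positivity
  have h2 : q = p.re ^ 2 + p.im ^ 2 := by
    rw [hq, ← Complex.normSq_eq_norm_sq, Complex.normSq_apply]; ring
  have h3 : ‖p + 1‖ ^ 2 = q + (2 * p.re + 1) := by
    rw [h2, ← Complex.normSq_eq_norm_sq, Complex.normSq_apply]; simp; ring
  have h4 : n * (2 * p.re + 1) ≤ q - 0.4 * n := by nlinarith
  have h5 : ‖1 + 1 / p‖ ^ 2 ≤ Real.exp (1 / n - 0.4 / q) := by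
    have : 1 + 1 / p = (p + 1) / p := by field_simp
    rw [this, norm_div, div_pow, h3, ← hq]
    refine le_trans ?_ (Real.add_one_le_exp _)
    rw [div_le_iff₀ hq0]
    have : (1 / (n : ℝ) - 0.4 / q + 1) * q = q + (q - 0.4 * n) / n := by field_simp; ring
    rw [this]
    have : 2 * p.re + 1 ≤ (q - 0.4 * n) / n := by
      rw [le_div_iff₀ (by linarith)]; linarith
    linarith
  set E := ‖1 + 1 / p‖ ^ (n - 1) with hE
  have hE0 : 0 ≤ E := by positivity
  have hcast : ((n - 1 : ℕ) : ℝ) = n - 1 := by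
    rw [Nat.cast_sub (by omega)]; simp
  have h6 : E ^ 2 ≤ Real.exp (1 / 2 - 0.1 * (n / q)) ^ 2 := by
    calc E ^ 2 = (‖1 + 1 / p‖ ^ 2) ^ (n - 1) := by rw [hE, ← pow_mul, ← pow_mul, mul_comm]
      _ ≤ Real.exp (1 / n - 0.4 / q) ^ (n - 1) := by gcongr
      _ = Real.exp ((n - 1) * (1 / n - 0.4 / q)) := by rw [← Real.exp_nat_mul, hcast]
      _ ≤ Real.exp (2 * (1 / 2 - 0.1 * (n / q))) := by
        apply Real.exp_le_exp.mpr
        have a1 : ((n : ℝ) - 1) * (1 / n) ≤ 1 := by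
          rw [mul_one_div, div_le_one (by linarith)]; linarith
        have a2 : 0.2 * (n / q) ≤ ((n : ℝ) - 1) * (0.4 / q) := by
          rw [← mul_div_assoc, ← mul_div_assoc]
          refine div_le_div_of_nonneg_right ?_ hq0.le
          linarith
        linarith
      _ = _ := by rw [two_mul, Real.exp_add, sq]
  have h7' : E ≤ Real.exp (1 / 2 - 0.1 * (n / q)) :=
    (pow_le_pow_iff_left₀ hE0 (Real.exp_pos _).le two_ne_zero).mp h6
  have h9 : (n / q) * E ≤ 20 := by
    have hx : 0 < (n : ℝ) / q := by positivity
    have b1 : 0.1 * (n / q) ≤ Real.exp (0.1 * (n / q)) := by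
      linarith [Real.add_one_le_exp (0.1 * ((n : ℝ) / q))]
    have b2 : Real.exp (1 / 2) ≤ 2 := by
      have := Real.exp_one_lt_d9
      have e : Real.exp (1 / 2) ^ 2 = Real.exp 1 := by rw [← Real.exp_nat_mul]; norm_num
      nlinarith [Real.exp_pos (1 / 2)]
    rw [Real.exp_sub] at h7'
    calc (n / q) * E ≤ (n / q) * (Real.exp (1 / 2) / Real.exp (0.1 * (n / q))) := by gcongr
      _ ≤ (n / q) * (2 / (0.1 * (n / q))) := by gcongr
      _ = 20 := by field_simp; norm_num
  have hK : ‖liK n p‖ ≤ 20 := by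
    unfold liK
    rw [norm_mul, norm_div, norm_pow, norm_pow, Complex.norm_natCast]
    exact h9
  rw [norm_mul, norm_mul, hp, Complex.norm_ofNat]
  have : R * ‖liK n p‖ ≤ (1.4 * n) * 20 := by
    apply mul_le_mul _ hK (norm_nonneg _) (by positivity)
    linarith
  linarith

lemma one_le_norm_zeta_nat {n : ℕ} (hn : 1 ≤ n) : 1 ≤ ‖riemannZeta (n + 1)‖ := by
  have h := zeta_nat_eq_tsum_of_gt_one (k := n + 1) (by omega)
  have hr : riemannZeta (n + 1) = ((∑' m : ℕ, 1 / (m : ℝ) ^ (n + 1) : ℝ) : ℂ) := by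
    have : ((n : ℂ) + 1) = ((n + 1 : ℕ) : ℂ) := by push_cast; rfl
    rw [this, h]
    push_cast
    rfl
  have hs : Summable (fun m : ℕ => 1 / (m : ℝ) ^ (n + 1)) :=
    Real.summable_one_div_nat_pow.mpr (by omega)
  have h1 := hs.le_tsum 1 (fun j _ => by positivity)
  rw [hr, Complex.norm_real]
  refine le_trans ?_ (le_abs_self _)
  simpa using h1

lemma liL_logDeriv_bound {n : ℕ} (hn : 2 ≤ n) {R : ℝ} (h7 : n + 0.7 < R) (h8 : R < n + 0.8)
    (hP : liP n R (40 * n) liF) {V : ℝ} (hV : 0 ≤ V)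
    (hu : ∀ p ∈ sphere (n : ℂ) R, Real.log ‖riemannZeta (p + 1)‖ ≤ V * (1 / (1 + ((p - n).re + R)))) :
    ‖liL n (logDeriv liF)‖ ≤ 320 * V * Real.sqrt n + 100 := by
  have hn1 : 1 ≤ n := by omega
  have hn2 : (2 : ℝ) ≤ n := by exact_mod_cast hn
  have hR : (n : ℝ) < R := by linarith
  have hR0 : 0 < R := by linarith
  have hn0 : (0 : ℝ) < n := by linarith
  have hne := sphere_ne_zero_li hR
  obtain ⟨hd, hF0, hFn, hFs, hb⟩ := hP
  set u : ℂ → ℝ := fun p => Real.log ‖liF p‖ - Real.log ‖p‖ with hudef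
  set W : ℂ → ℝ := fun p => V * (1 / (1 + ((p - n).re + R))) with hW
  have cF := logNorm_continuousOn hd hFs
  have cp : ContinuousOn (fun p : ℂ => Real.log ‖p‖) (sphere (n : ℂ) R) :=
    logNorm_continuousOn (ψ := fun p => p) differentiable_id hne
  have cu : ContinuousOn u (sphere (n : ℂ) R) := cF.sub cp
  have cW : ContinuousOn W (sphere (n : ℂ) R) := continuousOn_const.mul (inv_avg_continuousOn n R)
  have iF := cF.circleIntegrable hR0.le
  have ip := cp.circleIntegrable hR0.le
  have iu := cu.circleIntegrable hR0.le
  have iW := cW.circleIntegrable hR0.le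
  have huW : ∀ p ∈ sphere (n : ℂ) R, u p ≤ W p := by
    intro p hp
    refine le_trans (le_of_eq ?_) (hu p hp)
    have := hFs p hp
    rw [liF_eq (hne p hp)] at this
    simp only [hudef]
    rw [liF_eq (hne p hp), norm_mul, Real.log_mul (norm_ne_zero_iff.mpr (hne p hp))
      (norm_ne_zero_iff.mpr (mul_ne_zero_iff.mp this).2)]
    ring
  have hW0 : ∀ p ∈ sphere (n : ℂ) R, 0 ≤ W p := by
    intro p hp
    have := sphere_re_ge hp
    simp only [hW]
    positivity
  have avp : Real.circleAverage (fun p : ℂ => Real.log ‖p‖) (n : ℂ) R = Real.log R := by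
    have := circleAverage_log_norm_sub_const_of_mem_closedBall (a := 0) (c := (n : ℂ)) (R := R)
      (by rw [abs_of_pos hR0]; exact ball_subset_closedBall (zero_mem_ball_li hR))
    simpa using this
  have avu : Real.circleAverage u (n : ℂ) R =
      Real.circleAverage (fun p => Real.log ‖liF p‖) (n : ℂ) R - Real.log R := by
    rw [← avp, ← Real.circleAverage_fun_sub iF ip]
  have avW : Real.circleAverage W (n : ℂ) R ≤ V * (2 / Real.sqrt R) := by
    have : Real.circleAverage W (n : ℂ) R = V * Real.circleAverage
        (fun p : ℂ => 1 / (1 + ((p - n).re + R))) (n : ℂ) R := by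
      rw [← smul_eq_mul, ← Real.circleAverage_fun_smul]; rfl
    rw [this]
    exact mul_le_mul_of_nonneg_left (avg_inv_le (by linarith)) hV
  have hnC : (n : ℂ) ≠ 0 := by exact_mod_cast hn0.ne'
  have hFlow : Real.log n ≤ Real.log ‖liF n‖ := by
    apply Real.log_le_log hn0
    rw [liF_eq hnC, norm_mul, Complex.norm_natCast]
    exact le_mul_of_one_le_right hn0.le (one_le_norm_zeta_nat hn1)
  have hlogR : Real.log R - Real.log n ≤ 0.8 / n := by
    rw [← Real.log_div hR0.ne' hn0.ne']
    refine (Real.log_le_sub_one_of_pos (div_pos hR0 hn0)).trans ?_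
    rw [div_sub_one hn0.ne']
    gcongr
    linarith
  set J := Real.circleAverage (fun p => Real.log ‖liF p‖) (n : ℂ) R - Real.log ‖liF n‖ with hJ
  have hJ0 : 0 ≤ J := by
    have : 0 ≤ 40 * (n : ℝ) * J := (norm_nonneg _).trans hb
    by_contra h
    push Not at h
    nlinarith
  have avuW : Real.circleAverage u (n : ℂ) R ≤ Real.circleAverage W (n : ℂ) R :=
    Real.circleAverage_mono iu iW (by rw [abs_of_pos hR0]; exact huW)
  have hJle : J ≤ V * (2 / Real.sqrt R) + 0.8 / n := by linarith
  have hIu : ‖liI n R u‖ ≤ 60 * n * (2 * (V * (2 / Real.sqrt R)) + 0.8 / n) := by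
    have i0 : CircleIntegrable (fun p => 2 * W p - u p) (n : ℂ) R :=
      ContinuousOn.circleIntegrable hR0.le ((continuousOn_const.mul cW).sub cu)
    have e0 : Real.circleAverage (fun p => 2 * W p - u p) (n : ℂ) R =
        2 * Real.circleAverage W (n : ℂ) R - Real.circleAverage u (n : ℂ) R := by
      rw [Real.circleAverage_fun_sub (f₁ := fun p => 2 * W p)
        (ContinuousOn.circleIntegrable hR0.le (continuousOn_const.mul cW)) iu]
      congr 1
      rw [← smul_eq_mul, ← Real.circleAverage_fun_smul]; rfl
    calc ‖liI n R u‖ ≤ Real.circleAverage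
          (fun p => ‖(u p : ℂ) * (2 * ((p - n) * liK n p))‖) (n : ℂ) R := norm_circleAverage_le_li
      _ ≤ Real.circleAverage (fun p => (60 * (n : ℝ)) • (2 * W p - u p)) (n : ℂ) R := by
        have iN : CircleIntegrable (fun p => ‖(u p : ℂ) * (2 * ((p - n) * liK n p))‖) (n : ℂ) R :=
          (liI_int hR cu).norm
        have cD : ContinuousOn (fun p => 2 * W p - u p) (sphere (n : ℂ) R) :=
          (continuousOn_const.mul cW).sub cu
        apply Real.circleAverage_mono iN
        · exact ContinuousOn.circleIntegrable hR0.le (cD.const_smul (60 * (n : ℝ)))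
        · rw [abs_of_pos hR0]
          intro p hp
          rw [norm_mul, Complex.norm_real, Real.norm_eq_abs, smul_eq_mul, mul_comm]
          have a1 : |u p| ≤ 2 * W p - u p := by
            rw [abs_le]
            constructor
            · linarith [hW0 p hp]
            · linarith [huW p hp]
          exact mul_le_mul (liK_bound hn h7 h8 hp) a1 (abs_nonneg _) (by positivity)
      _ = 60 * n * (2 * Real.circleAverage W (n : ℂ) R - Real.circleAverage u (n : ℂ) R) := by
        rw [Real.circleAverage_fun_smul, e0, smul_eq_mul]
      _ ≤ _ := by
        gcongr
        linarith
  have hIp : ‖liI n R (fun p => Real.log ‖p‖)‖ ≤ 2 := by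
    have h0 : ‖(0 : ℂ) - n‖ = n := by simp
    have := liI_reflect hn1 hR (a := 0) (by rw [h0]; exact hR) hnC.symm
    simp only [sub_zero] at this
    rw [this]
    refine (norm_sub_le _ _).trans ?_
    rw [norm_one, norm_pow]
    have hre : ((n : ℂ) + ((R ^ 2 / ‖(0 : ℂ) - n‖ ^ 2 : ℝ) : ℂ) * (0 - n)).re ≤ -1 / 2 := by
      rw [h0, Complex.add_re, Complex.re_ofReal_mul]
      simp only [Complex.natCast_re, zero_sub, Complex.neg_re]
      have : R ^ 2 / (n : ℝ) ^ 2 * -(n : ℝ) = - (R ^ 2 / n) := by field_simp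
      rw [this]
      have : (n : ℝ) + 1 / 2 ≤ R ^ 2 / n := by
        rw [le_div_iff₀ hn0]; nlinarith
      linarith
    have := pow_le_one₀ (n := n) (norm_nonneg _) (norm_one_add_inv_le hre)
    linarith
  have hIF : liI n R (fun p => Real.log ‖liF p‖) = liI n R u + liI n R (fun p => Real.log ‖p‖) := by
    rw [← liI_add hR cu cp]
    congr 1
    ext p
    simp [hudef]
  have hsq : n * (V * (2 / Real.sqrt R)) ≤ 2 * V * Real.sqrt n := by
    have hs : Real.sqrt n ≤ Real.sqrt R := Real.sqrt_le_sqrt hR.le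
    have hs0 : 0 < Real.sqrt n := Real.sqrt_pos.mpr hn0
    calc n * (V * (2 / Real.sqrt R)) ≤ n * (V * (2 / Real.sqrt n)) := by gcongr
      _ = 2 * V * (n / Real.sqrt n) := by ring
      _ = _ := by rw [Real.div_sqrt]
  have hfin : ‖liL n (logDeriv liF)‖ ≤ 40 * n * J + (‖liI n R u‖ + ‖liI n R (fun p => Real.log ‖p‖)‖) := by
    have e : liL n (logDeriv liF) = (liL n (logDeriv liF) - liI n R (fun p => Real.log ‖liF p‖)) +
      (liI n R u + liI n R (fun p => Real.log ‖p‖)) := by rw [hIF]; ring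
    calc _ ≤ ‖liL n (logDeriv liF) - liI n R (fun p => Real.log ‖liF p‖)‖ +
          ‖liI n R u + liI n R (fun p => Real.log ‖p‖)‖ := by
            conv_lhs => rw [e]
            exact norm_add_le _ _
      _ ≤ _ := add_le_add hb (norm_add_le _ _)
  have hJ2 : 40 * n * J ≤ 40 * n * (V * (2 / Real.sqrt R) + 0.8 / n) := by gcongr
  have e8 : (n : ℝ) * (0.8 / n) = 0.8 := by field_simp
  have q1 : 40 * n * (V * (2 / Real.sqrt R) + 0.8 / n) = 40 * (n * (V * (2 / Real.sqrt R))) + 32 := by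
    rw [mul_assoc, mul_add, e8]; ring
  have q2 : 60 * n * (2 * (V * (2 / Real.sqrt R)) + 0.8 / n) = 120 * (n * (V * (2 / Real.sqrt R))) + 48 := by
    rw [mul_assoc, mul_add, e8]; ring
  rw [q1] at hJ2
  rw [q2] at hIu
  linarith

lemma log_zeta_bound : ∃ B : ℝ, 0 < B ∧ ∀ n : ℕ, 2 ≤ n → ∀ R : ℝ, n + 0.7 < R → R < n + 0.8 →
    ∀ p ∈ sphere (n : ℂ) R, riemannZeta (p + 1) ≠ 0 →
      Real.log ‖riemannZeta (p + 1)‖ ≤ B * Real.log n * (1 / (1 + ((p - n).re + R))) := by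
  obtain ⟨C, hC1, hC⟩ := zeta1_bound
  have hl2 : 0.6 < Real.log 2 := by linarith [Real.log_two_gt_d9]
  have hLC : 0 ≤ Real.log (32 * C) := Real.log_nonneg (by linarith)
  refine ⟨5 + 3 * (2 * Real.log (32 * C) + 2), by positivity, ?_⟩
  intro n hn R h7 h8 p hp hz
  have hn2 : (2 : ℝ) ≤ n := by exact_mod_cast hn
  have hln : Real.log 2 ≤ Real.log n := Real.log_le_log (by norm_num) hn2
  have hp0 := sphere_ne_zero_li (by linarith) p hp
  have hy := sphere_re_ge hp
  have hyre : (p - n).re + R = p.re + (R - n) := by simp; ring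
  rw [hyre] at hy ⊢
  rw [mul_one_div, le_div_iff₀ (by linarith)]
  have hzpos : 0 < ‖riemannZeta (p + 1)‖ := norm_pos_iff.mpr hz
  by_cases hσ : 1 ≤ p.re
  · have h1 := zeta_norm_le_of_one_lt (p + 1) (by simp; linarith)
    simp only [Complex.add_re, Complex.one_re, add_sub_cancel_right] at h1
    have h2 : Real.log ‖riemannZeta (p + 1)‖ ≤ 1 / p.re := by
      refine (Real.log_le_sub_one_of_pos hzpos).trans (by linarith)
    calc Real.log ‖riemannZeta (p + 1)‖ * (1 + (p.re + (R - n))) ≤ (1 / p.re) * (2.8 * p.re) := by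
          apply mul_le_mul h2 (by linarith) (by linarith) (by positivity)
      _ = 2.8 := by field_simp
      _ ≤ 5 * Real.log n := by linarith
      _ ≤ _ := by
        have : 0 ≤ Real.log n := by linarith
        apply mul_le_mul_of_nonneg_right _ this
        linarith
  · push Not at hσ
    have hpn := hp
    rw [mem_sphere, dist_eq_norm] at hpn
    have hpl : 0.7 ≤ ‖p‖ := by
      have := norm_sub_le p (n : ℂ)
      rw [hpn, Complex.norm_natCast] at this
      linarith
    have hpu : ‖p + 1‖ ≤ 2 * n + 1.8 := by
      have e : p + 1 = (p - n) + ((n + 1 : ℕ) : ℂ) := by push_cast; ring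
      rw [e]
      refine (norm_add_le _ _).trans ?_
      rw [hpn, Complex.norm_natCast]
      push_cast
      linarith
    have hb := hC (p + 1) (by simp; linarith)
    have heq : liF p = p * riemannZeta (p + 1) := liF_eq hp0
    have hb2 : ‖p‖ * ‖riemannZeta (p + 1)‖ ≤ C * (4 * n) ^ 2 := by
      rw [← norm_mul, ← heq]
      refine hb.trans ?_
      gcongr
      linarith
    have hb3 : ‖riemannZeta (p + 1)‖ ≤ 32 * C * n ^ 2 := by
      have : 0.7 * ‖riemannZeta (p + 1)‖ ≤ C * (4 * n) ^ 2 :=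
        (mul_le_mul_of_nonneg_right hpl hzpos.le).trans hb2
      have hx : 0 ≤ C * (n : ℝ) ^ 2 := by positivity
      nlinarith
    have hlog : Real.log ‖riemannZeta (p + 1)‖ ≤ (2 * Real.log (32 * C) + 2) * Real.log n := by
      refine (Real.log_le_log hzpos hb3).trans ?_
      rw [Real.log_mul (by positivity) (by positivity), Real.log_pow]
      push_cast
      nlinarith
    have hX : 0 ≤ (2 * Real.log (32 * C) + 2) * Real.log n := by
      apply mul_nonneg <;> linarith
    calc Real.log ‖riemannZeta (p + 1)‖ * (1 + (p.re + (R - n)))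
        ≤ ((2 * Real.log (32 * C) + 2) * Real.log n) * (1 + (p.re + (R - n))) :=
          mul_le_mul_of_nonneg_right hlog (by linarith)
      _ ≤ ((2 * Real.log (32 * C) + 2) * Real.log n) * 3 :=
          mul_le_mul_of_nonneg_left (by linarith) hX
      _ ≤ _ := by nlinarith

lemma g_eventually {g : ℂ → ℂ} (hg : AnalyticOnNhd ℂ g (Metric.ball (0 : ℂ) (1 / 2)))
    (hgeq : ∀ s : ℂ, 0 < ‖s‖ → ‖s‖ < 1 / 2 →
      g s = -deriv riemannZeta (s + 1) / riemannZeta (s + 1) - 1 / s) :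
    g =ᶠ[nhds 0] -logDeriv liF := by
  have a1 : AnalyticAt ℂ g 0 := hg 0 (by simp)
  have a2 : AnalyticAt ℂ (-logDeriv liF) 0 :=
    ((liF_diff.analyticAt 0).deriv.div (liF_diff.analyticAt 0) (by simp [liF_zero])).neg
  refine (a1.frequently_eq_iff_eventually_eq a2).mp (Filter.Eventually.frequently ?_)
  have n1 : ∀ᶠ s in nhds (0 : ℂ), liF s ≠ 0 :=
    liF_diff.continuous.continuousAt.eventually_ne (by simp [liF_zero])
  have n2 : ∀ᶠ s in nhds (0 : ℂ), s ∈ ball (0 : ℂ) (1 / 2) :=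
    isOpen_ball.mem_nhds (by simp)
  filter_upwards [nhdsWithin_le_nhds n1, nhdsWithin_le_nhds n2, self_mem_nhdsWithin] with s h1 h2 h3
  have hs0 : s ≠ 0 := h3
  rw [mem_ball, dist_zero_right] at h2
  rw [hgeq s (norm_pos_iff.mpr hs0) h2]
  rw [liF_eq hs0] at h1
  have hz := (mul_ne_zero_iff.mp h1).2
  have hd : HasDerivAt riemannZeta (deriv riemannZeta (s + 1)) (s + 1) :=
    (differentiableAt_riemannZeta (by simpa using hs0)).hasDerivAt
  have hd2 : HasDerivAt (fun w => w * riemannZeta (w + 1))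
      (1 * riemannZeta (s + 1) + s * deriv riemannZeta (s + 1)) s :=
    (hasDerivAt_id s).mul (hd.comp_add_const s 1)
  have hev : liF =ᶠ[nhds s] fun w => w * riemannZeta (w + 1) := by
    filter_upwards [isOpen_ne.mem_nhds hs0] with w hw
    exact liF_eq hw
  have hd3 := hev.deriv_eq.trans hd2.deriv
  rw [Pi.neg_apply, logDeriv_apply, hd3, liF_eq hs0]
  field_simp
  ring

end Estimates

theorem li_stieltjes_sum_bound
    (RH : ∀ s : ℂ, 0 < s.re → s.re < 1 → riemannZeta s = 0 → s.re = 1 / 2)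
    (g : ℂ → ℂ) (hg : AnalyticOnNhd ℂ g (Metric.ball (0 : ℂ) (1 / 2)))
    (hgeq : ∀ s : ℂ, 0 < ‖s‖ → ‖s‖ < 1 / 2 →
      g s = -deriv riemannZeta (s + 1) / riemannZeta (s + 1) - 1 / s)
    (η : ℕ → ℂ) (hη : ∀ l : ℕ, η l = iteratedDeriv l g 0 / (l.factorial : ℂ)) :
    ∃ C : ℝ, 0 < C ∧ ∀ n : ℕ, 2 ≤ n →
      ‖∑ l ∈ Finset.Icc 1 n, (n.choose l : ℂ) * η (l - 1)‖ ≤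
        C * Real.sqrt n * Real.log n := by
  obtain ⟨B, hB0, hB⟩ := log_zeta_bound
  refine ⟨320 * B + 200, by positivity, ?_⟩
  intro n hn
  have hn2 : (2 : ℝ) ≤ n := by exact_mod_cast hn
  obtain ⟨R, h7, h8, hP⟩ := liP_liF RH hn
  have hl2 : 0.6 < Real.log 2 := by linarith [Real.log_two_gt_d9]
  have hln : Real.log 2 ≤ Real.log n := Real.log_le_log (by norm_num) hn2
  have hs : 1 ≤ Real.sqrt n := Real.one_le_sqrt.mpr (by linarith)
  have hsum : ∑ l ∈ Finset.Icc 1 n, (n.choose l : ℂ) * η (l - 1) = - liL n (logDeriv liF) := by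
    rw [← liL_neg, ← liL_congr n (g_eventually hg hgeq)]
    unfold liL
    refine Finset.sum_congr rfl fun l _ => ?_
    rw [hη]
  rw [hsum, norm_neg]
  have hb := liL_logDeriv_bound hn h7 h8 hP (V := B * Real.log n)
    (mul_nonneg hB0.le (by linarith)) (fun p hp => by
      have h0 := hP.2.2.2.1 p hp
      rw [liF_eq (sphere_ne_zero_li (by linarith) p hp)] at h0
      exact hB n hn R h7 h8 p hp (mul_ne_zero_iff.mp h0).2)
  refine hb.trans ?_
  have : 0.5 ≤ Real.sqrt n * Real.log n := by nlinarith
  nlinarith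
end

section
/- Assume the Riemann Hypothesis. Then there exists a constant C > 0 such that for all integers n ≥ 2, | λ_n − ( (n/2) log n + ( (γ − 1)/2 − (1/2) log(2π) ) n ) | ≤ C √n log n, where λ_n is the n-th Li coefficient of the Riemann zeta function. (The asymptotic formula of Theorem 4.1 specialized to F = ζ, with d_ζ = 1, Q_ζ = π^{−1/2}, λ = 1/2, recovering Voros's asymptotic.) -/
open Complex

/-- The Riemann xi function `ξ(s) = s(s-1)π^{-s/2}Γ(s/2)ζ(s)`, written as the entire
function `s(s-1)Λ₀(s) + 1` where `Λ₀` is the completed Riemann zeta function. -/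
noncomputable def riemannXi (s : ℂ) : ℂ := s * (s - 1) * completedRiemannZeta₀ s + 1

/-- The `n`-th Li coefficient `λ_n = (1/(n-1)!) dⁿ/dsⁿ [s^{n-1} log ξ(s)]` at `s = 1`. -/
noncomputable def liCoeff (n : ℕ) : ℂ :=
  (1 / ((n - 1).factorial : ℂ)) *
    iteratedDeriv n (fun s => s ^ (n - 1) * Complex.log (riemannXi s)) 1


section LiDigamma
open Filter Topology MeasureTheory

lemma li_gammaSeq_norm_le {s : ℂ} (hs : 0 < s.re) {n : ℕ} (hn : n ≠ 0) :
    ‖GammaSeq s n‖ ≤ Real.Gamma s.re := by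
  rw [GammaSeq_eq_approx_Gamma_integral hs hn, Real.Gamma_eq_integral hs,
    intervalIntegral.integral_of_le (by positivity)]
  have hInt : IntegrableOn (fun x : ℝ => Real.exp (-x) * x ^ (s.re - 1)) (Set.Ioi 0) :=
    Real.GammaIntegral_convergent hs
  calc _ ≤ ∫ x in Set.Ioc (0:ℝ) n, Real.exp (-x) * x ^ (s.re - 1) := by
        apply norm_integral_le_of_norm_le (hInt.mono_set Set.Ioc_subset_Ioi_self)
        refine (ae_restrict_iff' measurableSet_Ioc).mpr (ae_of_all _ fun x hx => ?_)
        rw [norm_mul, norm_real, norm_cpow_eq_rpow_re_of_pos hx.1]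
        have h1 : 0 ≤ 1 - x / n := by
          rw [sub_nonneg, div_le_one (by positivity)]; exact hx.2
        rw [Real.norm_of_nonneg (pow_nonneg h1 n)]
        simp only [sub_re, one_re]
        gcongr
        · exact Real.rpow_nonneg hx.1.le _
        · exact Real.one_sub_div_pow_le_exp_neg hx.2
    _ ≤ _ := by
        apply setIntegral_mono_set hInt
        · refine (ae_restrict_iff' measurableSet_Ioi).mpr (ae_of_all _ fun x hx => ?_)
          exact mul_nonneg (Real.exp_pos _).le (Real.rpow_nonneg (le_of_lt hx) _)
        · exact Set.Ioc_subset_Ioi_self.eventuallyLE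

lemma li_gammaSeq_hasDerivAt {s : ℂ} (hs : 0 < s.re) {n : ℕ} (hn : n ≠ 0) :
    HasDerivAt (fun z => GammaSeq z n)
      (GammaSeq s n * (Complex.log n - ∑ k ∈ Finset.range (n + 1), 1 / (s + k))) s := by
  have hne : ∀ k : ℕ, s + k ≠ 0 := by
    intro k h
    have := congrArg re h
    simp at this
    have hk : (0:ℝ) ≤ k := by positivity
    linarith
  have hn' : (n : ℂ) ≠ 0 := by exact_mod_cast hn
  have h1 : HasDerivAt (fun z : ℂ => (n : ℂ) ^ z * (n.factorial : ℂ))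
      ((n : ℂ) ^ s * Complex.log n * n.factorial) s := by
    have := ((hasDerivAt_id s).const_cpow (c := (n : ℂ)) (Or.inl hn')).mul_const (n.factorial : ℂ)
    simpa using this
  have h2 : HasDerivAt (fun z : ℂ => ∏ j ∈ Finset.range (n + 1), (z + j))
      ((∏ j ∈ Finset.range (n + 1), (s + j)) * ∑ k ∈ Finset.range (n + 1), 1 / (s + k)) s := by
    have := HasDerivAt.fun_finsetProd (u := Finset.range (n + 1)) (f := fun j (z : ℂ) => z + (j : ℂ))
      (f' := fun _ => 1) (x := s) (fun i _ => (hasDerivAt_id s).add_const _)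
    convert! this using 1
    rw [Finset.mul_sum]
    refine Finset.sum_congr rfl fun k hk => ?_
    rw [← Finset.mul_prod_erase _ _ hk]
    have := hne k
    simp
    field_simp
  have hP : (∏ j ∈ Finset.range (n + 1), (s + j)) ≠ 0 :=
    Finset.prod_ne_zero_iff.mpr fun k _ => hne k
  have := h1.div h2 hP
  unfold GammaSeq
  convert! this using 1
  field_simp

lemma li_digamma_tendsto {s : ℂ} (hs : 0 < s.re) :
    Tendsto (fun n : ℕ => Complex.log n - ∑ k ∈ Finset.range (n + 1), 1 / (s + k)) atTop
      (𝓝 (digamma s)) := by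
  set r : ℝ := s.re / 2 with hr
  have hr0 : 0 < r := by positivity
  have hre : ∀ z ∈ Metric.closedBall s r, r ≤ z.re ∧ z.re ≤ 3 * r := by
    intro z hz
    have h1 := abs_re_le_norm (z - s)
    rw [Metric.mem_closedBall, dist_eq] at hz
    have h2 := abs_le.mp (h1.trans hz)
    simp at h2
    constructor <;> linarith [h2.1, h2.2]
  have hG : ∀ z : ℂ, 0 < z.re → DifferentiableAt ℂ Gamma z := fun z hz =>
    differentiableAt_Gamma z (by
      intro m h; rw [h] at hz; simp at hz
      have : (0:ℝ) ≤ m := by positivity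
      linarith)
  obtain ⟨B, hB⟩ : ∃ B, ∀ x ∈ Set.Icc r (3 * r), ‖Real.Gamma x‖ ≤ B := by
    apply isCompact_Icc.exists_bound_of_continuousOn
    intro x hx
    refine (Real.differentiableAt_Gamma ?_).continuousAt.continuousWithinAt
    intro m h; rw [h] at hx
    have : (0:ℝ) ≤ m := by positivity
    linarith [hx.1]
  have key : Tendsto (fun n : ℕ => deriv (fun z => GammaSeq z n) s) atTop
      (𝓝 (deriv Gamma s)) := by
    have e1 : ∀ n : ℕ, n ≠ 0 → deriv (fun z => GammaSeq z n) s =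
        (2 * Real.pi * I : ℂ)⁻¹ • ∮ z in C(s, r), (z - s) ^ (-2 : ℤ) • GammaSeq z n := by
      intro n hn
      have := DifferentiableOn.deriv_eq_smul_circleIntegral (f := fun z => GammaSeq z n) hr0
        (c := s) (fun z hz =>
        (li_gammaSeq_hasDerivAt (by linarith [(hre z hz).1]) hn).differentiableAt.differentiableWithinAt)
      rw [eq_inv_smul_iff₀ (by simp [Real.pi_ne_zero])]
      simpa using this.symm
    have e2 : deriv Gamma s =
        (2 * Real.pi * I : ℂ)⁻¹ • ∮ z in C(s, r), (z - s) ^ (-2 : ℤ) • Gamma z := by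
      have := DifferentiableOn.deriv_eq_smul_circleIntegral (f := Gamma) hr0
        (c := s) (fun z hz =>
        (hG z (by linarith [(hre z hz).1])).differentiableWithinAt)
      rw [eq_inv_smul_iff₀ (by simp [Real.pi_ne_zero])]
      simpa using this.symm
    rw [e2]
    refine Tendsto.congr' (f₁ := fun n : ℕ => (2 * Real.pi * I : ℂ)⁻¹ • ∮ z in C(s, r), (z - s) ^ (-2 : ℤ) • GammaSeq z n) ?_ ?_
    · filter_upwards [eventually_ne_atTop 0] with n hn using (e1 n hn).symm
    apply Tendsto.const_smul
    unfold circleIntegral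
    have hmem : ∀ θ, circleMap s r θ ∈ Metric.closedBall s r := fun θ =>
      circleMap_mem_closedBall s hr0.le θ
    apply intervalIntegral.tendsto_integral_filter_of_dominated_convergence
      (fun _ => r * (r ^ (-2:ℤ) * B))
    · filter_upwards [eventually_ne_atTop 0] with n hn
      apply Continuous.aestronglyMeasurable
      have c1 : Continuous fun θ => GammaSeq (circleMap s r θ) n := by
        rw [continuous_iff_continuousAt]
        intro θ
        exact ContinuousAt.comp (f := circleMap s r) (g := fun z => GammaSeq z n) ((li_gammaSeq_hasDerivAt (by linarith [(hre _ (hmem θ)).1]) hn).continuousAt)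
          (continuous_circleMap s r).continuousAt
      have c2 : Continuous fun θ => (circleMap s r θ - s) ^ (-2:ℤ) := by
        refine Continuous.zpow₀ (by fun_prop) _ fun θ => Or.inl ?_
        simp [circleMap, hr0.ne']
      simp only [deriv_circleMap]
      fun_prop
    · filter_upwards [eventually_ne_atTop 0] with n hn
      refine ae_of_all _ fun θ _ => ?_
      rw [norm_smul, norm_smul, deriv_circleMap, norm_mul, norm_zpow]
      have h0 : circleMap s r θ - s = circleMap 0 r θ := by simp [circleMap]
      rw [h0, norm_I, norm_circleMap_zero, abs_of_pos hr0, mul_one]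
      have hh := hre _ (hmem θ)
      gcongr
      refine (li_gammaSeq_norm_le (by linarith) hn).trans ((le_abs_self _).trans (hB _ hh))
    · exact intervalIntegrable_const
    · refine ae_of_all _ fun θ _ => ?_
      exact ((GammaSeq_tendsto_Gamma _).const_smul _).const_smul _
  have hGne : Gamma s ≠ 0 := Gamma_ne_zero_of_re_pos hs
  have := key.div (GammaSeq_tendsto_Gamma s) hGne
  rw [digamma_def, logDeriv_apply]
  refine this.congr' ?_
  have hne := (GammaSeq_tendsto_Gamma s).eventually_ne hGne
  filter_upwards [eventually_ne_atTop 0, hne] with n hn h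
  simp only [Pi.div_apply]
  rw [(li_gammaSeq_hasDerivAt hs hn).deriv]
  field_simp

lemma li_norm_add_ge {w : ℂ} (hw : 0 < w.re) {t : ℝ} (ht : 0 ≤ t) : ‖w‖ ≤ ‖w + t‖ := by
  rw [norm_def, norm_def]
  apply Real.sqrt_le_sqrt
  simp [normSq_apply]
  nlinarith

lemma li_log_step {w : ℂ} (hw : 0 < w.re) :
    ‖Complex.log (w + 1) - Complex.log w - 1 / w‖ ≤ 1 / ‖w‖ ^ 2 := by
  have hw0 : w ≠ 0 := by rintro rfl; simp at hw
  have hd : ∀ t ∈ Set.Icc (0:ℝ) 1, HasDerivWithinAt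
      (fun t : ℝ => Complex.log (w + t) - t / w) (1 / (w + t) - 1 / w) (Set.Icc 0 1) t := by
    intro t ht
    apply HasDerivAt.hasDerivWithinAt
    have h1 : HasDerivAt (fun t : ℝ => w + (t : ℂ)) 1 t := by
      simpa using (hasDerivAt_id t).ofReal_comp.const_add w
    have hs : w + (t:ℂ) ∈ slitPlane := by
      left; simp; linarith [ht.1]
    have h2 := h1.clog_real hs
    have h3 : HasDerivAt (fun t : ℝ => (t : ℂ) / w) (1 / w) t := by
      simpa using (hasDerivAt_id t).ofReal_comp.div_const w
    exact h2.sub h3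
  have := norm_image_sub_le_of_norm_deriv_le_segment_01' hd (C := 1 / ‖w‖ ^ 2) ?_
  · simp at this ⊢
    refine le_trans (le_of_eq ?_) this
    congr 1
    ring
  · intro t ht
    have hwt : w + t ≠ 0 := by
      intro h
      have := congrArg re h
      simp at this
      linarith [ht.1]
    have : 1 / (w + t) - 1 / w = - t / (w * (w + t)) := by field_simp; ring
    rw [this, norm_div, norm_neg, norm_real, norm_mul, Real.norm_of_nonneg ht.1]
    have h1 := li_norm_add_ge hw ht.1
    have h0 : 0 < ‖w‖ := norm_pos_iff.mpr hw0
    rw [sq]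
    gcongr
    exact ht.2.le

lemma li_digamma_bound {s : ℂ} (hs : 1 / 4 ≤ s.re) :
    ‖digamma s - Complex.log s‖ ≤ 10 / ‖s‖ := by
  have hs0 : 0 < s.re := by linarith
  set m := ‖s‖ with hm
  have hm4 : 1 / 4 ≤ m := hs.trans (re_le_norm s)
  have hk : ∀ k : ℕ, (m + k) ^ 2 ≤ 2 * ‖s + k‖ ^ 2 := by
    intro k
    have h1 : ‖s + k‖ ^ 2 = ‖s‖ ^ 2 + 2 * s.re * k + k ^ 2 := by
      rw [Complex.sq_norm, Complex.sq_norm]; simp [normSq_apply]; ring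
    rw [h1]
    have : (0:ℝ) ≤ k := by positivity
    nlinarith [sq_nonneg (m - k), mul_nonneg hs0.le this]
  have hsum : ∀ n : ℕ, ‖∑ k ∈ Finset.range (n + 1), 1 / (s + k) - (Complex.log (s + (n + 1 : ℕ)) - Complex.log s)‖ ≤ 10 / m := by
    intro n
    have e : Complex.log (s + (n + 1 : ℕ)) - Complex.log s =
        ∑ k ∈ Finset.range (n + 1), (Complex.log (s + (k + 1 : ℕ)) - Complex.log (s + k)) := by
      rw [Finset.sum_range_sub (fun k : ℕ => Complex.log (s + k))]; simp
    rw [e, ← Finset.sum_sub_distrib]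
    have b : ∀ k ∈ Finset.range (n + 1), ‖1 / (s + k) - (Complex.log (s + (k + 1 : ℕ)) - Complex.log (s + k))‖ ≤
        10 / (m + k) - 10 / (m + (k + 1 : ℕ)) := by
      intro k _
      have hk0 : (0:ℝ) ≤ k := by positivity
      have h1 := li_log_step (w := s + k) (by simp; linarith)
      rw [← norm_neg] at h1
      have h2 : -(Complex.log (s + k + 1) - Complex.log (s + k) - 1 / (s + k)) =
        1 / (s + k) - (Complex.log (s + (k + 1 : ℕ)) - Complex.log (s + k)) := by
        push_cast; rw [add_assoc]; ring
      rw [h2] at h1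
      refine h1.trans ?_
      have h3 := hk k
      have h4 : 0 < m + k := by linarith
      have h5 : 1 / ‖s + k‖ ^ 2 ≤ 2 / (m + k) ^ 2 := by
        rw [div_le_div_iff₀ (by nlinarith) (by positivity)]; linarith
      refine h5.trans ?_
      push_cast
      rw [div_sub_div _ _ (by positivity) (by positivity), div_le_div_iff₀ (by positivity) (by positivity)]
      have : 0 ≤ (m+k) ^ 2 * (8 * (m+k) - 2) := by
        apply mul_nonneg (by positivity); linarith
      nlinarith
    refine (norm_sum_le_of_le _ b).trans ?_
    rw [Finset.sum_range_sub' (fun k : ℕ => 10 / (m + k))]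
    simp
    positivity
  have hlim : Tendsto (fun n : ℕ => Complex.log n - Complex.log (s + (n + 1 : ℕ))) atTop (𝓝 0) := by
    have h1 : Tendsto (fun n : ℕ => Complex.log (1 + (s + 1) / n)) atTop (𝓝 0) := by
      have : Tendsto (fun n : ℕ => 1 + (s + 1) / (n : ℂ)) atTop (𝓝 (1 + 0)) :=
        tendsto_const_nhds.add (tendsto_const_div_atTop_nhds_zero_nat (s + 1))
      rw [add_zero] at this
      have := this.clog (by simp)
      simpa using this
    have h2 := h1.neg
    rw [neg_zero] at h2
    refine h2.congr' ?_
    filter_upwards [eventually_ne_atTop 0] with n hn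
    have hn' : (n:ℂ) ≠ 0 := by exact_mod_cast hn
    have : s + ((n+1 : ℕ) : ℂ) = (n : ℝ) * (1 + (s + 1) / n) := by
      push_cast; field_simp; ring
    rw [this, Complex.log_ofReal_mul (by positivity)]
    · rw [← Complex.natCast_log]; push_cast; ring
    · intro h
      have h3 : s + ((n+1 : ℕ) : ℂ) = 0 := by rw [this, h]; simp
      have := congrArg re h3
      simp at this
      have : (0:ℝ) ≤ n := by positivity
      linarith
  have h := ((li_digamma_tendsto hs0).sub hlim).sub_const (Complex.log s)
  rw [sub_zero] at h
  refine le_of_tendsto h.norm (Eventually.of_forall fun n => ?_)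
  refine le_trans (le_of_eq ?_) (hsum n)
  rw [← norm_neg]
  congr 1
  ring

end LiDigamma


section LiXi
open Filter Topology MeasureTheory

lemma li_xi_diff : Differentiable ℂ riemannXi := by
  unfold riemannXi
  have := differentiable_completedZeta₀
  fun_prop

lemma li_xi_one_sub (s : ℂ) : riemannXi (1 - s) = riemannXi s := by
  simp only [riemannXi, completedRiemannZeta₀_one_sub]; ring

lemma li_xi_eq {s : ℂ} (h0 : s ≠ 0) (h1 : s ≠ 1) :
    riemannXi s = s * (s - 1) * completedRiemannZeta s := by
  rw [riemannXi, completedRiemannZeta_eq]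
  have : 1 - s ≠ 0 := sub_ne_zero.mpr h1.symm
  field_simp
  ring

lemma li_xi_eq_zeta {s : ℂ} (hs : 0 < s.re) (h1 : s ≠ 1) :
    riemannXi s = s * (s - 1) * (Gammaℝ s * riemannZeta s) := by
  have h0 : s ≠ 0 := by rintro rfl; simp at hs
  rw [li_xi_eq h0 h1, riemannZeta_def_of_ne_zero h0]
  have := Gammaℝ_ne_zero_of_re_pos hs
  field_simp

lemma li_xi_one : riemannXi 1 = 1 := by simp [riemannXi]

lemma li_xi_ne_zero
    (RH : ∀ s : ℂ, 0 < s.re → s.re < 1 → riemannZeta s = 0 → s.re = 1 / 2)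
    {s : ℂ} (hs : 1 / 2 < s.re) : riemannXi s ≠ 0 := by
  by_cases h1 : s = 1
  · rw [h1, li_xi_one]; exact one_ne_zero
  have hs0 : 0 < s.re := by linarith
  have h0 : s ≠ 0 := by rintro rfl; simp at hs0
  rw [li_xi_eq_zeta hs0 h1]
  refine mul_ne_zero (mul_ne_zero h0 (sub_ne_zero.mpr h1))
    (mul_ne_zero (Gammaℝ_ne_zero_of_re_pos hs0) ?_)
  rcases lt_or_ge s.re 1 with h | h
  · intro hz
    have := RH s hs0 h hz
    linarith
  · exact riemannZeta_ne_zero_of_one_le_re h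

open ComplexConjugate in
lemma li_xi_conj (s : ℂ) : riemannXi (conj s) = conj (riemannXi s) := by
  have h1 : AnalyticOnNhd ℂ riemannXi Set.univ := fun z _ => li_xi_diff.analyticAt z
  have h2 : AnalyticOnNhd ℂ (conj ∘ riemannXi ∘ conj) Set.univ := fun z _ => by
    apply Differentiable.analyticAt
    intro z
    have := (li_xi_diff (conj z)).conj_conj
    simpa using this
  have h3 : riemannXi =ᶠ[𝓝 2] conj ∘ riemannXi ∘ conj := by
    have : {z : ℂ | 1 < z.re} ∈ 𝓝 (2:ℂ) :=
      (isOpen_lt continuous_const continuous_re).mem_nhds (by simp)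
    filter_upwards [this] with z hz
    have hz : 1 < z.re := hz
    have hz' : 1 < (conj z).re := by simpa using hz
    have ne0 : ∀ z : ℂ, 1 < z.re → z ≠ 0 ∧ z ≠ 1 := fun z hz =>
      ⟨by rintro rfl; norm_num at hz, by rintro rfl; simp at hz⟩
    simp only [Function.comp_apply]
    rw [li_xi_eq (ne0 z hz).1 (ne0 z hz).2, li_xi_eq (ne0 _ hz').1 (ne0 _ hz').2,
      completedZeta_eq_tsum_of_one_lt_re hz, completedZeta_eq_tsum_of_one_lt_re hz']
    simp only [map_mul, map_sub, map_one, conj_conj, conj_tsum]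
    have hp : (Real.pi : ℂ).arg ≠ Real.pi := by
      rw [arg_ofReal_of_nonneg Real.pi_pos.le]; exact Real.pi_ne_zero.symm
    have hc : ∀ (n : ℕ) (w : ℂ), conj ((n : ℂ) ^ (conj w)) = (n : ℂ) ^ w := fun n w => by
      rw [← conj_cpow _ _ (by rw [natCast_arg]; exact Real.pi_ne_zero.symm)]; simp
    have e1 : conj ((Real.pi : ℂ) ^ (-(conj z) / 2)) = (Real.pi : ℂ) ^ (-z / 2) := by
      have := conj_cpow (Real.pi : ℂ) (-z / 2) hp
      rw [conj_ofReal] at this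
      rw [this]; simp [map_ofNat]
    have e2 : conj (Gamma (conj z / 2)) = Gamma (z / 2) := by
      rw [← Gamma_conj]; simp [map_ofNat]
    rw [e1, e2]
    congr 2
    refine tsum_congr fun n => ?_
    rw [map_div₀, hc]; simp
  have := h1.eq_of_eventuallyEq h2 h3
  have h4 := congrFun this (conj s)
  simpa using h4

lemma li_xi_strip : ∃ C : ℝ, 0 < C ∧ ∀ s : ℂ, -5 ≤ s.re → s.re ≤ 5 →
    ‖riemannXi s‖ ≤ C * (1 + ‖s‖) ^ 2 := by
  set P := HurwitzZeta.hurwitzEvenFEPair 0 with hP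
  have hconv : ∀ x : ℝ, IntegrableOn (fun t : ℝ => t ^ (x - 1) * ‖P.f_modif t‖) (Set.Ioi 0) := by
    intro x
    have h := (P.isStrongFEPair_toStrongFEPair.hasMellin x).1.norm
    have h : IntegrableOn (fun t : ℝ => ‖(t:ℂ) ^ ((x:ℂ) - 1) • P.f_modif t‖) (Set.Ioi 0) := h
    refine h.congr_fun (fun t ht => ?_) measurableSet_Ioi
    have ht : 0 < t := ht
    simp only [norm_smul]
    rw [norm_cpow_eq_rpow_re_of_pos ht]
    simp
  have hInt := (hconv (-5/2)).add (hconv (5/2))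
  set B := ∫ t in Set.Ioi (0:ℝ), (t ^ ((-5/2:ℝ) - 1) * ‖P.f_modif t‖ + t ^ ((5/2:ℝ) - 1) * ‖P.f_modif t‖) with hB
  have hB0 : 0 ≤ B := setIntegral_nonneg measurableSet_Ioi fun t ht => by
    have ht : 0 < t := ht
    positivity
  have hL : ∀ s : ℂ, -5 ≤ s.re → s.re ≤ 5 → ‖completedRiemannZeta₀ s‖ ≤ B := by
    intro s h1 h2
    have e : completedRiemannZeta₀ s = mellin P.f_modif (s / 2) / 2 := rfl
    have : ‖mellin P.f_modif (s / 2)‖ ≤ B := by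
      unfold mellin
      apply norm_integral_le_of_norm_le hInt
      refine (ae_restrict_iff' measurableSet_Ioi).mpr (ae_of_all _ fun t ht => ?_)
      have ht : 0 < t := ht
      rw [norm_smul, norm_cpow_eq_rpow_re_of_pos ht]
      simp only [Pi.add_apply]
      rw [← add_mul]
      gcongr
      have hre : (s / 2 - 1).re = s.re / 2 - 1 := by simp
      rw [hre]
      rcases le_total t 1 with h | h
      · have : t ^ (s.re / 2 - 1) ≤ t ^ ((-5/2:ℝ) - 1) :=
          Real.rpow_le_rpow_of_exponent_ge ht h (by linarith)
        have : 0 ≤ t ^ ((5/2:ℝ) - 1) := by positivity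
        linarith
      · have : t ^ (s.re / 2 - 1) ≤ t ^ ((5/2:ℝ) - 1) :=
          Real.rpow_le_rpow_of_exponent_le h (by linarith)
        have : 0 ≤ t ^ ((-5/2:ℝ) - 1) := by positivity
        linarith
    rw [e, norm_div]
    simp
    linarith
  refine ⟨B + 1, by linarith, fun s h1 h2 => ?_⟩
  have h3 := hL s h1 h2
  rw [riemannXi]
  calc _ ≤ ‖s * (s - 1) * completedRiemannZeta₀ s‖ + ‖(1:ℂ)‖ := norm_add_le _ _
    _ ≤ ‖s‖ * (‖s‖ + 1) * B + 1 := by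
      rw [norm_mul, norm_mul, norm_one]
      gcongr
      simpa using norm_sub_le s 1
    _ ≤ _ := by
      have : 0 ≤ ‖s‖ := norm_nonneg s
      nlinarith [mul_nonneg this hB0, mul_nonneg (mul_nonneg this this) hB0]

lemma li_logDeriv_xi {s : ℂ} (hs : 1 < s.re) :
    logDeriv riemannXi s = deriv riemannZeta s / riemannZeta s + 1 / (s - 1) + 1 / s
      + digamma (s / 2) / 2 - Real.log Real.pi / 2 := by
  have hs0 : 0 < s.re := by linarith
  have h0 : s ≠ 0 := by rintro rfl; simp at hs0
  have h1 : s ≠ 1 := by rintro rfl; simp at hs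
  have hs1 : s - 1 ≠ 0 := sub_ne_zero.mpr h1
  have hz : riemannZeta s ≠ 0 := riemannZeta_ne_zero_of_one_le_re hs.le
  have hg : Gamma (s / 2) ≠ 0 := Gamma_ne_zero_of_re_pos (by simp; linarith)
  have hpi : (Real.pi : ℂ) ≠ 0 := by simp [Real.pi_ne_zero]
  have hpp : (Real.pi : ℂ) ^ (-s / 2) ≠ 0 := by simp [cpow_eq_zero_iff, hpi]
  have e : riemannXi =ᶠ[𝓝 s] fun s => s * ((s - 1) * ((Real.pi : ℂ) ^ (-s / 2) * (Gamma (s / 2) * riemannZeta s))) := by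
    have : {z : ℂ | 1 < z.re} ∈ 𝓝 s :=
      (isOpen_lt continuous_const continuous_re).mem_nhds hs
    filter_upwards [this] with z hz
    have hz : 1 < z.re := hz
    rw [li_xi_eq_zeta (by linarith) (by rintro rfl; simp at hz), Gammaℝ]
    ring
  rw [logDeriv_apply, e.deriv_eq, e.eq_of_nhds]
  have dz : DifferentiableAt ℂ riemannZeta s := differentiableAt_riemannZeta h1
  have dG : DifferentiableAt ℂ Gamma (s / 2) := differentiableAt_Gamma _ (by
      intro m h
      have := congrArg re h
      simp at this
      have : (0:ℝ) ≤ m := by positivity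
      linarith)
  have dG' : HasDerivAt (fun s => Gamma (s / 2)) (deriv Gamma (s / 2) / 2) s := by
    have := HasDerivAt.comp s dG.hasDerivAt ((hasDerivAt_id s).div_const 2)
    convert! this using 1
    ring
  have dp : HasDerivAt (fun s : ℂ => (Real.pi : ℂ) ^ (-s / 2)) ((Real.pi : ℂ) ^ (-s / 2) * Complex.log Real.pi * (-1/2)) s := by
    have := ((hasDerivAt_id s).neg.div_const 2).const_cpow (c := (Real.pi : ℂ)) (Or.inl hpi)
    convert! this using 1
  have D := (hasDerivAt_id s).mul (((hasDerivAt_id s).sub_const 1).mul (dp.mul (dG'.mul dz.hasDerivAt)))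
  have := D.deriv
  simp only [id] at this
  have e2 : deriv (fun s => s * ((s - 1) * ((Real.pi : ℂ) ^ (-s / 2) * (Gamma (s / 2) * riemannZeta s)))) s = _ := this
  rw [e2, digamma_def, logDeriv_apply, Complex.ofReal_log Real.pi_pos.le]
  simp only [Pi.mul_apply, id]
  field_simp
  ring

lemma li_zeta_logDeriv_bound : ∃ K : ℝ, 0 < K ∧ ∀ s : ℂ, 3 / 2 ≤ s.re →
    ‖deriv riemannZeta s / riemannZeta s‖ ≤ K / s.re := by
  have hsum := (ArithmeticFunction.LSeriesSummable_vonMangoldt (s := 3/2) (by norm_num)).norm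
  set K0 := ∑' n, ‖LSeries.term (fun n => ((ArithmeticFunction.vonMangoldt n : ℝ) : ℂ)) (3/2) n‖ with hK0
  have hK00 : 0 ≤ K0 := tsum_nonneg fun n => norm_nonneg _
  refine ⟨4 * (K0 + 1), by linarith, fun s hs => ?_⟩
  have h := ArithmeticFunction.LSeries_vonMangoldt_eq_deriv_riemannZeta_div (s := s) (by linarith)
  rw [← norm_neg, ← neg_div, ← h, LSeries]
  have hb : ∀ n, ‖LSeries.term (fun n => ((ArithmeticFunction.vonMangoldt n : ℝ) : ℂ)) s n‖ ≤
      (2:ℝ) ^ (3/2 - s.re) * ‖LSeries.term (fun n => ((ArithmeticFunction.vonMangoldt n : ℝ) : ℂ)) (3/2) n‖ := by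
    intro n
    rcases Nat.eq_zero_or_pos n with rfl | hn
    · simp
    rw [LSeries.norm_term_eq, LSeries.norm_term_eq]
    simp only [hn.ne', if_false]
    rcases Nat.lt_or_ge n 2 with h2 | h2
    · have : n = 1 := by omega
      subst this
      simp
    have hn0 : (0:ℝ) < n := by exact_mod_cast hn
    have e : (3/2 : ℂ).re = 3/2 := by norm_num
    rw [e]
    have h3 : (n:ℝ) ^ (3/2 - s.re) ≤ (2:ℝ) ^ (3/2 - s.re) :=
      Real.rpow_le_rpow_of_nonpos (by norm_num) (by exact_mod_cast h2) (by linarith)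
    have h4 : (n:ℝ) ^ s.re = (n:ℝ) ^ (3/2:ℝ) / (n:ℝ) ^ (3/2 - s.re) := by
      rw [← Real.rpow_sub hn0]; congr 1; ring
    rw [h4]
    have h5 : 0 < (n:ℝ) ^ (3/2 - s.re) := by positivity
    rw [div_div_eq_mul_div, mul_comm ((2:ℝ) ^ _), div_mul_eq_mul_div]
    gcongr
  have h1 := tsum_of_norm_bounded (hsum.mul_left ((2:ℝ) ^ (3/2 - s.re))).hasSum hb
  refine h1.trans ?_
  rw [tsum_mul_left]
  have hs0 : 0 < s.re := by linarith
  have h2 : (2:ℝ) ^ (3/2 - s.re) ≤ 4 / s.re := by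
    rw [le_div_iff₀ hs0]
    have h3 : s.re ≤ (2:ℝ) ^ s.re := by
      have h5 := one_add_mul_self_le_rpow_one_add (s := 1) (by norm_num) (p := s.re) (by linarith)
      norm_num at h5
      linarith
    have h4 : (2:ℝ) ^ (3/2 - s.re) * (2:ℝ) ^ s.re = (2:ℝ) ^ (3/2:ℝ) := by
      rw [← Real.rpow_add (by norm_num)]; congr 1; ring
    have h6 : (2:ℝ) ^ (3/2:ℝ) ≤ 4 := by
      calc (2:ℝ) ^ (3/2:ℝ) ≤ (2:ℝ) ^ (2:ℝ) := Real.rpow_le_rpow_of_exponent_le (by norm_num) (by norm_num)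
        _ = 4 := by norm_num
    have h7 : 0 ≤ (2:ℝ) ^ (3/2 - s.re) := by positivity
    nlinarith
  calc _ ≤ 4 / s.re * K0 := by gcongr
    _ ≤ _ := by rw [div_mul_eq_mul_div]; gcongr; linarith

lemma li_F_asymp : ∃ C : ℝ, 0 < C ∧ ∀ s : ℂ, 3 / 2 ≤ s.re →
    ‖logDeriv riemannXi s - (Complex.log s - Real.log (2 * Real.pi)) / 2 - 1 / s - 1 / (s - 1)‖
      ≤ C / s.re := by
  obtain ⟨K, hK, h⟩ := li_zeta_logDeriv_bound
  refine ⟨K + 10, by linarith, fun s hs => ?_⟩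
  have hs0 : 0 < s.re := by linarith
  have h0 : s ≠ 0 := by rintro rfl; simp at hs0
  rw [li_logDeriv_xi (by linarith)]
  have h1 := h s hs
  have h2 := li_digamma_bound (s := s / 2) (by simp; linarith)
  have h3 : Complex.log (s / 2) = Complex.log s - Real.log 2 := by
    have := Complex.log_ofReal_mul (r := 1/2) (by norm_num) h0
    rw [show ((1/2:ℝ):ℂ) * s = s / 2 by push_cast; ring] at this
    rw [this, one_div, Real.log_inv]; push_cast; ring
  rw [h3] at h2
  rw [Real.log_mul (by norm_num) Real.pi_ne_zero]
  have e : deriv riemannZeta s / riemannZeta s + 1 / (s - 1) + 1 / s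
      + digamma (s / 2) / 2 - Real.log Real.pi / 2 - (Complex.log s - (Real.log 2 + Real.log Real.pi : ℝ)) / 2 - 1 / s - 1 / (s - 1)
      = deriv riemannZeta s / riemannZeta s + (digamma (s / 2) - (Complex.log s - Real.log 2)) / 2 := by
    push_cast; ring
  rw [e]
  refine (norm_add_le _ _).trans ?_
  have e3 : ‖(digamma (s / 2) - (Complex.log s - Real.log 2)) / 2‖
      = ‖digamma (s / 2) - (Complex.log s - Real.log 2)‖ / 2 := by
    rw [norm_div, Complex.norm_ofNat]
  rw [e3, add_div]
  have h4 : 10 / ‖s / 2‖ ≤ 20 / s.re := by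
    rw [norm_div]
    have := re_le_norm s
    simp only [Complex.norm_ofNat]
    rw [div_div_eq_mul_div]
    norm_num
    gcongr
  have h5 : (20:ℝ) / s.re = 2 * (10 / s.re) := by ring
  linarith
end LiXi


section LiPos
open Filter Topology Metric

lemma li_exists_log {f : ℂ → ℂ} {c : ℂ} {R : ℝ} (hR : 0 < R)
    (hf : DifferentiableOn ℂ f (ball c R)) (h0 : ∀ z ∈ ball c R, f z ≠ 0) :
    ∃ g : ℂ → ℂ, DifferentiableOn ℂ g (ball c R) ∧ g c = 0 ∧
      ∀ z ∈ ball c R, f z = f c * exp (g z) := by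
  have hF : DifferentiableOn ℂ (fun z => deriv f z / f z) (ball c R) :=
    (hf.deriv isOpen_ball).div hf h0
  obtain ⟨g, hg0, hg⟩ := (hF.isExactOn_ball).with_val_at c 0
  refine ⟨g, fun z hz => (hg z hz).differentiableAt.differentiableWithinAt, hg0, fun z hz => ?_⟩
  have hcb : c ∈ ball c R := mem_ball_self hR
  have hd : ∀ z ∈ ball c R, HasDerivAt (fun z => f z * exp (-g z)) 0 z := fun z hz => by
    have h1 := (hf.differentiableAt (isOpen_ball.mem_nhds hz)).hasDerivAt
    have h2 := (hg z hz).neg.cexp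
    refine (h1.mul h2).congr_deriv ?_
    have := h0 z hz
    field_simp
    ring
  have := (convex_ball c R).is_const_of_fderivWithin_eq_zero (𝕜 := ℂ)
    (f := fun z => f z * exp (-g z))
    (fun z hz => (hd z hz).differentiableAt.differentiableWithinAt)
    (fun z hz => by
      rw [fderivWithin_of_isOpen isOpen_ball hz]
      ext; simp [(hd z hz).deriv]) hz hcb
  simp only [hg0, neg_zero, exp_zero, mul_one] at this
  rw [← this, mul_assoc, ← exp_add]; simp

lemma li_lower_ball {f : ℂ → ℂ} {c : ℂ} {R M : ℝ} (hR : 0 < R) (hM : 0 < M)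
    (hf : DifferentiableOn ℂ f (ball c R)) (h0 : ∀ z ∈ ball c R, f z ≠ 0)
    (hb : ∀ z ∈ ball c R, ‖f z‖ ≤ ‖f c‖ * Real.exp M) {z : ℂ} (hz : z ∈ ball c R) :
    ‖f c‖ * Real.exp (-(2 * M * ‖z - c‖ / (R - ‖z - c‖))) ≤ ‖f z‖ := by
  obtain ⟨g, hg, hgc, hfg⟩ := li_exists_log hR hf h0
  have hmap : ∀ w ∈ ball (0:ℂ) R, w + c ∈ ball c R := fun w hw => by
    simpa [mem_ball, dist_eq_norm] using hw
  have hd : DifferentiableOn ℂ (fun w => g (w + c)) (ball 0 R) :=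
    hg.comp (by fun_prop) hmap
  have hcb : c ∈ ball c R := mem_ball_self hR
  have hm : Set.MapsTo (fun w => g (w + c)) (ball 0 R) {z | z.re ≤ M} := fun w hw => by
    have h1 := hb _ (hmap w hw)
    rw [hfg _ (hmap w hw), norm_mul, norm_exp] at h1
    have h2 : 0 < ‖f c‖ := norm_pos_iff.mpr (h0 c hcb)
    exact Real.exp_le_exp.mp (le_of_mul_le_mul_left h1 h2)
  have hz' : z - c ∈ ball (0:ℂ) R := by simpa [mem_ball, dist_eq_norm] using hz
  have := borelCaratheodory_zero hM hd hm hR hz' (by simpa using hgc)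
  simp only [sub_add_cancel] at this
  rw [hfg z hz, norm_mul, norm_exp]
  gcongr
  have h3 := (abs_le.mp (abs_re_le_norm (g z))).1
  linarith

lemma li_log_norm_deriv {f : ℂ → ℂ} {a v : ℂ} {u : ℝ} (hf : DifferentiableAt ℂ f (a + u * v))
    (h0 : f (a + u * v) ≠ 0) :
    HasDerivAt (fun u : ℝ => Real.log ‖f (a + u * v)‖) ((logDeriv f (a + u * v) * v).re) u := by
  have h1 : HasDerivAt (fun u : ℝ => a + (u:ℂ) * v) v u := by
    simpa using ((hasDerivAt_id u).ofReal_comp.mul_const v).const_add a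
  have h2 : HasDerivAt (fun u : ℝ => f (a + (u:ℂ) * v)) (deriv f (a + u * v) * v) u :=
    hf.hasDerivAt.comp_of_eq u h1 rfl
  have h3 := (h2.norm_sq).log (by positivity)
  have h4 := h3.div_const 2
  have e : (fun u : ℝ => Real.log ‖f (a + u * v)‖) =
      fun u : ℝ => Real.log (‖f (a + u * v)‖ ^ 2) / 2 := by
    ext u; rw [Real.log_pow]; push_cast; ring
  rw [e]
  refine h4.congr_deriv ?_
  rw [Complex.inner, logDeriv_apply, Complex.sq_norm]
  have h5 : normSq (f (a + u * v)) ≠ 0 := by simpa using h0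
  have : deriv f (a + u * v) / f (a + u * v) * v
      = ((normSq (f (a + u * v)))⁻¹ : ℝ) * (deriv f (a + u * v) * v * (starRingEnd ℂ) (f (a + u * v))) := by
    rw [div_eq_mul_inv, inv_def]; push_cast; ring
  rw [this, re_ofReal_mul]
  field_simp
  try ring

lemma li_F_right : ∃ C : ℝ, 0 < C ∧ ∀ s : ℂ, 3 / 2 ≤ s.re →
    -C ≤ (logDeriv riemannXi s).re ∧ ‖logDeriv riemannXi s‖ ≤ C * Real.log (2 + ‖s‖) := by
  obtain ⟨C, hC, h⟩ := li_F_asymp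
  set D : ℝ := C + 3 + |Real.log (2 * Real.pi)| with hD
  have hD0 : 0 < D := by positivity
  refine ⟨D + 4, by linarith, fun s hs => ?_⟩
  have h1 := h s hs
  have hsn : 3 / 2 ≤ ‖s‖ := hs.trans (re_le_norm s)
  have h2 : ‖1 / s‖ ≤ 1 := by
    rw [norm_div, norm_one, div_le_one (by linarith)]; linarith
  have h3 : ‖1 / (s - 1)‖ ≤ 2 := by
    have : 1 / 2 ≤ ‖s - 1‖ := by
      refine le_trans ?_ (re_le_norm _); simp; linarith
    rw [norm_div, norm_one, div_le_iff₀ (by linarith)]; linarith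
  have h4 : ‖((Real.log (2 * Real.pi) : ℝ) : ℂ) / 2‖ ≤ |Real.log (2 * Real.pi)| := by
    rw [norm_div, norm_real, Complex.norm_ofNat, Real.norm_eq_abs]
    have := abs_nonneg (Real.log (2 * Real.pi))
    linarith
  have h5 : C / s.re ≤ C := by rw [div_le_iff₀ (by linarith)]; nlinarith
  have h6 : ‖logDeriv riemannXi s - Complex.log s / 2‖ ≤ D := by
    have e : logDeriv riemannXi s - Complex.log s / 2 =
      (logDeriv riemannXi s - (Complex.log s - Real.log (2 * Real.pi)) / 2 - 1 / s - 1 / (s - 1))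
       + 1 / s + 1 / (s - 1) - ((Real.log (2 * Real.pi) : ℝ) : ℂ) / 2 := by ring
    rw [e]
    refine (norm_sub_le _ _).trans ?_
    have := norm_add₃_le (a := logDeriv riemannXi s - (Complex.log s - Real.log (2 * Real.pi)) / 2 - 1 / s - 1 / (s - 1)) (b := 1 / s) (c := 1 / (s - 1))
    linarith
  have hlog0 : 0 ≤ Real.log ‖s‖ := Real.log_nonneg (by linarith)
  have hlog1 : Real.log ‖s‖ ≤ Real.log (2 + ‖s‖) := Real.log_le_log (by linarith) (by linarith)
  have hlog2 : 1 ≤ Real.log (2 + ‖s‖) := by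
    rw [Real.le_log_iff_exp_le (by linarith)]
    have := Real.exp_one_lt_d9; linarith
  constructor
  · have h7 := (abs_le.mp ((abs_re_le_norm _).trans h6)).1
    simp only [sub_re] at h7
    have : (Complex.log s / 2).re = Real.log ‖s‖ / 2 := by
      rw [show Complex.log s / 2 = Complex.log s / ((2:ℝ):ℂ) by norm_num, div_ofReal_re, log_re]
    linarith
  · have h8 : ‖Complex.log s‖ ≤ Real.log ‖s‖ + Real.pi := by
      refine (norm_le_abs_re_add_abs_im _).trans ?_
      rw [log_re, log_im, abs_of_nonneg hlog0]
      have := abs_arg_le_pi s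
      linarith
    have h9 : ‖logDeriv riemannXi s‖ ≤ D + ‖Complex.log s / 2‖ := by
      have := norm_sub_norm_le (logDeriv riemannXi s) (Complex.log s / 2)
      linarith
    rw [norm_div, Complex.norm_ofNat] at h9
    have := Real.pi_lt_four
    nlinarith

lemma li_xi_center : ∃ C : ℝ, 0 < C ∧ ∀ t : ℝ,
    Real.exp (-(C * (1 + |t|) ^ 2)) ≤ ‖riemannXi (5 / 2 + t * I)‖ := by
  obtain ⟨K, hK, h⟩ := li_F_right
  have hne : ∀ s : ℂ, 1 < s.re → riemannXi s ≠ 0 := fun s hs => by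
    have h1 : s ≠ 1 := by rintro rfl; simp at hs
    have h0 : s ≠ 0 := by rintro rfl; norm_num at hs
    rw [li_xi_eq_zeta (by linarith) h1]
    exact mul_ne_zero (mul_ne_zero h0 (sub_ne_zero.mpr h1))
      (mul_ne_zero (Gammaℝ_ne_zero_of_re_pos (by linarith))
        (riemannZeta_ne_zero_of_one_le_re hs.le))
  set L := Real.log ‖riemannXi (5 / 2)‖ with hL
  refine ⟨5 * K + |L|, by positivity, fun t => ?_⟩
  have hre : ∀ u : ℝ, ((5 / 2 : ℂ) + u * I).re = 5 / 2 := fun u => by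
    simp
  have hnorm : ∀ u : ℝ, ‖(5 / 2 : ℂ) + u * I‖ ≤ 5 / 2 + |u| := fun u => by
    refine (norm_add_le _ _).trans ?_
    simp
  have hd : ∀ u : ℝ, HasDerivAt (fun u : ℝ => Real.log ‖riemannXi (5 / 2 + u * I)‖)
      ((logDeriv riemannXi (5 / 2 + u * I) * I).re) u := fun u =>
    li_log_norm_deriv (li_xi_diff _) (hne _ (by rw [hre]; norm_num))
  have hb := Convex.norm_image_sub_le_of_norm_hasDerivWithin_le
    (f := fun u : ℝ => Real.log ‖riemannXi (5 / 2 + u * I)‖) (s := Set.Icc (-|t|) |t|)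
    (x := 0) (y := t) (C := K * (5 + |t|)) (fun u _ => (hd u).hasDerivWithinAt) (fun u hu => by
      rw [Real.norm_eq_abs]
      refine (abs_re_le_norm _).trans ?_
      rw [norm_mul, norm_I, mul_one]
      refine (h _ (by rw [hre]; norm_num)).2.trans ?_
      have h1 := hnorm u
      have h2 : |u| ≤ |t| := abs_le.mpr hu
      gcongr
      refine (Real.log_le_sub_one_of_pos (by positivity)).trans ?_
      linarith) (convex_Icc _ _) ⟨by simp, by simp⟩ ⟨neg_abs_le t, le_abs_self t⟩
  simp only [ofReal_zero, zero_mul, add_zero, sub_zero, Real.norm_eq_abs] at hb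
  rw [← hL] at hb
  have h2 : -(K * (5 + |t|) * |t|) ≤ Real.log ‖riemannXi (5 / 2 + t * I)‖ - L := (abs_le.mp hb).1
  rw [← Real.le_log_iff_exp_le (norm_pos_iff.mpr (hne _ (by rw [hre]; norm_num)))]
  have h3 := neg_abs_le L
  have ht := abs_nonneg t
  have h4 : K * (5 + |t|) * |t| ≤ 5 * K * (1 + |t|) ^ 2 := by
    have : 0 ≤ K * (5 + 5 * |t| + 4 * |t| ^ 2) := by positivity
    nlinarith
  have h5 : |L| ≤ |L| * (1 + |t|) ^ 2 := by
    have : 0 ≤ |L| * (2 * |t| + |t| ^ 2) := by positivity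
    nlinarith
  nlinarith

lemma li_xi_lower
    (RH : ∀ s : ℂ, 0 < s.re → s.re < 1 → riemannZeta s = 0 → s.re = 1 / 2)
    {a : ℝ} (ha : 0 < a) (ha1 : a ≤ 1 / 2) : ∃ C : ℝ, 0 < C ∧ ∀ s : ℂ, 1 / 2 + a ≤ s.re →
      s.re ≤ 3 → Real.exp (-(C * (1 + |s.im|) ^ 2)) ≤ ‖riemannXi s‖ := by
  obtain ⟨C1, hC1, h1⟩ := li_xi_center
  obtain ⟨C2, hC2, h2⟩ := li_xi_strip
  refine ⟨C1 + 4 * (36 * C2 + C1) / a, by positivity, fun s hs hs3 => ?_⟩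
  set t := s.im with ht
  set c : ℂ := 5 / 2 + t * I with hc
  have hcre : c.re = 5 / 2 := by simp [hc]
  have hcim : c.im = t := by simp [hc]
  have hcn : ‖c‖ ≤ 5 / 2 + |t| := by
    refine (norm_add_le _ _).trans ?_
    simp
  have ht0 := abs_nonneg t
  have hre : ∀ z ∈ ball c 2, 1 / 2 < z.re ∧ z.re < 9 / 2 ∧ ‖z‖ < 9 / 2 + |t| := fun z hz => by
    rw [mem_ball, dist_eq_norm] at hz
    have h3 := abs_lt.mp ((abs_re_le_norm _).trans_lt hz)
    rw [sub_re, hcre] at h3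
    have h4 := norm_le_norm_add_norm_sub' z c
    refine ⟨by linarith [h3.1], by linarith [h3.2], by linarith⟩
  have hcpos := h1 t
  rw [← hc] at hcpos
  set M := (36 * C2 + C1) * (1 + |t|) ^ 2 with hM
  have hM0 : 0 < M := by positivity
  have hzc : ‖s - c‖ ≤ 2 - a := by
    have : s - c = ((s.re - 5 / 2 : ℝ) : ℂ) := by
      apply Complex.ext <;> simp [hcre, hcim, ht]
    rw [this, norm_real, Real.norm_eq_abs, abs_le]
    constructor <;> linarith
  have key := li_lower_ball (f := riemannXi) (c := c) (R := 2) (M := M) (by norm_num) hM0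
    li_xi_diff.differentiableOn (fun z hz => li_xi_ne_zero RH (hre z hz).1)
    (fun z hz => by
      obtain ⟨h3, h4, h5⟩ := hre z hz
      have h6 := h2 z (by linarith) (by linarith)
      have h7 : C2 * (1 + ‖z‖) ^ 2 ≤ 36 * C2 * (1 + |t|) ^ 2 := by
        have : (1 + ‖z‖) ^ 2 ≤ (6 * (1 + |t|)) ^ 2 := by
          gcongr; linarith
        nlinarith
      have h8 : 36 * C2 * (1 + |t|) ^ 2 ≤ Real.exp (36 * C2 * (1 + |t|) ^ 2) := by
        have := Real.add_one_le_exp (36 * C2 * (1 + |t|) ^ 2); linarith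
      calc ‖riemannXi z‖ ≤ Real.exp (36 * C2 * (1 + |t|) ^ 2) := by linarith
        _ = Real.exp (-(C1 * (1 + |t|) ^ 2)) * Real.exp M := by
          rw [← Real.exp_add, hM]; congr 1; ring
        _ ≤ _ := by gcongr) (z := s) (by rw [mem_ball, dist_eq_norm]; linarith)
  refine le_trans ?_ key
  calc _ = Real.exp (-(C1 * (1 + |t|) ^ 2)) * Real.exp (-(4 * M / a)) := by
        rw [← Real.exp_add, hM]; congr 1; ring
    _ ≤ _ := by
      have h9 : 2 * M * ‖s - c‖ ≤ 4 * M := by nlinarith [norm_nonneg (s - c)]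
      have h10 : a ≤ 2 - ‖s - c‖ := by linarith
      gcongr
end LiPos


section LiPos2
open Filter Topology Metric

lemma li_xi_PL
    (RH : ∀ s : ℂ, 0 < s.re → s.re < 1 → riemannZeta s = 0 → s.re = 1 / 2) :
    ∃ K : ℝ, 0 < K ∧ ∀ a : ℝ, 0 < a → a ≤ 1 / 2 → ∀ w : ℂ, 0 ≤ w.re → w.re ≤ 2 →
      ‖riemannXi (1 / 2 + w - a) / riemannXi (1 / 2 + w + a)‖ ≤ Real.exp (K * a) := by
  obtain ⟨K, hK, h⟩ := li_F_right
  refine ⟨2 * K, by linarith, fun a ha ha1 w hw0 hw2 => ?_⟩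
  obtain ⟨C1, hC1, h1⟩ := li_xi_lower RH ha ha1
  obtain ⟨C2, hC2, h2⟩ := li_xi_strip
  have hne : ∀ z : ℂ, 0 ≤ z.re → riemannXi (1 / 2 + z + a) ≠ 0 := fun z hz =>
    li_xi_ne_zero RH (by simp; linarith)
  refine PhragmenLindelof.vertical_strip (a := 0) (b := 2)
    (f := fun w => riemannXi (1 / 2 + w - a) / riemannXi (1 / 2 + w + a)) ?_ ?_ ?_ ?_ hw0 hw2
  · apply DifferentiableOn.diffContOnCl
    rw [Complex.closure_preimage_re, closure_Ioo (by norm_num)]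
    intro z hz
    have hz : 0 ≤ z.re := hz.1
    have hd := li_xi_diff
    apply DifferentiableAt.differentiableWithinAt
    exact DifferentiableAt.div (by fun_prop) (by fun_prop) (hne z hz)
  · refine ⟨1, by rw [lt_div_iff₀ (by norm_num)]; linarith [Real.pi_gt_three],
      2 * (36 * C2 + C1), ?_⟩
    apply Asymptotics.IsBigO.of_bound 1
    rw [eventually_inf_principal]
    refine Eventually.of_forall fun z hz => ?_
    obtain ⟨hz0, hz2⟩ : 0 < z.re ∧ z.re < 2 := hz
    set t := z.im with ht
    have ht0 := abs_nonneg t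
    have h3 := h1 (1 / 2 + z + a) (by simp; linarith) (by simp; linarith)
    have h4 := h2 (1 / 2 + z - a) (by simp; linarith) (by simp; linarith)
    have e : (1 / 2 + z + (a:ℂ)).im = t := by simp [ht]
    rw [e] at h3
    have h5 : ‖1 / 2 + z - (a:ℂ)‖ ≤ 3 + |t| := by
      refine (norm_le_abs_re_add_abs_im _).trans ?_
      have : (1 / 2 + z - (a:ℂ)).im = t := by simp [ht]
      rw [this]
      gcongr
      rw [abs_le]
      constructor <;> simp <;> linarith
    have h7 : C2 * (1 + ‖1 / 2 + z - (a:ℂ)‖) ^ 2 ≤ 36 * C2 * (1 + |t|) ^ 2 := by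
      have : (1 + ‖1 / 2 + z - (a:ℂ)‖) ^ 2 ≤ (6 * (1 + |t|)) ^ 2 := by
        gcongr; linarith
      nlinarith
    have h8 : 36 * C2 * (1 + |t|) ^ 2 ≤ Real.exp (36 * C2 * (1 + |t|) ^ 2) := by
      have := Real.add_one_le_exp (36 * C2 * (1 + |t|) ^ 2); linarith
    have h9 : (1 + |t|) ^ 2 ≤ 2 * Real.exp |t| := by
      have := Real.quadratic_le_exp_of_nonneg ht0
      nlinarith
    rw [norm_div, one_mul, one_mul, Real.norm_eq_abs, abs_of_pos (Real.exp_pos _)]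
    calc _ ≤ Real.exp (36 * C2 * (1 + |t|) ^ 2) / Real.exp (-(C1 * (1 + |t|) ^ 2)) := by
          gcongr; linarith
      _ = Real.exp ((36 * C2 + C1) * (1 + |t|) ^ 2) := by
          rw [← Real.exp_sub]; congr 1; ring
      _ ≤ _ := by
        apply Real.exp_le_exp.mpr
        have : 0 < 36 * C2 + C1 := by positivity
        nlinarith
  · intro z hz
    have e : riemannXi (1 / 2 + z - a) = (starRingEnd ℂ) (riemannXi (1 / 2 + z + a)) := by
      rw [← li_xi_conj, ← li_xi_one_sub]
      congr 1
      apply Complex.ext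
      · simp [hz]; ring
      · simp
    simp only [e, norm_div, Complex.norm_conj]
    have := norm_pos_iff.mpr (hne z hz.ge)
    rw [div_self this.ne']
    apply Real.one_le_exp; positivity
  · intro z hz
    have hn : ∀ u : ℝ, -1/2 ≤ u → riemannXi (1 / 2 + z + u * 1) ≠ 0 := fun u hu =>
      li_xi_ne_zero RH (by simp [hz]; linarith)
    have hd : ∀ u : ℝ, -1/2 ≤ u →
      HasDerivAt (fun u : ℝ => Real.log ‖riemannXi (1 / 2 + z + u * 1)‖ + K * u)
       ((logDeriv riemannXi (1 / 2 + z + u * 1) * 1).re + K * 1) u := fun u hu => 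
       (li_log_norm_deriv (li_xi_diff _) (hn u hu)).add ((hasDerivAt_id u).const_mul K)
    have hmono : MonotoneOn (fun u : ℝ => Real.log ‖riemannXi (1 / 2 + z + u * 1)‖ + K * u)
        (Set.Icc (-a) a) := by
      apply monotoneOn_of_deriv_nonneg (convex_Icc _ _)
      · intro u hu
        exact (hd u (by linarith [hu.1])).continuousAt.continuousWithinAt
      · intro u hu
        rw [interior_Icc] at hu
        exact (hd u (by linarith [hu.1])).differentiableAt.differentiableWithinAt
      · intro u hu
        rw [interior_Icc] at hu
        rw [(hd u (by linarith [hu.1])).deriv]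
        have := (h (1 / 2 + z + u * 1) (by simp [hz]; linarith [hu.1])).1
        rw [mul_one (logDeriv _ _)]; linarith
    have h3 := hmono ⟨le_rfl, by linarith⟩ ⟨by linarith, le_rfl⟩ (by linarith : -a ≤ a)
    simp only [mul_one] at h3
    have hp := norm_pos_iff.mpr (hn a (by linarith))
    have hm := norm_pos_iff.mpr (hn (-a) (by linarith))
    simp only [ofReal_neg, ← sub_eq_add_neg, mul_one] at h3 hp hm
    rw [norm_div, ← Real.log_le_iff_le_exp (by positivity), Real.log_div hm.ne' hp.ne']
    linarith

lemma li_F_re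
    (RH : ∀ s : ℂ, 0 < s.re → s.re < 1 → riemannZeta s = 0 → s.re = 1 / 2) :
    ∃ K : ℝ, 0 < K ∧ ∀ s : ℂ, 1 / 2 < s.re → -K ≤ (logDeriv riemannXi s).re := by
  obtain ⟨K, hK, h⟩ := li_F_right
  obtain ⟨K2, hK2, h2⟩ := li_xi_PL RH
  refine ⟨K + K2, by linarith, fun s hs => ?_⟩
  rcases le_or_gt (3 / 2) s.re with h3 | h3
  · linarith [(h s h3).1]
  have hd0 : HasDerivAt (fun u : ℝ => Real.log ‖riemannXi (s + u * 1)‖)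
      ((logDeriv riemannXi s).re) 0 := by
    have := li_log_norm_deriv (f := riemannXi) (a := s) (v := 1) (u := 0) (li_xi_diff _)
      (by simpa using li_xi_ne_zero RH hs)
    simpa using this
  have hd1 : HasDerivAt (fun u : ℝ => Real.log ‖riemannXi (s + u * (-1))‖)
      (-(logDeriv riemannXi s).re) 0 := by
    have := li_log_norm_deriv (f := riemannXi) (a := s) (v := -1) (u := 0) (li_xi_diff _)
      (by simpa using li_xi_ne_zero RH hs)
    simpa using this
  have hd := (hd0.sub hd1).add ((hasDerivAt_id (0:ℝ)).const_mul K2)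
  have ht := hd.tendsto_slope_zero_right
  have hev : ∀ᶠ u : ℝ in 𝓝[>] 0, 0 < u ∧ u < min (1 / 2) (s.re - 1 / 2) := by
    have hpos : 0 < min (1 / 2) (s.re - 1 / 2) := lt_min (by norm_num) (by linarith)
    exact Ioo_mem_nhdsGT hpos
  have := ge_of_tendsto (b := (0:ℝ)) ht (by
    filter_upwards [hev] with u hu
    have hu1 : u < 1 / 2 := hu.2.trans_le (min_le_left _ _)
    have hu2 : u < s.re - 1 / 2 := hu.2.trans_le (min_le_right _ _)
    have h5 := h2 u hu.1 hu1.le (s - 1 / 2) (by simp; linarith) (by simp; linarith)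
    rw [add_sub_cancel] at h5
    have hp := norm_pos_iff.mpr (li_xi_ne_zero RH (s := s + u) (by simp; linarith [hu.1]))
    have hm := norm_pos_iff.mpr (li_xi_ne_zero RH (s := s - u) (by simp; linarith))
    rw [norm_div, ← Real.log_le_iff_le_exp (by positivity), Real.log_div hm.ne' hp.ne'] at h5
    simp only [Pi.add_apply, Pi.sub_apply, zero_add, ofReal_zero, zero_mul, add_zero, sub_self,
      mul_zero, sub_zero, smul_eq_mul, mul_one, mul_neg, ← sub_eq_add_neg, id]
    apply mul_nonneg (inv_nonneg.mpr hu.1.le)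
    linarith)
  linarith

lemma li_F_left
    (RH : ∀ s : ℂ, 0 < s.re → s.re < 1 → riemannZeta s = 0 → s.re = 1 / 2) :
    ∃ C : ℝ, 0 < C ∧ ∀ s : ℂ, 1 / 2 < s.re → s.re ≤ 3 / 2 →
      (s.re - 1 / 2) * ‖logDeriv riemannXi s‖ ≤ C * Real.log (2 + ‖s‖) := by
  obtain ⟨K, hK, h⟩ := li_F_right
  obtain ⟨K2, hK2, h2⟩ := li_F_re RH
  refine ⟨4 * K2 + 4 * K, by linarith, fun s hs hs3 => ?_⟩
  set c : ℂ := (3 / 2 : ℝ) + s.im * I with hc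
  have hcre : c.re = 3 / 2 := by simp [hc]
  have hcim : c.im = s.im := by simp [hc]
  have hsc : ‖s - c‖ = 3 / 2 - s.re := by
    have : s - c = ((s.re - 3 / 2 : ℝ) : ℂ) := by
      apply Complex.ext <;> simp [hcre, hcim]
    rw [this, norm_real, Real.norm_eq_abs, abs_of_nonpos (by linarith)]; ring
  have hre : ∀ z ∈ ball (0:ℂ) 1, 1 / 2 < (z + c).re := fun z hz => by
    rw [mem_ball, dist_zero_right] at hz
    have h3 := abs_lt.mp ((abs_re_le_norm _).trans_lt hz)
    rw [add_re, hcre]; linarith [h3.1]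
  have hmem : s - c ∈ ball (0:ℂ) 1 := by rw [mem_ball, dist_zero_right, hsc]; linarith
  have hdF : ∀ s : ℂ, 1 / 2 < s.re → DifferentiableAt ℂ (logDeriv riemannXi) s := fun s hs =>
    DifferentiableAt.div ((li_xi_diff.analyticAt s).deriv.differentiableAt)
      (li_xi_diff s) (li_xi_ne_zero RH hs)
  have := borelCaratheodory (f := fun z => -logDeriv riemannXi (z + c)) hK2 (R := 1)
    (fun z hz => by
      apply DifferentiableAt.differentiableWithinAt
      apply DifferentiableAt.fun_neg
      exact (hdF _ (hre z hz)).comp z (by fun_prop))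
    (fun z hz => by
      have := h2 _ (hre z hz)
      simp only [Set.mem_ofPred_eq, neg_re]; linarith) (by norm_num) hmem
  simp only [sub_add_cancel, zero_add, norm_neg, hsc] at this
  have h5 := (h c (by rw [hcre])).2
  have hlogs : Real.log (2 + ‖c‖) ≤ 2 * Real.log (2 + ‖s‖) := by
    have h6 : ‖c‖ ≤ ‖s‖ + 1 := by
      have := norm_le_norm_add_norm_sub s c
      linarith
    have : 2 * Real.log (2 + ‖s‖) = Real.log ((2 + ‖s‖) ^ 2) := by rw [Real.log_pow]; norm_num
    rw [this]
    apply Real.log_le_log (by positivity)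
    nlinarith [norm_nonneg s]
  have hlog2 : 1 / 2 ≤ Real.log (2 + ‖s‖) := by
    have := Real.log_two_gt_d9
    have := Real.log_le_log (by norm_num : (0:ℝ) < 2) (by linarith [norm_nonneg s] : 2 ≤ 2 + ‖s‖)
    linarith
  have hx : 0 < s.re - 1 / 2 := by linarith
  rw [show (1:ℝ) - (3 / 2 - s.re) = s.re - 1 / 2 by ring, ← add_div, le_div_iff₀ hx] at this
  rw [mul_comm]
  refine this.trans ?_
  have h7 : 2 * K2 * (3 / 2 - s.re) ≤ 2 * K2 := by nlinarith
  have h8 : ‖logDeriv riemannXi c‖ * (1 + (3 / 2 - s.re)) ≤ 2 * (K * (2 * Real.log (2 + ‖s‖))) := by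
    have h9 : ‖logDeriv riemannXi c‖ ≤ K * (2 * Real.log (2 + ‖s‖)) := by
      refine h5.trans ?_; gcongr
    nlinarith [norm_nonneg (logDeriv riemannXi c)]
  nlinarith

set_option maxHeartbeats 1000000 in
lemma li_A_bound
    (RH : ∀ s : ℂ, 0 < s.re → s.re < 1 → riemannZeta s = 0 → s.re = 1 / 2) :
    ∃ C : ℝ, 0 < C ∧ ∀ s : ℂ, 1 / 2 < s.re →
      (s * (s - 1) * logDeriv riemannXi s
        - s * (s - 1) * (Complex.log s - Real.log (2 * Real.pi)) / 2 - (2 * s - 1)).re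
      ≤ C * Real.log (2 + ‖s‖) * (‖s‖ ^ 2 / (2 * s.re)) := by
  obtain ⟨C0, hC0, h0⟩ := li_F_asymp
  obtain ⟨K1, hK1, h1⟩ := li_F_re RH
  obtain ⟨K2, hK2, h2⟩ := li_F_left RH
  set D := |Real.log (2 * Real.pi)| with hD
  have hD0 : 0 ≤ D := abs_nonneg _
  refine ⟨4 * C0 + 100 * (K1 + K2 + D + 10), by linarith, fun s hs => ?_⟩
  have hsn : 1 / 2 < ‖s‖ := hs.trans_le (re_le_norm s)
  set L := Real.log (2 + ‖s‖) with hL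
  have hlog2 : 1 / 2 ≤ L := by
    have := Real.log_two_gt_d9
    have := Real.log_le_log (by norm_num : (0:ℝ) < 2) (by linarith [norm_nonneg s] : 2 ≤ 2 + ‖s‖)
    linarith
  have hs0 : s ≠ 0 := by rintro rfl; norm_num at hs
  have hs1 : ‖s - 1‖ ≤ ‖s‖ := by
    rw [← sq_le_sq₀ (norm_nonneg _) (norm_nonneg _), Complex.sq_norm, Complex.sq_norm,
      normSq_apply, normSq_apply]
    simp; nlinarith
  rcases le_or_gt (3 / 2) s.re with h3 | h3
  · have h4 := h0 s h3
    have hs1' : s - 1 ≠ 0 := by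
      intro h; have := congrArg re h; simp at this; linarith
    have e : s * (s - 1) * logDeriv riemannXi s
        - s * (s - 1) * (Complex.log s - Real.log (2 * Real.pi)) / 2 - (2 * s - 1)
        = s * (s - 1) * (logDeriv riemannXi s - (Complex.log s - Real.log (2 * Real.pi)) / 2
          - 1 / s - 1 / (s - 1)) := by
      field_simp
      ring
    rw [e]
    refine (re_le_norm _).trans ?_
    rw [norm_mul, norm_mul]
    calc _ ≤ ‖s‖ * ‖s‖ * (C0 / s.re) := by gcongr
      _ = 2 * C0 * (‖s‖ ^ 2 / (2 * s.re)) := by field_simp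
      _ ≤ _ := by
        have h6 : 2 * C0 ≤ (4 * C0 + 100 * (K1 + K2 + D + 10)) * L := by
          have : 0 ≤ 100 * (K1 + K2 + D + 10) * L := by positivity
          nlinarith
        exact mul_le_mul_of_nonneg_right h6 (by positivity)
  · set F := logDeriv riemannXi s with hF
    have hK := h1 s hs
    have hx := h2 s hs h3.le
    set x := s.re - 1 / 2 with hxd
    set t := s.im with ht
    have hns : ‖s‖ ^ 2 = (x + 1 / 2) ^ 2 + t ^ 2 := by
      rw [Complex.sq_norm, normSq_apply, hxd]; ring
    have e1 : (s * (s - 1) * F).re = (x ^ 2 - t ^ 2 - 1 / 4) * F.re - 2 * x * t * F.im := by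
      simp only [mul_re, mul_im, sub_re, sub_im, one_re, one_im]; rw [hxd]; ring
    have hx0 : 0 < x := by rw [hxd]; linarith
    have hx1 : x < 1 := by rw [hxd]; linarith
    have hFre : x * |F.re| ≤ K2 * L := le_trans (by gcongr; exact abs_re_le_norm _) hx
    have hFim : x * |F.im| ≤ K2 * L := le_trans (by gcongr; exact abs_im_le_norm _) hx
    have hS : 0 < ‖s‖ ^ 2 := by positivity
    have htS : |t| ≤ 2 * ‖s‖ ^ 2 := by
      have := abs_im_le_norm s
      rw [← ht] at this
      nlinarith
    have b1 : x ^ 2 * F.re ≤ K2 * L := by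
      have : x * F.re ≤ x * |F.re| := by gcongr; exact le_abs_self _
      have : 0 ≤ x * |F.re| := by positivity
      nlinarith
    have b2 : -(t ^ 2 + 1 / 4) * F.re ≤ K1 * ‖s‖ ^ 2 := by
      have : 0 ≤ t ^ 2 + 1 / 4 := by positivity
      have h5 : t ^ 2 + 1 / 4 ≤ ‖s‖ ^ 2 := by rw [hns]; nlinarith
      nlinarith
    have b3 : -(2 * x * t * F.im) ≤ 4 * (K2 * L) * ‖s‖ ^ 2 := by
      have h5 : -(2 * x * t * F.im) ≤ 2 * (x * |F.im|) * |t| := by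
        have := neg_abs_le (2 * x * t * F.im)
        rw [abs_mul, abs_mul, abs_mul, abs_of_pos hx0, abs_two] at this
        linarith
      have h6 : 2 * (x * |F.im|) * |t| ≤ 2 * (K2 * L) * (2 * ‖s‖ ^ 2) := by gcongr
      linarith
    have hlogs : ‖Complex.log s‖ ≤ 3 * L + 4 := by
      refine (norm_le_abs_re_add_abs_im _).trans ?_
      rw [log_re, log_im]
      have := abs_arg_le_pi s
      have := Real.pi_lt_four
      have h6 : |Real.log ‖s‖| ≤ L + 1 := by
        rw [abs_le]
        constructor
        · have h8 : Real.log (1 / 2) ≤ Real.log ‖s‖ := Real.log_le_log (by norm_num) hsn.le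
          rw [one_div, Real.log_inv] at h8
          have := Real.log_two_lt_d9
          linarith
        · have := Real.log_le_log (by linarith) (by linarith : ‖s‖ ≤ 2 + ‖s‖)
          linarith
      linarith
    have b4 : -(s * (s - 1) * (Complex.log s - Real.log (2 * Real.pi)) / 2).re
        ≤ ‖s‖ ^ 2 * (3 * L + 4 + D) := by
      rw [← neg_re]
      refine (re_le_norm _).trans ?_
      rw [norm_neg, norm_div, norm_mul, norm_mul, Complex.norm_ofNat]
      have h6 : ‖Complex.log s - Real.log (2 * Real.pi)‖ ≤ 3 * L + 4 + D := by
        refine (norm_sub_le _ _).trans ?_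
        rw [norm_real, Real.norm_eq_abs]
        linarith
      have h7 : ‖s‖ * ‖s - 1‖ * ‖Complex.log s - Real.log (2 * Real.pi)‖
        ≤ ‖s‖ * ‖s‖ * (3 * L + 4 + D) := by gcongr
      have : 0 ≤ ‖s‖ * ‖s - 1‖ * ‖Complex.log s - Real.log (2 * Real.pi)‖ := by positivity
      rw [div_le_iff₀ (by norm_num)]
      nlinarith
    have b5 : -(2 * s - 1).re ≤ 0 := by simp; linarith
    have b6 : (K2 * L) ≤ 4 * (K2 * L) * ‖s‖ ^ 2 := by
      have : 0 ≤ K2 * L := by positivity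
      nlinarith
    rw [sub_re, sub_re, e1]
    have tot : (x ^ 2 - t ^ 2 - 1 / 4) * F.re - 2 * x * t * F.im
      - (s * (s - 1) * (Complex.log s - Real.log (2 * Real.pi)) / 2).re - (2 * s - 1).re
      ≤ (K1 + 8 * (K2 * L) + 3 * L + 4 + D) * ‖s‖ ^ 2 := by
      have q : (K1 + 8 * (K2 * L) + 3 * L + 4 + D) * ‖s‖ ^ 2 = K1 * ‖s‖ ^ 2
        + 4 * (K2 * L) * ‖s‖ ^ 2 + 4 * (K2 * L) * ‖s‖ ^ 2 + ‖s‖ ^ 2 * (3 * L + 4 + D) := by ring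
      rw [q]
      linarith
    refine tot.trans ?_
    have h9 : ‖s‖ ^ 2 ≤ 4 * (‖s‖ ^ 2 / (2 * s.re)) := by
      rw [← mul_div_assoc, le_div_iff₀ (by linarith), mul_comm]
      exact mul_le_mul_of_nonneg_right (by linarith) hS.le
    have h10 : K1 + 8 * (K2 * L) + 3 * L + 4 + D ≤ 11 * (K1 + K2 + D + 10) * L := by
      have p1 : K1 ≤ 2 * (K1 * L) := by nlinarith
      have p2 : D ≤ 2 * (D * L) := by nlinarith
      have p3 : 0 ≤ K2 * L := by positivity
      have p4 : 0 ≤ K1 * L := by positivity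
      have p5 : 0 ≤ D * L := by positivity
      have p6 : 11 * (K1 + K2 + D + 10) * L = 11 * (K1 * L) + 11 * (K2 * L) + 11 * (D * L) + 110 * L := by
        ring
      rw [p6]
      linarith
    have h11 : 0 ≤ ‖s‖ ^ 2 / (2 * s.re) := by positivity
    have hpp : 0 ≤ (K1 + K2 + D + 10) * L := by positivity
    calc _ ≤ (11 * (K1 + K2 + D + 10) * L) * (4 * (‖s‖ ^ 2 / (2 * s.re))) := by
          gcongr
      _ = 44 * ((K1 + K2 + D + 10) * L) * (‖s‖ ^ 2 / (2 * s.re)) := by ring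
      _ ≤ _ := by
        have h12 : 0 ≤ C0 * L := by positivity
        have h13 : (4 * C0 + 100 * (K1 + K2 + D + 10)) * L
          = 4 * (C0 * L) + 100 * ((K1 + K2 + D + 10) * L) := by ring
        refine mul_le_mul_of_nonneg_right ?_ h11
        rw [h13]
        linarith
end LiPos2


section LiCoeff
open Filter Topology Metric

lemma li_norm_circleAverage_le {f : ℂ → ℂ} {c : ℂ} {R : ℝ} :
    ‖Real.circleAverage f c R‖ ≤ Real.circleAverage (fun z => ‖f z‖) c R := by
  rw [Real.circleAverage, Real.circleAverage, norm_smul, smul_eq_mul, Real.norm_eq_abs,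
    abs_of_pos (inv_pos.2 Real.two_pi_pos)]
  gcongr
  exact intervalIntegral.norm_integral_le_integral_norm Real.two_pi_pos.le

/-- Carathéodory's coefficient bound. -/
lemma li_caratheodory {Q : ℂ → ℂ} {r : ℝ} (hr : 0 < r)
    (hQ : DifferentiableOn ℂ Q (closedBall 0 r)) (hre : ∀ z ∈ sphere (0:ℂ) r, 0 ≤ (Q z).re)
    {n : ℕ} (hn : 1 ≤ n) :
    ‖iteratedDeriv n Q 0 / n.factorial‖ * r ^ n ≤ 2 * (Q 0).re := by
  have hrabs : |r| = r := abs_of_pos hr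
  have hcl : closure (ball (0:ℂ) r) ⊆ closedBall 0 r := closure_ball_subset_closedBall
  have hne : ∀ z ∈ sphere (0:ℂ) r, z ≠ 0 := fun z hz => by
    rintro rfl; simp at hz; linarith
  have hcs : ContinuousOn Q (sphere 0 r) := hQ.continuousOn.mono sphere_subset_closedBall
  -- the average of Q z⁻ⁿ
  have h1 : Real.circleAverage (fun z => (r:ℂ) ^ n * (z ^ n)⁻¹ * Q z) 0 r
      = r ^ n * (iteratedDeriv n Q 0 / n.factorial) := by
    rw [Real.circleAverage_eq_circleIntegral hr.ne']
    have e1 := hQ.circleIntegral_one_div_sub_center_pow_smul hr n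
    have e2 : (∮ z in C(0, r), (z - 0)⁻¹ • ((r:ℂ) ^ n * (z ^ n)⁻¹ * Q z))
        = ∮ z in C(0, r), (r:ℂ) ^ n • ((1 / (z - 0) ^ (n + 1)) • Q z) := by
      apply circleIntegral.integral_congr hr.le
      intro z hz
      have := hne z hz
      simp only [smul_eq_mul, sub_zero]
      field_simp
      ring
    rw [e2, circleIntegral.integral_smul, e1]
    simp only [smul_eq_mul]
    have := two_pi_I_ne_zero
    field_simp
  have h2 : Real.circleAverage (fun z => ((r:ℂ) ^ n)⁻¹ * z ^ n * Q z) 0 r = 0 := by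
    have hd : DiffContOnCl ℂ (fun z => ((r:ℂ) ^ n)⁻¹ * z ^ n * Q z) (ball 0 |r|) := by
      rw [hrabs]
      apply DifferentiableOn.diffContOnCl
      exact DifferentiableOn.mul (by fun_prop) (hQ.mono hcl)
    rw [hd.circleAverage]
    simp [show n ≠ 0 by omega]
  have h3 : Real.circleAverage Q 0 r = Q 0 := by
    apply DiffContOnCl.circleAverage
    rw [hrabs]
    exact (hQ.mono hcl).diffContOnCl
  have i1 : CircleIntegrable (fun z => (r:ℂ) ^ n * (z ^ n)⁻¹ * Q z) 0 r := by
    apply ContinuousOn.circleIntegrable hr.le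
    refine ContinuousOn.mul (ContinuousOn.mul (by fun_prop) ?_) hcs
    exact ContinuousOn.inv₀ (by fun_prop) (fun z hz => pow_ne_zero _ (hne z hz))
  have i2 : CircleIntegrable (fun z => ((r:ℂ) ^ n)⁻¹ * z ^ n * Q z) 0 r := by
    apply ContinuousOn.circleIntegrable hr.le
    exact ContinuousOn.mul (by fun_prop) hcs
  have h4 := conjCLE.toContinuousLinearMap.circleAverage_comp_comm i2
  have i2' : CircleIntegrable (⇑(conjCLE.toContinuousLinearMap) ∘
      fun z => ((r:ℂ) ^ n)⁻¹ * z ^ n * Q z) 0 r := by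
    apply ContinuousOn.circleIntegrable hr.le
    refine (ContinuousLinearMap.continuous _).comp_continuousOn ?_
    exact ContinuousOn.mul (by fun_prop) hcs
  have h5 := Real.circleAverage_add i1 i2'
  rw [h1, h4, h2, map_zero, add_zero] at h5
  have h6 : (Real.circleAverage (fun z => 2 * (Q z).re) 0 r) = 2 * (Q 0).re := by
    have := (2 • reCLM).circleAverage_comp_comm (f := Q) (c := 0) (R := r)
      (hcs.circleIntegrable hr.le)
    rw [h3] at this
    simpa [Function.comp_def] using this
  rw [← h6]
  calc _ = ‖(r:ℂ) ^ n * (iteratedDeriv n Q 0 / n.factorial)‖ := by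
        rw [norm_mul, mul_comm, norm_pow, norm_real, Real.norm_eq_abs, hrabs]
    _ ≤ _ := by
      rw [← h5]
      refine li_norm_circleAverage_le.trans (le_of_eq ?_)
      apply Real.circleAverage_congr_sphere
      rw [hrabs]
      intro z hz
      have hz0 := hne z hz
      have hzr : ‖z‖ = r := by simpa using hz
      have hcz : (starRingEnd ℂ) z = r ^ 2 * z⁻¹ := by
        rw [inv_def, ← mul_assoc, mul_comm ((r:ℂ) ^ 2), mul_assoc, normSq_eq_norm_sq, hzr]
        have : (r:ℂ) ≠ 0 := by exact_mod_cast hr.ne'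
        push_cast
        field_simp
      have hrc : (r:ℂ) ≠ 0 := by exact_mod_cast hr.ne'
      have e : (((fun z => (r:ℂ) ^ n * (z ^ n)⁻¹ * Q z) + (⇑(conjCLE.toContinuousLinearMap) ∘
          fun z => ((r:ℂ) ^ n)⁻¹ * z ^ n * Q z)) z)
          = (r:ℂ) ^ n * (z ^ n)⁻¹ * ((2 * (Q z).re : ℝ) : ℂ) := by
        have hre2 : ((2 * (Q z).re : ℝ) : ℂ) = Q z + (starRingEnd ℂ) (Q z) := by
          rw [add_conj]
        rw [hre2]
        simp only [Pi.add_apply, Function.comp_apply, ContinuousLinearEquiv.coe_coe, conjCLE_apply,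
          map_mul, map_inv₀, map_pow, conj_ofReal, hcz]
        rw [mul_pow, inv_pow]
        field_simp
        ring
      simp only
      rw [e, norm_mul, norm_mul, norm_inv, norm_pow, norm_pow, hzr, norm_real, norm_real,
        Real.norm_eq_abs, Real.norm_eq_abs, hrabs, abs_of_nonneg (by linarith [hre z hz])]
      field_simp

set_option maxHeartbeats 1000000 in
lemma li_coeff_bound {H : ℂ → ℂ} (hH : DifferentiableOn ℂ H (ball 0 1)) (H0 : H 0 = -1)
    {C : ℝ} (hC : 0 < C)
    (hb : ∀ z ∈ ball (0:ℂ) 1, (H z).re ≤ C * Real.log (2 + ‖1 / (1 - z)‖) / (2 - 2 * z.re)) :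
    ∃ C' : ℝ, 0 < C' ∧ ∀ n : ℕ, 2 ≤ n →
      ‖iteratedDeriv n H 0 / n.factorial‖ ≤ C' * Real.sqrt n * Real.log n := by
  refine ⟨80 * C + 20, by linarith, fun n hn => ?_⟩
  have hn2 : (2:ℝ) ≤ n := by exact_mod_cast hn
  set q := Real.sqrt n with hq
  have hq2 : q ^ 2 = n := Real.sq_sqrt (by linarith)
  have hq1 : 1 ≤ q := by rw [hq, Real.one_le_sqrt]; linarith
  set δ : ℝ := 1 / (2 * q) with hδ
  have hδ0 : 0 < δ := by positivity
  have hδ1 : δ ≤ 1 / 2 := by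
    rw [hδ]; apply one_div_le_one_div_of_le <;> linarith
  have hδ2 : δ ^ 2 = 1 / (4 * n) := by rw [hδ, div_pow, mul_pow, hq2]; norm_num
  set ρ := 1 - δ with hρ
  set r := 2 * ρ / (1 + ρ ^ 2) with hr
  have hρ0 : 1 / 2 ≤ ρ := by rw [hρ]; linarith
  have hρ1 : ρ < 1 := by rw [hρ]; linarith
  have h1r : 1 - r = δ ^ 2 / (1 + ρ ^ 2) := by
    rw [hr]; field_simp; rw [hρ]; ring
  have hr0 : 0 < r := by positivity
  have hrlow : 1 / (8 * n) ≤ 1 - r := by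
    rw [h1r, hδ2, div_div]
    apply one_div_le_one_div_of_le (by positivity)
    have : ρ ^ 2 ≤ 1 := by nlinarith
    nlinarith
  have hrhigh : 1 - r ≤ 1 / (4 * n) := by
    rw [h1r, hδ2]; apply div_le_self (by positivity); nlinarith
  have hr1 : r < 1 := by
    have : (0:ℝ) < 1 / (8 * n) := by positivity
    linarith
  have hrn : 3 / 4 ≤ r ^ n := by
    have h1 := one_add_mul_le_pow (a := -(1 / (4 * (n:ℝ)))) (by
      have : 1 / (4 * (n:ℝ)) ≤ 1 := by rw [div_le_one (by positivity)]; linarith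
      linarith) n
    have h2 : (1 + -(1 / (4 * (n:ℝ)))) ^ n ≤ r ^ n := by
      gcongr
      · have : 1 / (4 * (n:ℝ)) ≤ 1 := by rw [div_le_one (by positivity)]; linarith
        linarith
      · linarith
    have h3 : 1 + (n:ℝ) * -(1 / (4 * (n:ℝ))) = 3 / 4 := by field_simp; norm_num
    linarith
  set ℓ := Real.log n with hℓ
  have hℓ0 : 1 / 2 ≤ ℓ := by
    have := Real.log_two_gt_d9
    have := Real.log_le_log (by norm_num : (0:ℝ) < 2) hn2
    linarith
  set M := C * (5 * ℓ) with hM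
  have hM0 : 0 < M := by positivity
  have hρρ : 0 < 1 - ρ ^ 2 := by nlinarith
  set D := M * (1 + ρ ^ 2) / (2 * (1 - ρ ^ 2)) with hD
  have hD0 : 0 < D := by positivity
  have hDle : D ≤ 10 * C * q * ℓ := by
    have h1 : δ ≤ 1 - ρ ^ 2 := by rw [hρ]; nlinarith
    calc D ≤ M * 2 / (2 * δ) := by
          rw [hD]; gcongr; nlinarith
      _ = _ := by rw [hδ, hM]; field_simp; norm_num
  set σ : ℝ := (1 + ρ ^ 2) / 2 with hσ
  have hσ0 : 0 < σ := by positivity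
  have hσ1 : σ < 1 := by rw [hσ]; linarith
  have hσr : σ * r = ρ := by rw [hσ, hr]; field_simp
  set P : ℂ → ℂ := fun z => D * ((1 + σ * z) / (1 - σ * z)) with hP
  have hsub : closedBall (0:ℂ) r ⊆ ball 0 1 := closedBall_subset_ball hr1
  have hden : ∀ z ∈ ball (0:ℂ) 1, 1 - (σ:ℂ) * z ≠ 0 := fun z hz h => by
    have h1 : (σ:ℂ) * z = 1 := (sub_eq_zero.mp h).symm
    have h2 := congrArg norm h1
    rw [norm_mul, norm_real, norm_one, Real.norm_eq_abs, abs_of_pos hσ0] at h2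
    have h3 : ‖z‖ < 1 := by simpa using hz
    nlinarith [norm_nonneg z]
  have hPd : DifferentiableOn ℂ P (ball 0 1) := by
    intro z hz
    apply DifferentiableAt.differentiableWithinAt
    have h1 : DifferentiableAt ℂ (fun z : ℂ => (1 + (σ:ℂ) * z) / (1 - (σ:ℂ) * z)) z :=
      DifferentiableAt.div (by fun_prop) (by fun_prop) (hden z hz)
    exact h1.const_mul _
  have hPre : ∀ z ∈ sphere (0:ℂ) r, (P z).re = M / (2 - 2 * z.re) ∧ z.re < 1 := fun z hz => by
    have hzr : ‖z‖ = r := by simpa using hz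
    have hzre : z.re < 1 := lt_of_le_of_lt ((re_le_norm z).trans hzr.le) hr1
    refine ⟨?_, hzre⟩
    have hzb := hden z (hsub (sphere_subset_closedBall hz))
    have hns : normSq (1 - (σ:ℂ) * z) = (1 + ρ ^ 2) * (1 - z.re) := by
      have h1 : z.re ^ 2 + z.im ^ 2 = r ^ 2 := by
        rw [← hzr, Complex.sq_norm, normSq_apply]; ring
      rw [normSq_apply]
      simp only [sub_re, sub_im, one_re, one_im, re_ofReal_mul, im_ofReal_mul]
      have h2 : 2 * σ = 1 + ρ ^ 2 := by rw [hσ]; ring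
      have h3 : σ ^ 2 * (z.re ^ 2 + z.im ^ 2) = ρ ^ 2 := by rw [h1, ← hσr]; ring
      linear_combination h3 - z.re * h2
    rw [hP]
    simp only [re_ofReal_mul]
    rw [div_re, hns, ← add_div]
    have hnum : (1 + (σ:ℂ) * z).re * (1 - (σ:ℂ) * z).re + (1 + (σ:ℂ) * z).im * (1 - (σ:ℂ) * z).im
        = 1 - ρ ^ 2 := by
      have h1 : z.re ^ 2 + z.im ^ 2 = r ^ 2 := by
        rw [← hzr, Complex.sq_norm, normSq_apply]; ring
      simp only [sub_re, sub_im, add_re, add_im, one_re, one_im, re_ofReal_mul, im_ofReal_mul]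
      have h3 : σ ^ 2 * (z.re ^ 2 + z.im ^ 2) = ρ ^ 2 := by rw [h1, ← hσr]; ring
      linear_combination -h3
    rw [hnum, hD]
    have : 1 - z.re ≠ 0 := by linarith
    have : 2 - 2 * z.re ≠ 0 := by intro h; apply this; linarith
    have := hρρ.ne'
    field_simp
  have c1 := li_caratheodory hr0 (hPd.mono hsub) (fun z hz => by
    rw [(hPre z hz).1]
    have := (hPre z hz).2
    apply div_nonneg hM0.le; linarith) (n := n) (by omega)
  have c2 := li_caratheodory (Q := P - H) hr0 ((hPd.mono hsub).sub (hH.mono hsub))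
    (fun z hz => by
      have hzb := hsub (sphere_subset_closedBall hz)
      have h1 := hb z hzb
      rw [Pi.sub_apply, sub_re, (hPre z hz).1, sub_nonneg]
      refine h1.trans ?_
      have h2 := (hPre z hz).2
      have hzr : ‖z‖ = r := by simpa using hz
      have h3 : ‖1 / (1 - z)‖ ≤ 8 * n := by
        have h4 : 1 / (8 * n) ≤ ‖1 - z‖ := by
          have := norm_sub_norm_le (1:ℂ) z
          rw [norm_one, hzr] at this
          linarith
        rw [norm_div, norm_one]
        calc _ ≤ 1 / (1 / (8 * (n:ℝ))) := one_div_le_one_div_of_le (by positivity) h4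
          _ = _ := by simp
      have h5 : Real.log (2 + ‖1 / (1 - z)‖) ≤ 5 * ℓ := by
        have : 5 * ℓ = Real.log ((n:ℝ) ^ 5) := by rw [Real.log_pow]; norm_num [hℓ]
        rw [this]
        apply Real.log_le_log (by positivity)
        have h6 : (2:ℝ) ^ 4 ≤ (n:ℝ) ^ 4 := by gcongr
        have h7 : (n:ℝ) ^ 5 = n ^ 4 * n := by ring
        nlinarith
      have h8 : 0 < 2 - 2 * z.re := by linarith
      rw [hM]
      gcongr) (n := n) (by omega)
  have a0P : ContDiffAt ℂ n P 0 :=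
    ((hPd.analyticAt (ball_mem_nhds _ one_pos)).contDiffAt)
  have a0H : ContDiffAt ℂ n H 0 :=
    ((hH.analyticAt (ball_mem_nhds _ one_pos)).contDiffAt)
  rw [iteratedDeriv_sub a0P a0H, sub_div] at c2
  have hP0 : P 0 = D := by simp [hP]
  rw [Pi.sub_apply, hP0, H0] at c2
  rw [hP0] at c1
  simp only [sub_re, neg_re, one_re, ofReal_re] at c1 c2
  set p := iteratedDeriv n P 0 / n.factorial
  set h := iteratedDeriv n H 0 / n.factorial
  have t1 : ‖h‖ ≤ ‖p‖ + ‖p - h‖ := by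
    have := norm_le_norm_add_norm_sub p h
    linarith
  have t2 : ‖h‖ * r ^ n ≤ 4 * D + 2 := by
    have : 0 < r ^ n := by positivity
    nlinarith
  have t3 : ‖h‖ * (3 / 4) ≤ 4 * D + 2 := le_trans (by gcongr) t2
  have t4 : 1 / 2 ≤ q * ℓ := by nlinarith
  nlinarith
end LiCoeff


section LiMain
open Filter Topology Metric

lemma li_coeff_of_hasSum {f : ℂ → ℂ} {a : ℕ → ℂ}
    (h : ∀ z ∈ ball (0:ℂ) 1, HasSum (fun n => a n * z ^ n) (f z)) (n : ℕ) :
    iteratedDeriv n f 0 / n.factorial = a n := by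
  have h1 : HasFPowerSeriesAt f (FormalMultilinearSeries.ofScalars ℂ a) 0 := by
    rw [hasFPowerSeriesAt_iff]
    filter_upwards [ball_mem_nhds (0:ℂ) one_pos] with z hz
    have := h z hz
    simp only [FormalMultilinearSeries.coeff_ofScalars, smul_eq_mul, zero_add]
    simpa [mul_comm] using this
  have h2 := AnalyticAt.hasFPowerSeriesAt (h1.analyticAt)
  have h3 := h1.eq_formalMultilinearSeries h2
  have h4 := congrArg (fun p => FormalMultilinearSeries.coeff p n) h3
  simp only [FormalMultilinearSeries.coeff_ofScalars] at h4
  exact h4.symm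

noncomputable def liA (s : ℂ) : ℂ :=
  s*(s-1)*logDeriv riemannXi s - s*(s-1)*(Complex.log s - Real.log (2*Real.pi))/2 - (2*s-1)

noncomputable def liT (z : ℂ) : ℂ :=
  (1/2) * ((-Complex.log (1 - z)) * (z/(1-z)^2)) - (1/2) * (Real.log (2*Real.pi)) * (z/(1-z)^2)
    + 2 * (1 - z)⁻¹ - 1

lemma li_one_sub_re {z : ℂ} (hz : z ∈ ball (0:ℂ) 1) : 0 < (1 - z).re := by
  have h := (abs_le.1 (Complex.abs_re_le_norm z)).2
  rw [mem_ball_zero_iff] at hz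
  simp; linarith

lemma li_one_sub_ne {z : ℂ} (hz : z ∈ ball (0:ℂ) 1) : 1 - z ≠ 0 := by
  intro h
  have := li_one_sub_re hz
  rw [h] at this; simp at this

lemma li_phi_re {z : ℂ} (hz : z ∈ ball (0:ℂ) 1) : 1/2 < (1/(1-z)).re := by
  have h0 := li_one_sub_ne hz
  have hp : 0 < Complex.normSq (1 - z) := Complex.normSq_pos.2 h0
  rw [one_div (1 - z), Complex.inv_re, lt_div_iff₀ hp]
  rw [mem_ball_zero_iff] at hz
  have h2 : Complex.normSq z < 1 := by
    rw [Complex.normSq_eq_norm_sq]; nlinarith [norm_nonneg z]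
  simp only [Complex.normSq_apply, Complex.sub_re, Complex.sub_im, Complex.one_re,
    Complex.one_im] at *
  nlinarith

lemma li_phi_ratio {z : ℂ} (hz : z ∈ ball (0:ℂ) 1) :
    ‖1/(1-z)‖^2/(2*(1/(1-z)).re) = 1 / (2 - 2*z.re) := by
  have h0 := li_one_sub_ne hz
  have hp : 0 < Complex.normSq (1 - z) := Complex.normSq_pos.2 h0
  have h1 := li_one_sub_re hz
  have h2 : (1-z).re = 1 - z.re := by simp
  rw [← Complex.normSq_eq_norm_sq, one_div, Complex.inv_re, Complex.normSq_inv, h2]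
  rw [h2] at h1
  have : 2 - 2 * z.re ≠ 0 := by linarith
  field_simp

lemma li_H_bound (RH : ∀ s : ℂ, 0 < s.re → s.re < 1 → riemannZeta s = 0 → s.re = 1 / 2) :
    ∃ C', 0 < C' ∧ ∀ n : ℕ, 2 ≤ n →
      ‖iteratedDeriv n (fun z => liA (1/(1-z))) 0 / n.factorial‖ ≤ C' * Real.sqrt n * Real.log n := by
  obtain ⟨C, hC, hb⟩ := li_A_bound RH
  refine li_coeff_bound (C := C) ?_ ?_ hC ?_
  · intro z hz
    apply DifferentiableAt.differentiableWithinAt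
    have hre := li_phi_re hz
    have h0 := li_one_sub_ne hz
    have hA : DifferentiableAt ℂ liA (1/(1-z)) := by
      have h1 : DifferentiableAt ℂ (logDeriv riemannXi) (1/(1-z)) :=
        DifferentiableAt.div ((li_xi_diff.analyticAt _).deriv.differentiableAt) (li_xi_diff _)
          (li_xi_ne_zero RH hre)
      have h2 : (1/(1-z)) ∈ slitPlane := Or.inl (by linarith)
      have h3 := differentiableAt_id.clog h2
      simp only [id] at h3
      unfold liA
      fun_prop
    exact hA.comp (f := fun z : ℂ => 1/(1-z)) z (by fun_prop (disch := exact h0))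
  · simp [liA]; norm_num
  · intro z hz
    have := hb _ (li_phi_re hz)
    rw [li_phi_ratio hz] at this
    simpa [liA, mul_div_assoc, div_eq_mul_inv, mul_assoc] using this

lemma li_conv (n : ℕ) :
    ∑ kl ∈ Finset.HasAntidiagonal.antidiagonal n, (1 / (kl.1 : ℂ)) * (kl.2 : ℂ) = n * (harmonic n : ℚ) - n := by
  rw [Finset.Nat.sum_antidiagonal_eq_sum_range_succ_mk, Finset.sum_range_succ']
  simp only [Nat.cast_zero, div_zero, zero_mul, add_zero, harmonic]
  push_cast
  rw [Finset.mul_sum]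
  have : (n : ℂ) = ∑ i ∈ Finset.range n, (1:ℂ) := by simp
  have h2 : ∀ i ∈ Finset.range n, 1 / ((i:ℂ) + 1) * ((n - (i + 1) : ℕ) : ℂ)
      = n * ((i:ℂ) + 1)⁻¹ - 1 := by
    intro i hi
    have hi' : i + 1 ≤ n := Finset.mem_range.1 hi
    have h3 : (i:ℂ) + 1 ≠ 0 := Nat.cast_add_one_ne_zero i
    push_cast [Nat.cast_sub hi']
    field_simp
  rw [Finset.sum_congr rfl h2, Finset.sum_sub_distrib, ← this]

lemma li_T_hasSum {z : ℂ} (hz : z ∈ ball (0:ℂ) 1) :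
    HasSum (fun n : ℕ => ((1/2) * (∑ kl ∈ Finset.HasAntidiagonal.antidiagonal n, (1 / (kl.1 : ℂ)) * (kl.2 : ℂ))
      - (1/2) * (Real.log (2*Real.pi)) * n + 2 - (if n = 0 then 1 else 0)) * z ^ n) (liT z) := by
  have hz1 : ‖z‖ < 1 := mem_ball_zero_iff.1 hz
  have h1 := Complex.hasSum_taylorSeries_neg_log hz1
  have h2 := hasSum_coe_mul_geometric_of_norm_lt_one hz1
  have h3 := hasSum_geometric_of_norm_lt_one hz1
  have hs1 := h1.summable.norm
  have hs2 := h2.summable.norm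
  have h4 := (summable_norm_sum_mul_antidiagonal_of_summable_norm hs1 hs2).of_norm.hasSum
  rw [← tsum_mul_tsum_eq_tsum_sum_antidiagonal_of_summable_norm hs1 hs2, h1.tsum_eq, h2.tsum_eq] at h4
  have h5 := hasSum_ite_eq (0:ℕ) (1:ℂ)
  have := (((h4.mul_left (1/2)).sub (h2.mul_left ((1/2) * (Real.log (2*Real.pi) : ℂ)))).add
    (h3.mul_left 2)).sub h5
  unfold liT
  convert! this using 2 with n
  have e : ∑ kl ∈ Finset.HasAntidiagonal.antidiagonal n, z ^ kl.1 / (kl.1:ℂ) * ((kl.2:ℂ) * z ^ kl.2)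
     = (∑ kl ∈ Finset.HasAntidiagonal.antidiagonal n, (1 / (kl.1 : ℂ)) * (kl.2 : ℂ)) * z ^ n := by
    rw [Finset.sum_mul]
    refine Finset.sum_congr rfl fun kl hkl => ?_
    rw [← Finset.HasAntidiagonal.mem_antidiagonal.1 hkl, pow_add]; ring
  rw [e]
  split_ifs with h
  · subst h; simp
  · ring

lemma li_T_coeff (n : ℕ) (hn : 1 ≤ n) : iteratedDeriv n liT 0 / n.factorial =
    (1/2) * (n * (harmonic n : ℚ) - n) - (1/2) * (Real.log (2*Real.pi)) * n + 2 := by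
  rw [li_coeff_of_hasSum (fun z hz => li_T_hasSum hz) n, li_conv n, if_neg (by omega), sub_zero]

lemma li_A_T {z : ℂ} (hz : z ∈ ball (0:ℂ) 1) :
    liA (1/(1-z)) + liT z = (1/(1-z)) * (1/(1-z) - 1) * logDeriv riemannXi (1/(1-z)) := by
  have h0 := li_one_sub_ne hz
  have hl : Complex.log (1/(1-z)) = - Complex.log (1-z) := by
    rw [one_div, Complex.log_inv]
    have : 1 - z ∈ slitPlane := Or.inl (li_one_sub_re hz)
    exact slitPlane_arg_ne_pi this
  unfold liA liT
  rw [hl]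
  field_simp
  ring

end LiMain


section LiFinal
open Filter Topology Metric

lemma li_leibniz (k : ℕ) : ∀ (h : ℂ → ℂ) (x : ℂ), AnalyticAt ℂ h x →
    iteratedDeriv (k+1) (fun s => s * h s) x
      = x * iteratedDeriv (k+1) h x + (k+1) * iteratedDeriv k h x := by
  have hd : ∀ (h : ℂ → ℂ) (x : ℂ), AnalyticAt ℂ h x →
      deriv (fun s => s * h s) x = h x + x * deriv h x := by
    intro h x hh
    have := ((hasDerivAt_id x).mul hh.differentiableAt.hasDerivAt).deriv
    simp only [one_mul, id] at this
    exact this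
  induction k with
  | zero =>
    intro h x hh
    simp [iteratedDeriv_one, hd h x hh, add_comm]
  | succ k ih =>
    intro h x hh
    have he : deriv (fun s => s * h s) =ᶠ[𝓝 x] (fun s => h s + s * deriv h s) := by
      filter_upwards [hh.eventually_analyticAt] with y hy using hd h y hy
    have hd1 : AnalyticAt ℂ (fun s => s * deriv h s) x := analyticAt_id.mul hh.deriv
    rw [iteratedDeriv_succ', he.iteratedDeriv_eq, iteratedDeriv_fun_add hh.contDiffAt hd1.contDiffAt,
      ih _ _ hh.deriv, ← iteratedDeriv_succ', ← iteratedDeriv_succ']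
    push_cast
    ring

lemma li_phi_deriv {z : ℂ} (hz : 1 - z ≠ 0) :
    HasDerivAt (fun z : ℂ => 1/(1-z)) ((1/(1-z))^2) z := by
  have h := ((hasDerivAt_id z).const_sub 1).inv hz
  have e : (1/(1-z))^2 = - -1 / (1 - z)^2 := by simp
  have e2 : (fun z : ℂ => 1/(1-z)) = (fun x => 1 - x)⁻¹ := by ext; simp
  rw [e, e2]
  exact h

lemma li_phi_tendsto : Tendsto (fun z : ℂ => 1/(1-z)) (𝓝 0) (𝓝 1) := by
  have := (li_phi_deriv (z := 0) (by simp)).continuousAt.tendsto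
  simpa using this

lemma li_comp_phi {g : ℂ → ℂ} (hg : AnalyticAt ℂ g 1) (m : ℕ) :
    ∀ᶠ z in 𝓝 (0:ℂ), iteratedDeriv (m+1) (fun z => g (1/(1-z))) z
      = (1/(1-z))^(m+2) * iteratedDeriv (m+1) (fun s => s^m * g s) (1/(1-z)) := by
  have hA : ∀ᶠ z in 𝓝 (0:ℂ), AnalyticAt ℂ g (1/(1-z)) :=
    li_phi_tendsto.eventually hg.eventually_analyticAt
  have hB : ∀ᶠ z in 𝓝 (0:ℂ), 1 - z ≠ 0 := by
    filter_upwards [ball_mem_nhds (0:ℂ) one_pos] with z hz using li_one_sub_ne hz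
  induction m with
  | zero =>
    filter_upwards [hA, hB] with z h1 h2
    have := (h1.differentiableAt.hasDerivAt.comp z (li_phi_deriv h2)).deriv
    simp only [zero_add, iteratedDeriv_one, pow_zero, one_mul]
    rw [mul_comm]
    exact this
  | succ m ih =>
    filter_upwards [hA, hB, ih.eventually_nhds] with z h1 h2 h3
    have h4 : AnalyticAt ℂ (fun s => s^m * g s) (1/(1-z)) := (analyticAt_id.pow m).mul h1
    have h5 : DifferentiableAt ℂ (iteratedDeriv (m+1) (fun s => s^m * g s)) (1/(1-z)) := by
      rw [iteratedDeriv_eq_iterate]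
      exact (h4.iterated_deriv (m+1)).differentiableAt
    have h6 := ((li_phi_deriv h2).pow (m+2)).mul (h5.hasDerivAt.comp z (li_phi_deriv h2))
    have h7 : (fun s : ℂ => s^(m+1) * g s) = fun s => s * (s^m * g s) := by
      ext s; ring
    rw [iteratedDeriv_succ, EventuallyEq.deriv_eq h3, h7, li_leibniz (m+1) _ _ h4]
    refine h6.deriv.trans ?_
    rw [iteratedDeriv_succ (n := m+1)]
    simp only [Function.comp, Pi.pow_apply]
    push_cast
    ring

lemma li_coeff_eq (n : ℕ) (hn : 1 ≤ n) : liCoeff n = iteratedDeriv n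
    (fun z => (1/(1-z)) * (1/(1-z) - 1) * logDeriv riemannXi (1/(1-z))) 0 / n.factorial := by
  obtain ⟨m, rfl⟩ : ∃ m, n = m + 1 := ⟨n - 1, by omega⟩
  have hmem : riemannXi 1 ∈ slitPlane := by rw [li_xi_one]; exact one_mem_slitPlane
  have hg : AnalyticAt ℂ (fun s => Complex.log (riemannXi s)) 1 :=
    (li_xi_diff.analyticAt 1).clog hmem
  have h1 := (li_comp_phi hg m).self_of_nhds
  simp only [sub_zero, div_one, one_pow, one_mul] at h1
  have hB : ∀ᶠ z in 𝓝 (0:ℂ), 1 - z ≠ 0 := by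
    filter_upwards [ball_mem_nhds (0:ℂ) one_pos] with z hz using li_one_sub_ne hz
  have hC : ∀ᶠ z in 𝓝 (0:ℂ), riemannXi (1/(1-z)) ∈ slitPlane := by
    have : ContinuousAt riemannXi 1 := (li_xi_diff 1).continuousAt
    exact li_phi_tendsto.eventually (this.eventually_mem (isOpen_slitPlane.mem_nhds hmem))
  set Φ : ℂ → ℂ := fun z => Complex.log (riemannXi (1/(1-z))) with hΦ
  have hΦa : AnalyticAt ℂ Φ 0 := by
    have hφ : AnalyticAt ℂ (fun z : ℂ => 1/(1-z)) 0 :=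
      analyticAt_const.div (analyticAt_const.sub analyticAt_id) (by simp)
    have hg' : AnalyticAt ℂ (fun s => Complex.log (riemannXi s)) ((fun z : ℂ => 1/(1-z)) 0) := by
      simpa using hg
    exact hg'.comp (f := fun z : ℂ => 1/(1-z)) hφ
  have h2 : (fun z => (1/(1-z)) * (1/(1-z) - 1) * logDeriv riemannXi (1/(1-z))) =ᶠ[𝓝 (0:ℂ)]
      fun z => z * deriv Φ z := by
    filter_upwards [hB, hC] with z hz hzc
    have h3 := (((li_xi_diff _).hasDerivAt.comp z (li_phi_deriv hz)).clog hzc).deriv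
    have h4 : deriv Φ z = deriv riemannXi (1/(1-z)) * (1/(1-z))^2 / riemannXi (1/(1-z)) := h3
    rw [h4, logDeriv_apply]
    have : riemannXi (1/(1-z)) ≠ 0 := slitPlane_ne_zero hzc
    have e : (1/(1-z)) * (1/(1-z) - 1) = z * (1/(1-z))^2 := by field_simp; ring
    rw [e]; ring
  rw [h2.iteratedDeriv_eq, li_leibniz m _ _ hΦa.deriv, zero_mul, zero_add, ← iteratedDeriv_succ',
    h1, liCoeff, Nat.add_sub_cancel, Nat.factorial_succ]
  have : ((m:ℂ) + 1) ≠ 0 := Nat.cast_add_one_ne_zero m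
  have hf : (m.factorial : ℂ) ≠ 0 := Nat.cast_ne_zero.2 (Nat.factorial_ne_zero m)
  push_cast
  field_simp

lemma li_T_analytic : AnalyticAt ℂ liT 0 := by
  have h1 : AnalyticAt ℂ (fun z : ℂ => 1 - z) 0 := analyticAt_const.sub analyticAt_id
  have h2 : AnalyticAt ℂ (fun z : ℂ => Complex.log (1 - z)) 0 := h1.clog (by simp)
  have h3 : AnalyticAt ℂ (fun z : ℂ => z/(1-z)^2) 0 := analyticAt_id.div (h1.pow 2) (by simp)
  have h4 : AnalyticAt ℂ (fun z : ℂ => (1-z)⁻¹) 0 := h1.inv (by simp)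
  exact (((analyticAt_const.mul (h2.neg.mul h3)).sub (analyticAt_const.mul h3)).add
    (analyticAt_const.mul h4)).sub analyticAt_const

lemma li_B_analytic : AnalyticAt ℂ
    (fun z => (1/(1-z)) * (1/(1-z) - 1) * logDeriv riemannXi (1/(1-z))) 0 := by
  have h1 : AnalyticAt ℂ (fun z : ℂ => 1/(1-z)) 0 :=
    analyticAt_const.div (analyticAt_const.sub analyticAt_id) (by simp)
  have h2 : AnalyticAt ℂ (logDeriv riemannXi) ((fun z : ℂ => 1/(1-z)) 0) := by
    have : AnalyticAt ℂ (logDeriv riemannXi) 1 :=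
      (li_xi_diff.analyticAt 1).deriv.div (li_xi_diff.analyticAt 1) (by simp [li_xi_one])
    simpa using this
  exact (h1.mul (h1.sub analyticAt_const)).mul (h2.comp (f := fun z : ℂ => 1/(1-z)) h1)

lemma li_coeff_split (n : ℕ) (hn : 1 ≤ n) : liCoeff n =
    iteratedDeriv n (fun z => liA (1/(1-z))) 0 / n.factorial +
    ((1/2) * (n * (harmonic n : ℚ) - n) - (1/2) * (Real.log (2*Real.pi)) * n + 2) := by
  rw [li_coeff_eq n hn, ← li_T_coeff n hn]
  have he : (fun z => liA (1/(1-z))) =ᶠ[𝓝 (0:ℂ)] fun z =>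
      (1/(1-z)) * (1/(1-z) - 1) * logDeriv riemannXi (1/(1-z)) - liT z := by
    filter_upwards [ball_mem_nhds (0:ℂ) one_pos] with z hz
    rw [← li_A_T hz]; ring
  rw [he.iteratedDeriv_eq, iteratedDeriv_fun_sub li_B_analytic.contDiffAt li_T_analytic.contDiffAt]
  ring

lemma li_harmonic_bound (n : ℕ) (hn : 2 ≤ n) :
    |(1/2) * (n:ℝ) * ((harmonic n : ℚ) - Real.log n - Real.eulerMascheroniConstant) + 2|
      ≤ 5 * Real.sqrt n * Real.log n := by
  have h1 := Real.eulerMascheroniSeq_lt_eulerMascheroniConstant n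
  have h2 := Real.eulerMascheroniConstant_lt_eulerMascheroniSeq' n
  have hn0 : (2:ℝ) ≤ n := by exact_mod_cast hn
  have hpos : (0:ℝ) < n := by linarith
  rw [Real.eulerMascheroniSeq] at h1
  rw [Real.eulerMascheroniSeq', if_neg (by omega)] at h2
  have h3 : Real.log (n+1) ≤ Real.log n + 1/n := by
    have e : (n:ℝ) + 1 = n * (1 + 1/n) := by field_simp
    rw [e, Real.log_mul (by positivity) (by positivity)]
    have := Real.log_le_sub_one_of_pos (x := 1 + 1/(n:ℝ)) (by positivity)
    linarith
  set d := ((harmonic n : ℚ) : ℝ) - Real.log n - Real.eulerMascheroniConstant with hd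
  have hd0 : 0 ≤ d := by linarith
  have hd1 : d ≤ 1/n := by linarith
  have hnd : (n:ℝ) * d ≤ 1 := by
    calc (n:ℝ) * d ≤ n * (1/n) := by gcongr
      _ = 1 := by field_simp
  have hl : (1/2:ℝ) ≤ Real.log n := by
    have := Real.log_two_gt_d9
    have := Real.log_le_log (by norm_num) hn0
    linarith
  have hs : 1 ≤ Real.sqrt n := by
    rw [Real.one_le_sqrt]; linarith
  have hnn : 0 ≤ (n:ℝ) * d := by positivity
  rw [abs_of_nonneg (by nlinarith)]
  nlinarith

end LiFinal

/-- **Voros's asymptotic under RH** (Theorem 4.1 for `F = ζ`): assuming the Riemann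
Hypothesis, `λ_n = (n/2) log n + ((γ-1)/2 - (1/2) log(2π)) n + O(√n log n)`. -/
theorem li_coeff_asymptotics
    (RH : ∀ s : ℂ, 0 < s.re → s.re < 1 → riemannZeta s = 0 → s.re = 1 / 2) :
    ∃ C : ℝ, 0 < C ∧ ∀ n : ℕ, 2 ≤ n →
      ‖liCoeff n - ((((n : ℝ) / 2) * Real.log n +
          ((Real.eulerMascheroniConstant - 1) / 2 -
            (1 / 2) * Real.log (2 * Real.pi)) * n : ℝ) : ℂ)‖ ≤
        C * Real.sqrt n * Real.log n := by
  obtain ⟨C, hC, hb⟩ := li_H_bound RH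
  refine ⟨C + 5, by linarith, fun n hn => ?_⟩
  have h1 := hb n hn
  have h2 := li_harmonic_bound n hn
  rw [li_coeff_split n (by omega)]
  have e : iteratedDeriv n (fun z => liA (1/(1-z))) 0 / n.factorial +
    ((1/2) * (n * (harmonic n : ℚ) - n) - (1/2) * (Real.log (2*Real.pi)) * n + 2) -
    ((((n : ℝ) / 2) * Real.log n +
          ((Real.eulerMascheroniConstant - 1) / 2 -
            (1 / 2) * Real.log (2 * Real.pi)) * n : ℝ) : ℂ) =
    iteratedDeriv n (fun z => liA (1/(1-z))) 0 / n.factorial +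
    (((1/2) * (n:ℝ) * ((harmonic n : ℚ) - Real.log n - Real.eulerMascheroniConstant) + 2 : ℝ) : ℂ) := by
    push_cast
    ring
  rw [e]
  refine (norm_add_le _ _).trans ?_
  rw [Complex.norm_real, Real.norm_eq_abs]
  calc _ ≤ _ := add_le_add h1 h2
    _ = _ := by ring
end
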